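/- arXiv:1709.03335 — 4 statements merged into one kernel-verified Lean document; each statement's English description precedes it below -/
import Mathlib

section
/- Let π : ℝⁿ → ℝᵐ be a surjective linear map, P̃ ⊆ ℝⁿ a polytope, and P = π(P̃). Suppose π restricts to a bijection from the set of extreme points of P̃ onto the set of extreme points of P. If F̃ is a face of P̃ such that π(F̃) is a face of P, then F̃ is defined by a valid inequality φ̃(x̃) ≤ c where φ̃ is a linear functional with ker π ⊆ ker φ̃. -/
/-- A face of a convex set `P` cut out by a valid linear inequality. -/
def IsFaceOf {V : Type*} [AddCommGroup V] [Module ℝ V] (F P : Set V) : Prop :=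
  ∃ (φ : V →ₗ[ℝ] ℝ) (c : ℝ), (∀ x ∈ P, φ x ≤ c) ∧ F = {x ∈ P | φ x = c}

/-!
The set `P̃ ∩ π⁻¹(π(F̃))` is a face of `P̃`, cut out by `φ ∘ π` when `φ` cuts out `π(F̃)`, so it
suffices to show that it equals `F̃`. Let `v` be an extreme point of it. Then `π v` is a vertex of
`π(P̃)`, hence of `π(F̃)`, so it lifts to a vertex of `F̃`; injectivity of `π` on the vertices of
`P̃` identifies this lift with `v`, so `v ∈ F̃`, and the Krein–Milman theorem concludes.
-/

open Set

theorem isExtreme_inter_preimage {𝕜 E F : Type*} [Semiring 𝕜] [PartialOrder 𝕜]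
    [AddCommMonoid E] [Module 𝕜 E] [AddCommMonoid F] [Module 𝕜 F] {A : Set E} {B : Set F}
    (f : E →ₗ[𝕜] F) (hB : IsExtreme 𝕜 (f '' A) B) : IsExtreme 𝕜 A (A ∩ f ⁻¹' B) := by
  refine ⟨inter_subset_left, fun x hx y hy z hz hzxy ↦ ⟨hx, ?_⟩⟩
  have hfz : f z ∈ openSegment 𝕜 (f x) (f y) := by
    obtain ⟨a, b, ha, hb, hab, rfl⟩ := hzxy
    exact ⟨a, b, ha, hb, hab, by simp only [map_add, map_smul]⟩
  exact hB.left_mem_of_mem_openSegment (mem_image_of_mem f hx) (mem_image_of_mem f hy) hz.2 hfz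

namespace IsFaceOf

theorem isExtreme {E : Type*} [AddCommGroup E] [Module ℝ E] {A B : Set E}
    (h : IsFaceOf B A) : IsExtreme ℝ A B := by
  obtain ⟨φ, c, hφ, rfl⟩ := h
  refine ⟨sep_subset _ _, ?_⟩
  rintro x hx y hy _ ⟨-, hz⟩ ⟨a, b, ha, hb, hab, rfl⟩
  refine ⟨hx, (hφ x hx).antisymm (le_of_mul_le_mul_left ?_ ha)⟩
  calc a * c = a * φ x + b * φ y - b * c := by
        rw [map_add, map_smul, map_smul, smul_eq_mul, smul_eq_mul] at hz
        linear_combination c * hab - hz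
    _ ≤ a * φ x := by linarith [mul_le_mul_of_nonneg_left (hφ y hy) hb.le]

theorem convex {E : Type*} [AddCommGroup E] [Module ℝ E] {A B : Set E}
    (h : IsFaceOf B A) (hA : Convex ℝ A) : Convex ℝ B := by
  obtain ⟨φ, c, -, rfl⟩ := h
  exact hA.inter (convex_hyperplane φ.isLinear c)

theorem isClosed {E : Type*} [AddCommGroup E] [Module ℝ E] [TopologicalSpace E] [T2Space E]
    [IsTopologicalAddGroup E] [ContinuousSMul ℝ E] [FiniteDimensional ℝ E] {A B : Set E}
    (h : IsFaceOf B A) (hA : IsClosed A) : IsClosed B := by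
  obtain ⟨φ, c, -, rfl⟩ := h
  exact hA.inter (isClosed_eq φ.continuous_of_finiteDimensional continuous_const)

theorem exists_ker_le_inter_preimage_eq {E F : Type*} [AddCommGroup E] [Module ℝ E]
    [AddCommGroup F] [Module ℝ F] {A : Set E} {B : Set F} {f : E →ₗ[ℝ] F}
    (h : IsFaceOf B (f '' A)) :
    ∃ (φ : E →ₗ[ℝ] ℝ) (c : ℝ), LinearMap.ker f ≤ LinearMap.ker φ ∧
      (∀ x ∈ A, φ x ≤ c) ∧ A ∩ f ⁻¹' B = {x ∈ A | φ x = c} := by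
  obtain ⟨φ, c, hφ, rfl⟩ := h
  refine ⟨φ ∘ₗ f, c, LinearMap.ker_le_ker_comp f φ, fun x hx ↦ hφ _ (mem_image_of_mem f hx), ?_⟩
  ext x
  exact and_congr_right fun hx ↦ and_iff_right (mem_image_of_mem f hx)

end IsFaceOf

section KreinMilman

variable {E F : Type*} [AddCommGroup E] [Module ℝ E] [TopologicalSpace E] [T2Space E]
  [IsTopologicalAddGroup E] [ContinuousSMul ℝ E] [LocallyConvexSpace ℝ E]
  [AddCommGroup F] [Module ℝ F] [TopologicalSpace F] {K C : Set E}

theorem subset_of_extremePoints_subset (hK : IsCompact K) (hKconv : Convex ℝ K)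
    (hC : IsClosed C) (hCconv : Convex ℝ C) (h : K.extremePoints ℝ ⊆ C) : K ⊆ C :=
  calc K = closure (convexHull ℝ (K.extremePoints ℝ)) :=
        (closure_convexHull_extremePoints hK hKconv).symm
    _ ⊆ C := closure_minimal (convexHull_min h hCconv) hC

theorem mem_of_mem_extremePoints_of_map_mem_image [T1Space F] {f : E →L[ℝ] F} {v : E}
    (hinj : InjOn f (K.extremePoints ℝ)) (hC : IsCompact C) (hCext : IsExtreme ℝ K C)
    (hv : v ∈ K.extremePoints ℝ) (hfv : f v ∈ (f '' K).extremePoints ℝ)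
    (hfvC : f v ∈ f '' C) : v ∈ C := by
  have hfv_ext : f v ∈ (f '' C).extremePoints ℝ :=
    inter_extremePoints_subset_extremePoints_of_subset (image_mono hCext.subset) ⟨hfvC, hfv⟩
  obtain ⟨w, hw, hwv⟩ := surjOn_extremePoints_image f.toContinuousAffineMap hC hfv_ext
  exact hinj (hCext.extremePoints_subset_extremePoints hw) hv hwv ▸ hw.1

theorem inter_preimage_image_eq_of_isExtreme [T2Space F] {f : E →L[ℝ] F}
    (hK : IsCompact K) (hKconv : Convex ℝ K)
    (hmaps : MapsTo f (K.extremePoints ℝ) ((f '' K).extremePoints ℝ))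
    (hinj : InjOn f (K.extremePoints ℝ))
    (hC : IsClosed C) (hCconv : Convex ℝ C) (hCext : IsExtreme ℝ K C)
    (himage : IsExtreme ℝ (f '' K) (f '' C)) : K ∩ f ⁻¹' (f '' C) = C := by
  have hCcomp : IsCompact C := hK.of_isClosed_subset hC hCext.subset
  have hcompact : IsCompact (K ∩ f ⁻¹' (f '' C)) :=
    hK.inter_right ((hCcomp.image f.continuous).isClosed.preimage f.continuous)
  have hconvex : Convex ℝ (K ∩ f ⁻¹' (f '' C)) :=
    hKconv.inter ((hCconv.linear_image f.toLinearMap).linear_preimage f.toLinearMap)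
  have hextreme : IsExtreme ℝ K (K ∩ f ⁻¹' (f '' C)) :=
    isExtreme_inter_preimage f.toLinearMap himage
  refine (subset_of_extremePoints_subset hcompact hconvex hC hCconv fun v hv ↦ ?_).antisymm
    (subset_inter hCext.subset (subset_preimage_image f C))
  have hvK : v ∈ K.extremePoints ℝ := hextreme.extremePoints_subset_extremePoints hv
  exact mem_of_mem_extremePoints_of_map_mem_image hinj hCcomp hCext hvK (hmaps hvK) hv.1.2

theorem stmt5_general [T2Space F] {f : E →L[ℝ] F} (hK : IsCompact K) (hKconv : Convex ℝ K)
    (hmaps : MapsTo f (K.extremePoints ℝ) ((f '' K).extremePoints ℝ))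
    (hinj : InjOn f (K.extremePoints ℝ))
    (hC : IsClosed C) (hCconv : Convex ℝ C) (hCext : IsExtreme ℝ K C)
    (hface : IsFaceOf (f '' C) (f '' K)) :
    ∃ (φ : E →ₗ[ℝ] ℝ) (c : ℝ), LinearMap.ker f.toLinearMap ≤ LinearMap.ker φ ∧
      (∀ x ∈ K, φ x ≤ c) ∧ C = {x ∈ K | φ x = c} := by
  obtain ⟨φ, c, hker, hle, heq⟩ := hface.exists_ker_le_inter_preimage_eq (f := f.toLinearMap)
  exact ⟨φ, c, hker, hle, (inter_preimage_image_eq_of_isExtreme hK hKconv hmaps hinj hC hCconv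
    hCext hface.isExtreme).symm.trans heq⟩

end KreinMilman

/-- assume `π` restricts to a bijection from the vertices (extreme points) of the
polytope `P̃` onto those of `P = π(P̃)`. If `F̃` is a face of `P̃` whose projection is a face of
`P`, then `F̃` is cut out by a valid inequality whose functional kills `ker π`. -/
theorem stmt5 {n m : ℕ}
    (π : EuclideanSpace ℝ (Fin n) →ₗ[ℝ] EuclideanSpace ℝ (Fin m))
    (hπ : Function.Surjective π)
    (V : Finset (EuclideanSpace ℝ (Fin n)))
    (Pt : Set (EuclideanSpace ℝ (Fin n)))
    (hPt : Pt = convexHull ℝ (V : Set (EuclideanSpace ℝ (Fin n))))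
    (P : Set (EuclideanSpace ℝ (Fin m))) (hP : P = π '' Pt)
    (hbij : Set.BijOn π (Set.extremePoints ℝ Pt) (Set.extremePoints ℝ P))
    (Ft : Set (EuclideanSpace ℝ (Fin n)))
    (hFt : IsFaceOf Ft Pt)
    (hface : IsFaceOf (π '' Ft) P) :
    ∃ (φt : EuclideanSpace ℝ (Fin n) →ₗ[ℝ] ℝ) (c : ℝ),
      LinearMap.ker π ≤ LinearMap.ker φt ∧
      (∀ x ∈ Pt, φt x ≤ c) ∧ Ft = {x ∈ Pt | φt x = c} := by
  subst hPt hP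
  have hcompact := V.finite_toSet.isCompact_convexHull ℝ
  have hconvex := convex_convexHull ℝ (V : Set (EuclideanSpace ℝ (Fin n)))
  exact stmt5_general (f := π.toContinuousLinearMap) hcompact hconvex hbij.mapsTo hbij.injOn
    (hFt.isClosed hcompact.isClosed) (hFt.convex hconvex) hFt.isExtreme hface
end

section
/- Let s ≥ 2, a = 3^{s−1}, ζ = e^{2πi/3^s} ∈ ℂ, and let Γ be the subgroup of ℂ* generated by −ζ. For each integer ℓ coprime to 3, let r be an integer with rℓ ≡ 1 (mod 3^s), set ζ_ℓ = ζ^{r(3^{s−1}+1)}, and define τ_ℓ = (ζ_ℓ − 1)(ζ_ℓ^{2a−1} − 1) / (ζ_ℓ^{a+(a+1)/2+1} + 1) ∈ ℂ* (a well-defined element of ℂ*/Γ depending only on ℓ mod 3^s). Then: (i) τ_ℓ·τ_{−ℓ}⁻¹ ∈ Γ for every ℓ coprime to 3; (ii) if ℓ₁, …, ℓ_k are integers coprime to 3 whose residues represent pairwise distinct classes of (ℤ/3^sℤ)*/{±1}, and e₁, …, e_k are integers with τ_{ℓ₁}^{e₁} ⋯ τ_{ℓ_k}^{e_k} ∈ Γ,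 then e₁ = ⋯ = e_k = 0; i.e., the τ_ℓ are multiplicatively independent in ℂ*/Γ. -/
/-!
Write `g u = log |1 - ζ ^ (3mu)| - log |1 - ζ ^ u|` for units `u` of `ℤ/3^sℤ`, where `2m = a + 1`.
Up to a root of unity `τ_ℓ` equals `(ζ ^ (3mr) - 1) / (ζ ^ r - 1)` with `rℓ = 1`, so conjugating a
relation `∏ τ_ℓ ^ e_ℓ ∈ Γ` by all Galois automorphisms and taking logarithms of absolute values
gives `∑ e_ℓ g (u ℓ⁻¹) = 0` for every unit `u`. Translates of `g` by units distinct modulo `±1` are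
linearly independent as soon as `∑ χ u * g u ≠ 0` for all even characters `χ`. That sum is
`(χ m⁻¹ * K - 1) * ∑ χ u * log |1 - ζ ^ u|`, where `K` is the sum of `χ` over the units congruent
to `1` modulo `3^(s-1)`. As `K` is `0` or `3`, the first factor does not vanish. The second is
`log 3` for `χ = 1`; otherwise the distribution relation for `log |1 - x|` reduces it to the
primitive character inducing `χ`, where it is a nonzero multiple of `L(1, χ⁻¹)`.
-/

section ExpZetaAtOne

open scoped ComplexOrder

open Asymptotics Complex Filter HurwitzZeta MeasureTheory Set Topology

variable {z : ℂ}

lemma one_sub_mul_ofReal_mem_slitPlane (hz : ‖z‖ ≤ 1) (hz1 : z ≠ 1) {r : ℝ} (hr0 : 0 ≤ r)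
    (hr1 : r ≤ 1) : 1 - z * r ∈ slitPlane := by
  have hre : z.re < 1 := by
    refine ((re_le_norm z).trans hz).lt_of_ne fun h ↦ hz1 ?_
    have hnonneg : 0 ≤ z := re_eq_norm.mp (le_antisymm (re_le_norm z) (hz.trans h.ge))
    exact Complex.ext h (nonneg_iff.mp hnonneg).2.symm
  refine Or.inl ?_
  rw [sub_re, one_re, re_mul_ofReal, sub_pos]
  rcases hr0.eq_or_lt with rfl | hr0
  · simp
  · exact (mul_lt_of_lt_one_left hr0 hre).trans_le hr1

lemma one_sub_mul_exp_neg_mem_slitPlane (hz : ‖z‖ ≤ 1) (hz1 : z ≠ 1) {t : ℝ} (ht : 0 ≤ t) :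
    1 - z * Real.exp (-t) ∈ slitPlane :=
  one_sub_mul_ofReal_mem_slitPlane hz hz1 (Real.exp_pos _).le
    (Real.exp_le_one_iff.mpr (neg_nonpos.mpr ht))

lemma tendsto_one_sub_mul_exp_neg_atTop (z : ℂ) :
    Tendsto (fun t : ℝ ↦ 1 - z * Real.exp (-t)) atTop (𝓝 1) := by
  have hexp : Tendsto (fun t : ℝ ↦ (Real.exp (-t) : ℂ)) atTop (𝓝 0) := by
    simpa using Real.tendsto_exp_neg_atTop_nhds_zero.ofReal
  simpa using (hexp.const_mul z).const_sub 1

/-- The Bose–Einstein kernel `z / (e ^ t - z) = ∑ n ≥ 1, z ^ n e ^ (-n t)`, whose Mellin transform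
is `Γ(s)` times the polylogarithm of `z`. It is written with `e ^ (-t)`, so that the denominator
stays bounded as `t → ∞`. -/
noncomputable def boseEinsteinKernel (z : ℂ) (t : ℝ) : ℂ :=
  z * Real.exp (-t) / (1 - z * Real.exp (-t))

lemma continuousOn_boseEinsteinKernel (hz : ‖z‖ ≤ 1) (hz1 : z ≠ 1) :
    ContinuousOn (boseEinsteinKernel z) (Ici 0) :=
  ContinuousOn.div (by fun_prop) (by fun_prop) fun _ ht ↦
    slitPlane_ne_zero (one_sub_mul_exp_neg_mem_slitPlane hz hz1 ht)

lemma locallyIntegrableOn_boseEinsteinKernel (hz : ‖z‖ ≤ 1) (hz1 : z ≠ 1) :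
    LocallyIntegrableOn (boseEinsteinKernel z) (Ioi 0) :=
  ((continuousOn_boseEinsteinKernel hz hz1).mono Ioi_subset_Ici_self).locallyIntegrableOn
    measurableSet_Ioi

lemma boseEinsteinKernel_isBigO_atTop (z : ℂ) :
    boseEinsteinKernel z =O[atTop] fun t ↦ Real.exp (-1 * t) := by
  have hbounded : (fun t : ℝ ↦ z / (1 - z * Real.exp (-t))) =O[atTop] fun _ ↦ (1 : ℝ) :=
    (tendsto_const_nhds.div (tendsto_one_sub_mul_exp_neg_atTop z) one_ne_zero).isBigO_one ℝ
  have hexp : (fun t : ℝ ↦ (Real.exp (-t) : ℂ)) =O[atTop] fun t ↦ Real.exp (-1 * t) :=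
    IsBigO.of_bound 1 (Eventually.of_forall fun t ↦ by simp [-ofReal_exp])
  refine (hbounded.mul hexp).congr (fun t ↦ ?_) fun t ↦ one_mul _
  rw [boseEinsteinKernel]
  ring

lemma boseEinsteinKernel_isBigO_zero (hz : ‖z‖ ≤ 1) (hz1 : z ≠ 1) :
    boseEinsteinKernel z =O[𝓝[>] 0] fun t : ℝ ↦ t ^ (-(0 : ℝ)) := by
  have hlim : Tendsto (boseEinsteinKernel z) (𝓝[>] 0) (𝓝 (boseEinsteinKernel z 0)) :=
    (continuousOn_boseEinsteinKernel hz hz1 0 self_mem_Ici).mono_left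
      (nhdsWithin_mono _ Ioi_subset_Ici_self)
  simpa using hlim.isBigO_one ℝ

lemma hasDerivAt_log_one_sub_mul_exp_neg (hz : ‖z‖ ≤ 1) (hz1 : z ≠ 1) {t : ℝ} (ht : 0 ≤ t) :
    HasDerivAt (fun t : ℝ ↦ log (1 - z * Real.exp (-t))) (boseEinsteinKernel z t) t := by
  have hexp : HasDerivAt (fun t : ℝ ↦ (Real.exp (-t) : ℂ)) (-(Real.exp (-t) : ℂ)) t := by
    simpa using (hasDerivAt_neg t).exp.ofReal_comp
  refine HasDerivAt.clog_real ?_ (one_sub_mul_exp_neg_mem_slitPlane hz hz1 ht)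
  simpa using (hexp.const_mul z).const_sub 1

lemma integrableOn_boseEinsteinKernel (hz : ‖z‖ ≤ 1) (hz1 : z ≠ 1) :
    IntegrableOn (boseEinsteinKernel z) (Ioi 0) := by
  have hconv : MellinConvergent (boseEinsteinKernel z) 1 :=
    mellinConvergent_of_isBigO_rpow_exp one_pos (locallyIntegrableOn_boseEinsteinKernel hz hz1)
      (boseEinsteinKernel_isBigO_atTop z) (boseEinsteinKernel_isBigO_zero hz hz1) (by simp)
  simpa [MellinConvergent] using hconv

lemma mellin_boseEinsteinKernel_one (hz : ‖z‖ ≤ 1) (hz1 : z ≠ 1) :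
    mellin (boseEinsteinKernel z) 1 = -log (1 - z) := by
  have hlim : Tendsto (fun t : ℝ ↦ log (1 - z * Real.exp (-t))) atTop (𝓝 0) := by
    simpa using (tendsto_one_sub_mul_exp_neg_atTop z).clog one_mem_slitPlane
  have hint := integral_Ioi_of_hasDerivAt_of_tendsto'
    (fun t ht ↦ hasDerivAt_log_one_sub_mul_exp_neg hz hz1 ht)
    (integrableOn_boseEinsteinKernel hz hz1) hlim
  simpa [mellin] using hint

lemma hasSum_boseEinsteinKernel (hz : ‖z‖ ≤ 1) {t : ℝ} (ht : 0 < t) :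
    HasSum (fun n : ℕ ↦ z ^ (n + 1) * Real.exp (-(n + 1 : ℝ) * t)) (boseEinsteinKernel z t) := by
  have hlt : ‖z * Real.exp (-t)‖ < 1 := by
    rw [norm_mul, norm_real, Real.norm_eq_abs, Real.abs_exp]
    exact mul_lt_one_of_nonneg_of_lt_one_right hz (Real.exp_pos _).le (by simpa using ht)
  have hgeom := (hasSum_geometric_of_norm_lt_one hlt).mul_left (z * Real.exp (-t))
  refine hgeom.congr_fun fun n ↦ ?_
  rw [← pow_succ', mul_pow, ← ofReal_pow, ← Real.exp_nat_mul]
  push_cast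
  ring_nf

lemma hasSum_mellin_boseEinsteinKernel (hz : ‖z‖ ≤ 1) {s : ℂ} (hs : 1 < s.re) :
    HasSum (fun n : ℕ ↦ Gamma s * z ^ (n + 1) / ((n + 1 : ℝ) : ℂ) ^ s)
      (mellin (boseEinsteinKernel z) s) := by
  refine hasSum_mellin (fun n ↦ Or.inr n.cast_add_one_pos) (by linarith)
    (fun t ht ↦ hasSum_boseEinsteinKernel hz ht) ?_
  have hsummable : Summable fun n : ℕ ↦ 1 / (n + 1 : ℝ) ^ s.re := by
    simpa using (summable_nat_add_iff 1).mpr (Real.summable_one_div_nat_rpow.mpr hs)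
  refine hsummable.of_nonneg_of_le (fun n ↦ by positivity) fun n ↦ ?_
  gcongr
  simpa using pow_le_one₀ (norm_nonneg z) hz

lemma Gamma_mul_expZeta_eq_mellin (x : ℝ) {s : ℂ} (hs : 1 < s.re) :
    Gamma s * expZeta x s = mellin (boseEinsteinKernel (cexp (2 * Real.pi * I * x))) s := by
  have hs0 : s ≠ 0 := by rintro rfl; norm_num at hs
  have hnorm : ‖cexp (2 * Real.pi * I * x)‖ = 1 := by
    simpa [mul_right_comm] using norm_exp_ofReal_mul_I (2 * Real.pi * x)
  have hseries := ((hasSum_nat_add_iff' 1).mpr (hasSum_expZeta_of_one_lt_re x hs)).mul_left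
    (Gamma s)
  rw [Finset.sum_range_one, Nat.cast_zero, zero_cpow hs0, div_zero, sub_zero] at hseries
  refine hseries.unique ((hasSum_mellin_boseEinsteinKernel hnorm.le hs).congr_fun fun n ↦ ?_)
  rw [← exp_nat_mul, mul_div_assoc]
  push_cast
  ring_nf

lemma expZeta_one_eq_neg_log (x : ℝ) (hx : cexp (2 * Real.pi * I * x) ≠ 1) :
    expZeta x 1 = -log (1 - cexp (2 * Real.pi * I * x)) := by
  set z := cexp (2 * Real.pi * I * x) with hz
  have hnorm : ‖z‖ ≤ 1 := by
    simpa [hz, mul_right_comm] using (norm_exp_ofReal_mul_I (2 * Real.pi * x)).le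
  have hx0 : (x : UnitAddCircle) ≠ 0 := by
    rw [Ne, AddCircle.coe_eq_zero_iff]
    rintro ⟨n, rfl⟩
    exact hx (by simpa [hz, mul_comm] using exp_int_mul_two_pi_mul_I n)
  have hmellin : ContinuousAt (mellin (boseEinsteinKernel z)) 1 :=
    (mellin_differentiableAt_of_isBigO_rpow_exp one_pos
      (locallyIntegrableOn_boseEinsteinKernel hnorm hx) (boseEinsteinKernel_isBigO_atTop z)
      (boseEinsteinKernel_isBigO_zero hnorm hx) (by simp)).continuousAt
  have hzeta : ContinuousAt (fun s ↦ Gamma s * expZeta x s) 1 :=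
    continuousAt_Gamma_one.mul (differentiable_expZeta_of_ne_zero hx0 1).continuousAt
  have : (𝓝[{s : ℂ | 1 < s.re}] 1).NeBot :=
    mem_closure_iff_nhdsWithin_neBot.mp (by simp)
  have hlim : Gamma 1 * expZeta x 1 = mellin (boseEinsteinKernel z) 1 :=
    tendsto_nhds_unique_of_eventuallyEq (l := 𝓝[{s : ℂ | 1 < s.re}] 1) hzeta.continuousWithinAt
      hmellin.continuousWithinAt
      (eventually_nhdsWithin_of_forall fun s hs ↦ Gamma_mul_expZeta_eq_mellin x hs)
  rw [← mellin_boseEinsteinKernel_one hnorm hx, ← hlim, Gamma_one, one_mul]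

end ExpZetaAtOne

section LogNormOneSub

open Complex HurwitzZeta

variable {N : ℕ} [NeZero N]

/-- The additive form `x ↦ log |1 - e ^ (2πix/N)|` of the cyclotomic numbers of level `N`. Its
value at `0` is the junk value `log 0 = 0`. -/
noncomputable def logNormOneSub (x : ZMod N) : ℝ :=
  Real.log ‖1 - (ZMod.stdAddChar x : ℂ)‖

lemma norm_stdAddChar (x : ZMod N) : ‖(ZMod.stdAddChar x : ℂ)‖ = 1 :=
  Circle.norm_coe (ZMod.toCircle x)

lemma stdAddChar_ne_one {x : ZMod N} (hx : x ≠ 0) : (ZMod.stdAddChar x : ℂ) ≠ 1 := fun h ↦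
  hx (ZMod.injective_stdAddChar (h.trans (AddChar.map_zero_eq_one _).symm))

lemma norm_one_sub_stdAddChar_ne_zero {x : ZMod N} (hx : x ≠ 0) :
    ‖1 - (ZMod.stdAddChar x : ℂ)‖ ≠ 0 :=
  norm_ne_zero_iff.mpr (sub_ne_zero.mpr (stdAddChar_ne_one hx).symm)

lemma expZeta_toAddCircle_one {x : ZMod N} (hx : x ≠ 0) :
    expZeta (ZMod.toAddCircle x) 1 = -log (1 - ZMod.stdAddChar x) := by
  obtain ⟨k, rfl⟩ := ZMod.intCast_surjective x
  have hchar : ZMod.stdAddChar (k : ZMod N) = cexp (2 * Real.pi * I * (k / N : ℝ)) := by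
    rw [ZMod.stdAddChar_coe, ofReal_div, ofReal_intCast, ofReal_natCast, mul_div_assoc]
  have hne := stdAddChar_ne_one hx
  rw [hchar] at hne ⊢
  rw [ZMod.toAddCircle_intCast, expZeta_one_eq_neg_log _ hne]

lemma expZeta_toAddCircle_one_add_neg {x : ZMod N} (hx : x ≠ 0) :
    expZeta (ZMod.toAddCircle x) 1 + expZeta (ZMod.toAddCircle (-x)) 1 =
      -2 * logNormOneSub x := by
  have hmem : 1 - (ZMod.stdAddChar x : ℂ) ∈ slitPlane := by
    simpa using one_sub_mul_ofReal_mem_slitPlane (norm_stdAddChar x).le (stdAddChar_ne_one hx)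
      zero_le_one le_rfl
  have hconj : log (1 - ZMod.stdAddChar (-x)) =
      (starRingEnd ℂ) (log (1 - ZMod.stdAddChar x)) := by
    rw [← log_conj _ (slitPlane_arg_ne_pi hmem), map_sub, map_one, AddChar.map_neg_eq_conj]
  rw [expZeta_toAddCircle_one hx, expZeta_toAddCircle_one (neg_ne_zero.mpr hx), hconj, ← neg_add,
    add_conj, log_re, ← logNormOneSub]
  push_cast
  ring

end LogNormOneSub

section LSeriesAtOne

open Complex HurwitzZeta ZMod

lemma sum_mulChar_mul_eq_sum_units {R K : Type*} [CommMonoid R] [Fintype R]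
    [Fintype Rˣ] [CommRing K] (χ : MulChar R K) (f : R → K) :
    ∑ x, χ x * f x = ∑ u : Rˣ, χ u * f u := by
  refine (Fintype.sum_of_injective ((↑) : Rˣ → R) Units.val_injective _ _ (fun x hx ↦ ?_)
    fun _ ↦ rfl).symm
  rw [χ.map_nonunit fun ⟨u, hu⟩ ↦ hx ⟨u, hu⟩, zero_mul]

lemma sum_units_mulChar_mul_translate {R K : Type*} [CommMonoid R] [Fintype Rˣ]
    [CommRing K] (χ : MulChar R K) (f : Rˣ → K) (m : Rˣ) :
    ∑ u : Rˣ, χ u * f (u * m) = χ ↑m⁻¹ * ∑ u : Rˣ, χ u * f u := by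
  rw [Finset.mul_sum]
  refine Fintype.sum_equiv (Equiv.mulRight m) _ _ fun u ↦ ?_
  rw [Equiv.coe_mulRight, ← mul_assoc, ← map_mul, ← Units.val_mul, mul_comm m⁻¹,
    mul_inv_cancel_right]

variable {N : ℕ} [NeZero N]

/-- The character sum `∑ χ(u) log |1 - e ^ (2πiu/N)|` over the units `u` of `ZMod N`. For `χ` even
and primitive it is a nonzero multiple of `L(1, χ⁻¹)`. -/
noncomputable def cyclotomicLogSum (χ : DirichletCharacter ℂ N) : ℂ :=
  ∑ u : (ZMod N)ˣ, χ u * logNormOneSub (u : ZMod N)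

variable {χ : DirichletCharacter ℂ N}

lemma sum_mul_expZeta_one (he : χ.Even) (h0 : χ 0 = 0) :
    ∑ x, χ x * expZeta (toAddCircle (-x)) 1 = -cyclotomicLogSum χ := by
  have hreflect : ∑ x, χ x * expZeta (toAddCircle (-x)) 1 =
      ∑ x, χ x * expZeta (toAddCircle x) 1 :=
    Fintype.sum_equiv (Equiv.neg _) _ _ fun x ↦ by rw [Equiv.neg_apply, he.eval_neg]
  have hadd : ∑ x, χ x * expZeta (toAddCircle x) 1 + ∑ x, χ x * expZeta (toAddCircle (-x)) 1 =
      -2 * cyclotomicLogSum χ := by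
    rw [← Finset.sum_add_distrib, cyclotomicLogSum,
      ← sum_mulChar_mul_eq_sum_units χ fun x ↦ (logNormOneSub x : ℂ), Finset.mul_sum]
    refine Finset.sum_congr rfl fun x _ ↦ ?_
    obtain rfl | hx := eq_or_ne x 0
    · simp only [h0, zero_mul, add_zero, mul_zero]
    · rw [← mul_add, expZeta_toAddCircle_one_add_neg hx, mul_left_comm]
  linear_combination hadd / 2 + hreflect / 2

lemma dft_eq_gaussSum_smul_inv (hp : χ.IsPrimitive) (he : χ.Even) :
    𝓕 (χ : ZMod N → ℂ) = gaussSum χ stdAddChar • (χ⁻¹ : DirichletCharacter ℂ N) := by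
  have hinv : (χ⁻¹).Even := by
    rw [DirichletCharacter.Even, MulChar.inv_apply_eq_inv', show _ = _ from he, inv_one]
  ext x
  rw [hp.fourierTransform_eq_inv_mul_gaussSum, hinv.eval_neg, mul_comm, Pi.smul_apply, smul_eq_mul]

lemma gaussSum_stdAddChar_ne_zero (hp : χ.IsPrimitive) : gaussSum χ stdAddChar ≠ 0 := by
  intro hzero
  have hdft : 𝓕 (χ : ZMod N → ℂ) = 0 := by
    ext x
    rw [hp.fourierTransform_eq_inv_mul_gaussSum, hzero, mul_zero, Pi.zero_apply]
  have hχ : (χ : ZMod N → ℂ) = 0 := (map_eq_zero_iff _ dft.injective).mp hdft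
  exact one_ne_zero ((map_one χ).symm.trans (congrFun hχ 1))

lemma LFunction_smul (c : ℂ) (Φ : ZMod N → ℂ) (s : ℂ) :
    LFunction (c • Φ) s = c * LFunction Φ s := by
  simp only [LFunction, Pi.smul_apply, smul_eq_mul, mul_assoc, ← Finset.mul_sum]
  ring

lemma gaussSum_mul_LFunction_inv_one (hp : χ.IsPrimitive) (he : χ.Even) (h0 : χ 0 = 0) :
    gaussSum χ stdAddChar * (χ⁻¹).LFunction 1 = -cyclotomicLogSum χ := by
  rw [← sum_mul_expZeta_one he h0, ← LFunction_dft _ (Or.inl h0), dft_eq_gaussSum_smul_inv hp he,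
    LFunction_smul, DirichletCharacter.LFunction]

lemma cyclotomicLogSum_ne_zero_of_isPrimitive (hp : χ.IsPrimitive) (he : χ.Even) (h1 : χ ≠ 1) :
    cyclotomicLogSum χ ≠ 0 := by
  have hN : N ≠ 1 := by
    rintro rfl
    exact h1 (Subsingleton.elim _ _)
  rw [← neg_ne_zero, ← gaussSum_mul_LFunction_inv_one hp he (χ.map_zero' hN)]
  exact mul_ne_zero (gaussSum_stdAddChar_ne_zero hp)
    (DirichletCharacter.LFunction_apply_one_ne_zero (inv_ne_one.mpr h1))

end LSeriesAtOne

section Distribution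

open Complex ZMod

lemma isPrimitiveRoot_stdAddChar {N : ℕ} [NeZero N] {u : ZMod N} (hu : IsUnit u) :
    IsPrimitiveRoot (stdAddChar u : ℂ) N := by
  refine ⟨?_, fun k hk ↦ ?_⟩
  · rw [← AddChar.map_nsmul_eq_pow, nsmul_eq_mul, natCast_self, zero_mul, AddChar.map_zero_eq_one]
  · rw [← AddChar.map_nsmul_eq_pow] at hk
    have hku : k • u = 0 := injective_stdAddChar (hk.trans (AddChar.map_zero_eq_one _).symm)
    rwa [nsmul_eq_mul, hu.mul_left_eq_zero, natCast_eq_zero_iff] at hku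

lemma exists_stdAddChar_eq {N : ℕ} [NeZero N] {η : ℂ} (hη : η ^ N = 1) :
    ∃ x : ZMod N, stdAddChar x = η := by
  obtain ⟨i, -, rfl⟩ := (isPrimitiveRoot_stdAddChar isUnit_one).eq_pow_of_pow_eq_one hη
  exact ⟨i • 1, AddChar.map_nsmul_eq_pow _ i 1⟩

variable {M N : ℕ} [NeZero M] [NeZero N] (h : M ∣ N)

lemma stdAddChar_castHom (x : ZMod N) :
    (stdAddChar (castHom h (ZMod M) x) : ℂ) = stdAddChar x ^ (N / M) := by
  obtain ⟨k, rfl⟩ := intCast_surjective x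
  have hN : (N : ℂ) = M * (N / M : ℕ) := by exact_mod_cast (Nat.mul_div_cancel' h).symm
  have hd : ((N / M : ℕ) : ℂ) ≠ 0 := fun h0 ↦ NeZero.ne (N : ℂ) (by rw [hN, h0, mul_zero])
  rw [map_intCast, stdAddChar_coe, stdAddChar_coe, ← exp_nat_mul, hN]
  congr 1
  field_simp

lemma prod_one_sub_stdAddChar_fiber (w : ZMod M) :
    ∏ x : ZMod N with castHom h (ZMod M) x = w, (1 - (stdAddChar x : ℂ)) = 1 - stdAddChar w := by
  obtain ⟨v, rfl⟩ := castHom_surjective h w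
  have hd : 0 < N / M := Nat.div_pos (Nat.le_of_dvd (NeZero.pos N) h) (NeZero.pos M)
  have hfactor := (isPrimitiveRoot_exp (N / M) hd.ne').pow_sub_pow_eq_prod_sub_mul 1
    (stdAddChar v) hd
  rw [one_pow] at hfactor
  rw [stdAddChar_castHom, hfactor]
  refine Finset.prod_bij (fun x _ ↦ stdAddChar (x - v)) (fun x hx ↦ ?_) (fun x _ y _ hxy ↦ ?_)
    (fun η hη ↦ ?_) fun x _ ↦ ?_
  · rw [Finset.mem_filter_univ] at hx
    rw [Polynomial.mem_nthRootsFinset hd, ← stdAddChar_castHom h, map_sub, hx, sub_self,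
      AddChar.map_zero_eq_one]
  · exact sub_left_injective (injective_stdAddChar hxy)
  · rw [Polynomial.mem_nthRootsFinset hd] at hη
    obtain ⟨y, rfl⟩ := exists_stdAddChar_eq (N := N) (η := η)
      (by rw [← Nat.div_mul_cancel h, pow_mul, hη, one_pow])
    rw [← stdAddChar_castHom h] at hη
    have hy : castHom h (ZMod M) y = 0 :=
      injective_stdAddChar (hη.trans (AddChar.map_zero_eq_one _).symm)
    refine ⟨y + v, ?_, by rw [add_sub_cancel_right]⟩
    rw [Finset.mem_filter_univ, map_add, hy, zero_add]
  · rw [← AddChar.map_add_eq_mul, sub_add_cancel]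

lemma sum_logNormOneSub_fiber {w : ZMod M} (hw : w ≠ 0) :
    ∑ x : ZMod N with castHom h (ZMod M) x = w, logNormOneSub x = logNormOneSub w := by
  simp only [logNormOneSub]
  rw [← prod_one_sub_stdAddChar_fiber h w, norm_prod, Real.log_prod fun x hx ↦ ?_]
  refine norm_one_sub_stdAddChar_ne_zero fun hx0 ↦ hw ?_
  rw [← (Finset.mem_filter_univ x).mp hx, hx0, map_zero]

variable [IsLocalHom (castHom h (ZMod M))]

lemma sum_logNormOneSub_unitsMap_fiber (hM : M ≠ 1) (w : (ZMod M)ˣ) :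
    ∑ u : (ZMod N)ˣ with unitsMap h u = w, logNormOneSub (u : ZMod N) =
      logNormOneSub (w : ZMod M) := by
  have : Nontrivial (ZMod M) := nontrivial_iff.mpr hM
  rw [← sum_logNormOneSub_fiber h w.ne_zero]
  refine Finset.sum_nbij (↑) (fun u hu ↦ ?_) Units.val_injective.injOn (fun x hx ↦ ?_)
    fun _ _ ↦ rfl
  · rw [Finset.mem_filter_univ] at hu ⊢
    rw [← hu, unitsMap_val, castHom_apply]
  · rw [Finset.mem_coe, Finset.mem_filter_univ] at hx
    have hx' : IsUnit x := (isUnit_map_iff (castHom h (ZMod M)) x).mp (hx ▸ w.isUnit)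
    refine ⟨hx'.unit, ?_, hx'.unit_spec⟩
    rw [Finset.mem_coe, Finset.mem_filter_univ]
    exact Units.ext (by rw [unitsMap_val, hx'.unit_spec, ← hx, castHom_apply])

lemma cyclotomicLogSum_changeLevel (hM : M ≠ 1) (χ : DirichletCharacter ℂ M) :
    cyclotomicLogSum (DirichletCharacter.changeLevel h χ) = cyclotomicLogSum χ := by
  rw [cyclotomicLogSum, cyclotomicLogSum,
    ← Finset.sum_fiberwise (s := Finset.univ) (g := unitsMap h)]
  refine Finset.sum_congr rfl fun w _ ↦ ?_
  rw [← sum_logNormOneSub_unitsMap_fiber h hM, ofReal_sum, Finset.mul_sum]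
  refine Finset.sum_congr rfl fun u hu ↦ ?_
  rw [DirichletCharacter.changeLevel_eq_cast_of_dvd, ← (Finset.mem_filter_univ u).mp hu,
    unitsMap_val]

lemma logNormOneSub_castHom_eq_sum_ker (hM : M ≠ 1) (u : (ZMod N)ˣ) :
    logNormOneSub (castHom h (ZMod M) u) =
      ∑ t : (unitsMap h).ker, logNormOneSub ((u * t : (ZMod N)ˣ) : ZMod N) := by
  have hcast : castHom h (ZMod M) u = unitsMap h u := by rw [unitsMap_val, castHom_apply]
  rw [hcast, ← sum_logNormOneSub_unitsMap_fiber h hM]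
  symm
  refine Finset.sum_bij (fun t _ ↦ u * t) (fun t _ ↦ ?_) (fun t _ t' _ htt' ↦ ?_)
    (fun v hv ↦ ?_) fun _ _ ↦ rfl
  · rw [Finset.mem_filter_univ, map_mul, MonoidHom.mem_ker.mp t.2, mul_one]
  · exact Subtype.ext (mul_left_cancel htt')
  · refine ⟨⟨u⁻¹ * v, ?_⟩, Finset.mem_univ _, mul_inv_cancel_left u v⟩
    rw [MonoidHom.mem_ker, map_mul, (Finset.mem_filter_univ v).mp hv, map_inv, inv_mul_cancel]

lemma sum_mul_logNormOneSub_castHom (hM : M ≠ 1) (χ : DirichletCharacter ℂ N) :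
    ∑ u : (ZMod N)ˣ, χ u * logNormOneSub (castHom h (ZMod M) u) =
      (∑ t : (unitsMap h).ker, χ (t : (ZMod N)ˣ)) * cyclotomicLogSum χ := by
  simp_rw [logNormOneSub_castHom_eq_sum_ker h hM, ofReal_sum, Finset.mul_sum]
  rw [Finset.sum_comm, Finset.sum_mul]
  refine Fintype.sum_equiv (Equiv.inv _) _ _ fun t ↦ ?_
  rw [sum_units_mulChar_mul_translate χ fun v ↦ (logNormOneSub (v : ZMod N) : ℂ),
    cyclotomicLogSum, Equiv.inv_apply, InvMemClass.coe_inv]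

end Distribution

section PrimePower

open Complex ZMod

lemma isLocalHom_castHom {M N k : ℕ} (h : M ∣ N) (hk : N ∣ M ^ k) :
    IsLocalHom (castHom h (ZMod M)) where
  map_nonunit x hx := by
    obtain ⟨i, rfl⟩ := intCast_surjective x
    rw [map_intCast, coe_int_isUnit_iff_isCoprime] at hx
    rw [coe_int_isUnit_iff_isCoprime]
    exact hx.pow_left.of_isCoprime_of_dvd_left (by exact_mod_cast hk)

lemma sum_units_logNormOneSub {N : ℕ} [NeZero N] (hN : N ≠ 1) :
    ∑ u : (ZMod N)ˣ, logNormOneSub (u : ZMod N) =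
      Real.log ‖(Polynomial.cyclotomic N ℂ).eval 1‖ := by
  have : Nontrivial (ZMod N) := nontrivial_iff.mpr hN
  have hζ : IsPrimitiveRoot (stdAddChar (1 : ZMod N)) N := isPrimitiveRoot_stdAddChar isUnit_one
  have hprod : ∏ u : (ZMod N)ˣ, (1 - stdAddChar (u : ZMod N)) =
      (Polynomial.cyclotomic N ℂ).eval 1 := by
    rw [Polynomial.cyclotomic_eq_prod_X_sub_primitiveRoots hζ, Polynomial.eval_prod]
    refine Finset.prod_bij (fun u _ ↦ stdAddChar (u : ZMod N)) (fun u _ ↦ ?_)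
      (fun u _ v _ huv ↦ ?_) (fun η hη ↦ ?_) fun u _ ↦ by simp
    · exact (mem_primitiveRoots (NeZero.pos N)).mpr (isPrimitiveRoot_stdAddChar u.isUnit)
    · exact Units.ext (injective_stdAddChar huv)
    · obtain ⟨i, -, hi, rfl⟩ := hζ.isPrimitiveRoot_iff.mp (isPrimitiveRoot_of_mem_primitiveRoots hη)
      refine ⟨unitOfCoprime i hi, Finset.mem_univ _, ?_⟩
      rw [coe_unitOfCoprime, ← AddChar.map_nsmul_eq_pow, nsmul_one]
  rw [← hprod, norm_prod, Real.log_prod fun u _ ↦ norm_one_sub_stdAddChar_ne_zero u.ne_zero]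
  simp only [logNormOneSub]

variable {p n : ℕ} [hp : Fact p.Prime]

lemma cyclotomicLogSum_one_ne_zero :
    cyclotomicLogSum (1 : DirichletCharacter ℂ (p ^ (n + 1))) ≠ 0 := by
  have hN : p ^ (n + 1) ≠ 1 := (Nat.one_lt_pow n.succ_ne_zero hp.out.one_lt).ne'
  have hlog : cyclotomicLogSum (1 : DirichletCharacter ℂ (p ^ (n + 1))) = Real.log p := by
    have hsum := sum_units_logNormOneSub hN
    rw [Polynomial.eval_one_cyclotomic_prime_pow, norm_natCast] at hsum
    rw [← hsum, cyclotomicLogSum, ofReal_sum]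
    refine Finset.sum_congr rfl fun u _ ↦ ?_
    rw [MulChar.one_apply_coe, one_mul]
  rw [hlog, ofReal_ne_zero]
  exact (Real.log_pos (by exact_mod_cast hp.out.one_lt)).ne'

lemma even_of_even_changeLevel {M N : ℕ} {h : M ∣ N} {χ : DirichletCharacter ℂ M}
    (he : (DirichletCharacter.changeLevel h χ).Even) : χ.Even := by
  have hneg := DirichletCharacter.changeLevel_eq_cast_of_dvd' χ h (a := -1)
    isCoprime_one_left.neg_left
  push_cast at hneg
  exact hneg.symm.trans he

theorem cyclotomicLogSum_ne_zero_of_even {χ : DirichletCharacter ℂ (p ^ (n + 1))} (he : χ.Even) :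
    cyclotomicLogSum χ ≠ 0 := by
  obtain rfl | h1 := eq_or_ne χ 1
  · exact cyclotomicLogSum_one_ne_zero
  have hconductor : χ.conductor ≠ 1 := mt χ.eq_one_iff_conductor_eq_one.mpr h1
  have : NeZero χ.conductor := ⟨χ.conductor_ne_zero⟩
  have hdvd : p ^ (n + 1) ∣ χ.conductor ^ (n + 1) := by
    obtain ⟨j, -, hj⟩ := (Nat.dvd_prime_pow hp.out).mp χ.conductor_dvd_level
    refine pow_dvd_pow_of_dvd (hj ▸ dvd_pow_self p ?_) _
    rintro rfl
    exact hconductor (hj.trans (pow_zero p))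
  have := isLocalHom_castHom χ.conductor_dvd_level hdvd
  have hlevel := χ.changeLevel_primitiveCharacter
  rw [← hlevel, cyclotomicLogSum_changeLevel _ hconductor]
  refine cyclotomicLogSum_ne_zero_of_isPrimitive χ.primitiveCharacter_isPrimitive
    (even_of_even_changeLevel (hlevel.symm ▸ he)) fun hχ₀ ↦ h1 ?_
  rw [← hlevel, hχ₀, map_one]

lemma norm_sum_hom_ne_one {G : Type*} [Group G] [Fintype G] [Nontrivial G] (f : G →* ℂ) :
    ‖∑ g, f g‖ ≠ 1 := by
  classical
  rw [sum_hom_units]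
  split_ifs
  · rw [norm_natCast]
    exact_mod_cast Fintype.one_lt_card.ne'
  · simp

lemma nontrivial_ker_unitsMap_prime_pow :
    Nontrivial (unitsMap (pow_dvd_pow p (n + 1).le_succ)).ker := by
  rw [Subgroup.nontrivial_iff_ne_bot, Ne, MonoidHom.ker_eq_bot_iff]
  intro hinj
  have hcard := Fintype.card_le_of_injective _ hinj
  rw [card_units_eq_totient, card_units_eq_totient, Nat.totient_prime_pow_succ hp.out,
    Nat.totient_prime_pow_succ hp.out] at hcard
  exact (Nat.mul_lt_mul_of_pos_right (Nat.pow_lt_pow_succ hp.out.one_lt)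
    (Nat.sub_pos_of_lt hp.out.one_lt)).not_ge hcard

lemma logNormOneSub_castHom_prime_pow (x : ZMod (p ^ (n + 1))) :
    logNormOneSub (castHom (pow_dvd_pow p n.le_succ) (ZMod (p ^ n)) x) = logNormOneSub (p • x) := by
  have hindex : p ^ (n + 1) / p ^ n = p := by
    rw [pow_succ, Nat.mul_div_cancel_left _ (pow_pos hp.out.pos n)]
  rw [logNormOneSub, stdAddChar_castHom, hindex, ← AddChar.map_nsmul_eq_pow, ← logNormOneSub]

theorem sum_mul_logNormOneSub_sub_ne_zero {χ : DirichletCharacter ℂ (p ^ (n + 2))} (he : χ.Even)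
    (m : (ZMod (p ^ (n + 2)))ˣ) :
    ∑ u : (ZMod (p ^ (n + 2)))ˣ,
      χ u * (logNormOneSub (p • (u * m).val) - logNormOneSub u.val : ℝ) ≠ 0 := by
  set h : p ^ (n + 1) ∣ p ^ (n + 2) := pow_dvd_pow p (n + 1).le_succ
  have : IsLocalHom (castHom h (ZMod (p ^ (n + 1)))) :=
    isLocalHom_castHom (k := n + 2) h (pow_dvd_pow_of_dvd (dvd_pow_self p n.succ_ne_zero) _)
  have : Nontrivial (unitsMap h).ker := nontrivial_ker_unitsMap_prime_pow
  have hM : p ^ (n + 1) ≠ 1 := (Nat.one_lt_pow n.succ_ne_zero hp.out.one_lt).ne'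
  set K : ℂ := ∑ t : (unitsMap h).ker, χ (t : (ZMod (p ^ (n + 2)))ˣ)
  have hsum : ∑ u : (ZMod (p ^ (n + 2)))ˣ,
      χ u * (logNormOneSub (p • (u * m).val) - logNormOneSub u.val : ℝ) =
      (χ ↑m⁻¹ * K - 1) * cyclotomicLogSum χ := by
    simp only [← logNormOneSub_castHom_prime_pow, ofReal_sub, mul_sub, Finset.sum_sub_distrib]
    rw [sum_units_mulChar_mul_translate χ fun u ↦ (logNormOneSub (castHom h _ u.val) : ℂ),
      sum_mul_logNormOneSub_castHom h hM, ← cyclotomicLogSum]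
    ring
  rw [hsum]
  refine mul_ne_zero (sub_ne_zero.mpr fun hone ↦ ?_) (cyclotomicLogSum_ne_zero_of_even he)
  refine norm_sum_hom_ne_one (G := (unitsMap h).ker)
    ((χ : ZMod (p ^ (n + 2)) →* ℂ).comp ((Units.coeHom _).comp (unitsMap h).ker.subtype)) ?_
  have hnorm := congrArg norm hone
  rwa [norm_mul, χ.unit_norm_eq_one, one_mul, norm_one] at hnorm

end PrimePower

section Independence

variable {N : ℕ} [NeZero N] {ι : Type*} {ρ : ι → (ZMod N)ˣ} {c : ι → ℂ}

lemma sum_mul_char_inv_eq_zero [Fintype ι] {g : (ZMod N)ˣ → ℂ}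
    (hc : ∀ u, ∑ i, c i * g (u * ρ i) = 0)
    {χ : DirichletCharacter ℂ N} (hχ : ∑ u : (ZMod N)ˣ, χ u * g u ≠ 0) :
    ∑ i, c i * χ ↑(ρ i)⁻¹ = 0 := by
  refine (mul_eq_zero.mp ?_).resolve_right hχ
  calc (∑ i, c i * χ ↑(ρ i)⁻¹) * ∑ u : (ZMod N)ˣ, χ u * g u
    _ = ∑ i, c i * ∑ u : (ZMod N)ˣ, χ u * g (u * ρ i) := by
      simp only [sum_units_mulChar_mul_translate, Finset.sum_mul, mul_assoc]
    _ = ∑ u : (ZMod N)ˣ, χ u * ∑ i, c i * g (u * ρ i) := by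
      simp only [Finset.mul_sum]
      rw [Finset.sum_comm]
      simp only [mul_left_comm]
    _ = 0 := by simp only [hc, mul_zero, Finset.sum_const_zero]

lemma eq_zero_of_sum_mul_even_char_inv_eq_zero [Fintype ι]
    (hρ : Pairwise fun i j ↦ ρ i ≠ ρ j ∧ ρ i ≠ -ρ j)
    (hc : ∀ χ : DirichletCharacter ℂ N, χ.Even → ∑ i, c i * χ ↑(ρ i)⁻¹ = 0) (j : ι) : c j = 0 := by
  have horth (i : ι) (v : (ZMod N)ˣ) : ∑ χ : DirichletCharacter ℂ N, χ ↑(ρ i)⁻¹ * χ v =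
      if ρ i = v then (N.totient : ℂ) else 0 := by
    rw [← ZMod.inv_coe_unit, DirichletCharacter.sum_char_inv_mul_char_eq ℂ (ρ i).isUnit]
    simp only [Units.val_inj]
  have hsum : ∑ i, c i *
      ((if ρ i = ρ j then (N.totient : ℂ) else 0) +
        if ρ i = -ρ j then (N.totient : ℂ) else 0) = 0 := by
    calc _ = ∑ χ : DirichletCharacter ℂ N,
          (∑ i, c i * χ ↑(ρ i)⁻¹) * (χ ↑(ρ j) + χ ↑(-ρ j)) := by
          simp only [← horth, ← Finset.sum_add_distrib, Finset.mul_sum, Finset.sum_mul, mul_add,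
            mul_assoc]
          exact Finset.sum_comm
      _ = 0 := Finset.sum_eq_zero fun χ _ ↦ ?_
    obtain he | ho := χ.even_or_odd
    · rw [hc χ he, zero_mul]
    · rw [Units.val_neg, ho.eval_neg, add_neg_cancel, mul_zero]
  rw [Finset.sum_eq_single j (fun i _ hij ↦ by simp [hρ hij]) (by simp), if_pos rfl] at hsum
  refine (mul_eq_zero.mp hsum).resolve_right ?_
  have hpos := Nat.totient_pos.mpr (NeZero.pos N)
  split_ifs <;> norm_cast <;> lia

theorem linearIndependent_translates [Finite ι] {g : (ZMod N)ˣ → ℂ}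
    (hg : ∀ χ : DirichletCharacter ℂ N, χ.Even → ∑ u : (ZMod N)ˣ, χ u * g u ≠ 0)
    (hρ : Pairwise fun i j ↦ ρ i ≠ ρ j ∧ ρ i ≠ -ρ j) :
    LinearIndependent ℂ fun i u ↦ g (u * ρ i) := by
  cases nonempty_fintype ι
  refine Fintype.linearIndependent_iff.mpr fun c hc ↦
    eq_zero_of_sum_mul_even_char_inv_eq_zero hρ fun χ he ↦
      sum_mul_char_inv_eq_zero (fun u ↦ ?_) (hg χ he)
  simpa using congrFun hc u

end Independence

section Torsion

variable {K L : Type*} [Field K] [Field L]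

/-- The value at `z` of the rational function giving the Reidemeister torsion of the tetrahedral
space forms: for `a = 3 ^ (s - 1)` and `z = ζ_ℓ` it is the paper's `τ_ℓ`. -/
def tetrahedralTorsion (a : ℕ) (z : K) : K :=
  (z - 1) * (z ^ (2 * a - 1) - 1) / (z ^ (a + (a + 1) / 2 + 1) + 1)

lemma map_tetrahedralTorsion (φ : K →+* L) (a : ℕ) (z : K) :
    φ (tetrahedralTorsion a z) = tetrahedralTorsion a (φ z) := by
  simp [tetrahedralTorsion]

lemma tetrahedralTorsion_inv {a : ℕ} (ha : a ≠ 0) {z : K} (hz : z ≠ 0) :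
    tetrahedralTorsion a z⁻¹ =
      z ^ ((a + (a + 1) / 2 + 1 : ℕ) - (2 * a : ℕ) : ℤ) * tetrahedralTorsion a z := by
  obtain ⟨b, hb⟩ : ∃ b, 2 * a = b + 1 := ⟨2 * a - 1, by lia⟩
  rw [tetrahedralTorsion, tetrahedralTorsion, zpow_sub₀ hz, zpow_natCast, zpow_natCast, hb,
    Nat.add_sub_cancel, inv_pow, inv_pow]
  generalize a + (a + 1) / 2 + 1 = c
  have hnum : (z⁻¹ - 1) * ((z ^ b)⁻¹ - 1) = (z - 1) * (z ^ b - 1) / z ^ (b + 1) := by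
    field_simp
    ring
  have hden : (z ^ c)⁻¹ + 1 = (z ^ c + 1) / z ^ c := by
    field_simp
    ring
  rw [hnum, hden, div_div_div_eq, div_mul_div_comm, mul_comm (z ^ c)]

lemma mul_sub_one_mul_mul_inv_sub_one_mul_sub_one {ω v : K} (hω : IsPrimitiveRoot ω 3)
    (hv : v ≠ 0) :
    (ω * v - 1) * (ω * v⁻¹ - 1) * (v - 1) = -(ω * v⁻¹) * (v ^ 3 - 1) := by
  have hsum : 1 + ω + ω ^ 2 = 0 := by
    simpa [Finset.sum_range_succ] using hω.geom_sum_eq_zero (by norm_num)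
  field_simp
  linear_combination (v - 1) * v * hsum

lemma tetrahedralTorsion_pow_succ {a : ℕ} (ha : Odd a) (h3 : 3 ∣ a) {v : K}
    (hv : IsPrimitiveRoot v (3 * a)) :
    tetrahedralTorsion a (v ^ (a + 1)) =
      -(v ^ a * v⁻¹) * ((v ^ (3 * ((a + 1) / 2)) - 1) / (v - 1)) := by
  obtain ⟨b, hb⟩ := ha
  have hω : IsPrimitiveRoot (v ^ a) 3 := hv.pow (by lia) (mul_comm 3 a)
  have hωa : (v ^ a) ^ a = 1 := (hω.pow_eq_one_iff_dvd a).mpr h3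
  have hv0 : v ≠ 0 := hv.ne_zero (by lia)
  have hv3 : v ^ 3 ≠ 1 := hv.pow_ne_one_of_pos_of_lt (by norm_num) (by lia)
  have hv1 : v - 1 ≠ 0 := sub_ne_zero.mpr fun h ↦ hv3 (by rw [h, one_pow])
  have hnum : (v ^ a * v) ^ (2 * a - 1) = v ^ a * v⁻¹ := by
    rw [eq_mul_inv_iff_mul_eq₀ hv0]
    refine mul_left_cancel₀ (pow_ne_zero a hv0) ?_
    calc v ^ a * ((v ^ a * v) ^ (2 * a - 1) * v)
      _ = (v ^ a * v) ^ (2 * a - 1 + 1) := by rw [pow_succ]; ring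
      _ = ((v ^ a) ^ a * v ^ a) ^ 2 := by
        rw [← mul_pow, ← pow_mul, mul_comm a 2, Nat.sub_add_cancel (by lia)]
      _ = v ^ a * v ^ a := by rw [hωa, one_mul, sq]
  set y := v ^ (3 * ((a + 1) / 2)) with hy
  have hden : (v ^ a * v) ^ (a + (a + 1) / 2 + 1) = y := by
    rw [show a + (a + 1) / 2 + 1 = 3 * ((a + 1) / 2) by lia, mul_pow, pow_mul _ 3, hω.pow_eq_one,
      one_pow, one_mul]
  have hy2 : y ^ 2 = v ^ 3 := by
    rw [hy, ← pow_mul, show 3 * ((a + 1) / 2) * 2 = 3 * a + 3 by lia, pow_add, hv.pow_eq_one,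
      one_mul]
  have hy1 : y + 1 ≠ 0 := fun h ↦ hv3 (by rw [← hy2, eq_neg_of_add_eq_zero_left h, neg_one_sq])
  have hmain := mul_sub_one_mul_mul_inv_sub_one_mul_sub_one hω hv0
  rw [tetrahedralTorsion, pow_succ, hnum, hden, ← mul_div_assoc, div_eq_div_iff hy1 hv1, hmain,
    ← hy2]
  ring

end Torsion

section TorsionAtRootsOfUnity

open ZMod
open scoped IntermediateField

lemma coprime_half_succ_three_mul {a : ℕ} (ha : Odd a) (h3 : 3 ∣ a) :
    ((a + 1) / 2).Coprime (3 * a) := by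
  have hdvd : (a + 1) / 2 ∣ a + 1 := Nat.div_dvd_of_dvd ha.add_one.two_dvd
  have hcop : ((a + 1) / 2).Coprime a :=
    Nat.Coprime.coprime_dvd_left hdvd (Nat.coprime_self_add_left.mpr (Nat.coprime_one_left a))
  exact (hcop.coprime_dvd_right h3).mul_right hcop

lemma exists_eq_neg_zpow {R : Type*} [Field R] {N : ℕ} {ζ w : R} (hN : Odd N)
    (hζ : IsPrimitiveRoot ζ N) (hw : w ^ N = 1) : ∃ k : ℤ, w = (-ζ) ^ k := by
  have : NeZero N := ⟨hN.pos.ne'⟩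
  obtain ⟨i, -, rfl⟩ := hζ.eq_pow_of_pow_eq_one hw
  refine ⟨((N + 1) * i : ℕ), ?_⟩
  rw [zpow_natCast, pow_mul, hN.add_one.neg_pow, pow_succ, hζ.pow_eq_one, one_mul]

lemma exists_ringHom_adjoin_gen_eq {K L : Type*} [Field K] [CharZero K] [Field L] [CharZero L]
    {N : ℕ} [NeZero N] {ζ : K} {w : L} (hζ : IsPrimitiveRoot ζ N) (hw : IsPrimitiveRoot w N) :
    ∃ φ : ℚ⟮ζ⟯ →+* L, φ (IntermediateField.AdjoinSimple.gen ℚ ζ) = w := by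
  have hint : IsIntegral ℚ ζ := (hζ.isIntegral (NeZero.pos N)).tower_top
  have hroot : w ∈ (minpoly ℚ ζ).aroots L := by
    rw [← Polynomial.cyclotomic_eq_minpoly_rat hζ (NeZero.pos N),
      Polynomial.cyclotomic_eq_minpoly_rat hw (NeZero.pos N)]
    exact Polynomial.mem_aroots.mpr
      ⟨minpoly.ne_zero (hw.isIntegral (NeZero.pos N)).tower_top, minpoly.aeval ℚ w⟩
  exact ⟨(IntermediateField.algHomAdjoinIntegralEquiv ℚ hint).symm ⟨w, hroot⟩,
    IntermediateField.algHomAdjoinIntegralEquiv_symm_apply_gen ℚ hint _⟩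

lemma three_nsmul_units_ne_zero {N : ℕ} (hN : 3 < N) (u : (ZMod N)ˣ) : 3 • u.val ≠ 0 := by
  rw [nsmul_eq_mul, Ne, u.isUnit.mul_left_eq_zero, natCast_eq_zero_iff]
  exact Nat.not_dvd_of_pos_of_lt three_pos hN

lemma exists_units_val_eq_intCast {b k : ℕ} {ℓ : ℤ} (hℓ : IsCoprime ℓ b) :
    ∃ v : (ZMod (b ^ k))ˣ, v.val = ℓ :=
  (coe_int_isUnit_iff_isCoprime _ _).mpr (mod_cast hℓ.symm.pow_left)

lemma mul_modEq_one_of_intCast_eq_inv {N : ℕ} {v : (ZMod N)ˣ} {r ℓ : ℤ}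
    (hr : r = v⁻¹.val) (hv : v.val = ℓ) : r * ℓ ≡ 1 [ZMOD N] := by
  rw [← intCast_eq_intCast_iff, Int.cast_mul, hr, ← hv, Units.inv_mul, Int.cast_one]

variable {N a : ℕ} [NeZero N] {m : (ZMod N)ˣ}

lemma prod_tetrahedralTorsion_zpow_conj {ι : Type*} [Fintype ι] {b : ℕ} {x : ι → ZMod N} {e : ι → ℤ}
    {M : ℤ} (h : ∏ i, tetrahedralTorsion a (stdAddChar (x i) ^ b : ℂ) ^ e i =
      (-stdAddChar (1 : ZMod N)) ^ M) (u : (ZMod N)ˣ) :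
    ∏ i, tetrahedralTorsion a (stdAddChar (u.val * x i) ^ b : ℂ) ^ e i =
      (-stdAddChar u.val) ^ M := by
  have hζ : IsPrimitiveRoot (stdAddChar (1 : ZMod N) : ℂ) N := isPrimitiveRoot_stdAddChar isUnit_one
  obtain ⟨φ, hφ⟩ := exists_ringHom_adjoin_gen_eq hζ (isPrimitiveRoot_stdAddChar u.isUnit)
  set z := IntermediateField.AdjoinSimple.gen ℚ (stdAddChar (1 : ZMod N) : ℂ)
  have hz : algebraMap _ ℂ z = stdAddChar (1 : ZMod N) := rfl
  have hpow (v y : ZMod N) : (stdAddChar v : ℂ) ^ y.val = stdAddChar (v * y) := by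
    rw [← AddChar.map_nsmul_eq_pow, nsmul_eq_mul, natCast_zmod_val, mul_comm]
  have hrel : ∏ i, tetrahedralTorsion a ((z ^ (x i).val) ^ b) ^ e i = (-z) ^ M := by
    apply (algebraMap _ ℂ).injective
    simpa only [map_prod, map_zpow₀, map_tetrahedralTorsion, map_pow, map_neg, hz, hpow,
      one_mul] using h
  simpa only [map_prod, map_zpow₀, map_tetrahedralTorsion, map_pow, map_neg, hφ, hpow]
    using congrArg φ hrel

lemma norm_tetrahedralTorsion_stdAddChar (ha : Odd a) (h3 : 3 ∣ a) (hN : N = 3 * a)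
    (hm : m.val = ((a + 1) / 2 : ℕ)) (u : (ZMod N)ˣ) :
    ‖tetrahedralTorsion a (stdAddChar u.val ^ (a + 1) : ℂ)‖ =
      ‖1 - (stdAddChar (3 • (u * m).val) : ℂ)‖ / ‖1 - (stdAddChar u.val : ℂ)‖ := by
  have hpow : (stdAddChar u.val : ℂ) ^ (3 * ((a + 1) / 2)) = stdAddChar (3 • (u * m).val) := by
    rw [← AddChar.map_nsmul_eq_pow, mul_smul, Units.val_mul, hm, nsmul_eq_mul ((a + 1) / 2),
      mul_comm]
  rw [tetrahedralTorsion_pow_succ ha h3 (hN ▸ isPrimitiveRoot_stdAddChar u.isUnit), hpow, norm_mul,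
    norm_neg, norm_mul, norm_pow, norm_inv, norm_stdAddChar, one_pow, inv_one, mul_one, one_mul,
    norm_div, norm_sub_rev, norm_sub_rev _ (1 : ℂ)]

lemma log_norm_tetrahedralTorsion_stdAddChar (ha : Odd a) (h3 : 3 ∣ a) (hN : N = 3 * a)
    (hm : m.val = ((a + 1) / 2 : ℕ)) (u : (ZMod N)ˣ) :
    Real.log ‖tetrahedralTorsion a (stdAddChar u.val ^ (a + 1) : ℂ)‖ =
      logNormOneSub (3 • (u * m).val) - logNormOneSub u.val := by
  have hN3 : 3 < N := by have := ha.pos; lia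
  have : Fact (1 < N) := ⟨by lia⟩
  rw [norm_tetrahedralTorsion_stdAddChar ha h3 hN hm, Real.log_div
    (norm_one_sub_stdAddChar_ne_zero (three_nsmul_units_ne_zero hN3 _))
    (norm_one_sub_stdAddChar_ne_zero u.ne_zero), logNormOneSub, logNormOneSub]

lemma tetrahedralTorsion_stdAddChar_ne_zero (ha : Odd a) (h3 : 3 ∣ a) (hN : N = 3 * a)
    (u : (ZMod N)ˣ) : tetrahedralTorsion a (stdAddChar u.val ^ (a + 1) : ℂ) ≠ 0 := by
  have hN3 : 3 < N := by have := ha.pos; lia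
  have : Fact (1 < N) := ⟨by lia⟩
  have hm : ((a + 1) / 2).Coprime N := hN ▸ coprime_half_succ_three_mul ha h3
  rw [← norm_ne_zero_iff, norm_tetrahedralTorsion_stdAddChar ha h3 hN (coe_unitOfCoprime _ hm)]
  exact div_ne_zero (norm_one_sub_stdAddChar_ne_zero (three_nsmul_units_ne_zero hN3 _))
    (norm_one_sub_stdAddChar_ne_zero u.ne_zero)

lemma exists_tetrahedralTorsion_mul_inv_eq_neg_zpow (ha : Odd a) (h3 : 3 ∣ a) (hN : N = 3 * a)
    (u : (ZMod N)ˣ) :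
    ∃ k : ℤ, tetrahedralTorsion a (stdAddChar u.val ^ (a + 1) : ℂ) *
      (tetrahedralTorsion a (stdAddChar (-u.val) ^ (a + 1) : ℂ))⁻¹ =
        (-stdAddChar (1 : ZMod N)) ^ k := by
  have hu : IsPrimitiveRoot (stdAddChar u.val : ℂ) N := isPrimitiveRoot_stdAddChar u.isUnit
  have hpow : ((stdAddChar u.val : ℂ) ^ (a + 1)) ^ N = 1 := by
    rw [← pow_mul, mul_comm, pow_mul, hu.pow_eq_one, one_pow]
  refine exists_eq_neg_zpow (hN ▸ (by decide : Odd 3).mul ha)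
    (isPrimitiveRoot_stdAddChar isUnit_one) ?_
  rw [AddChar.map_neg_eq_inv, inv_pow, tetrahedralTorsion_inv ha.pos.ne'
    (pow_ne_zero _ (hu.ne_zero (NeZero.ne N))), mul_inv_rev,
    mul_inv_cancel_left₀ (tetrahedralTorsion_stdAddChar_ne_zero ha h3 hN u), ← zpow_neg,
    ← zpow_natCast _ N, zpow_comm, zpow_natCast _ N, hpow, one_zpow]

theorem eq_zero_of_prod_tetrahedralTorsion_zpow {n : ℕ} {ι : Type*} [Fintype ι]
    {ρ : ι → (ZMod (3 ^ (n + 2)))ˣ} (hρ : Pairwise fun i j ↦ ρ i ≠ ρ j ∧ ρ i ≠ -ρ j)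
    {e : ι → ℤ} {M : ℤ}
    (h : ∏ i, tetrahedralTorsion (3 ^ (n + 1)) (stdAddChar (ρ i).val ^ (3 ^ (n + 1) + 1) : ℂ) ^ e i
      = (-stdAddChar (1 : ZMod (3 ^ (n + 2)))) ^ M) (i : ι) : e i = 0 := by
  have ha : Odd (3 ^ (n + 1)) := Odd.pow (by decide)
  have h3 : 3 ∣ 3 ^ (n + 1) := dvd_pow_self 3 n.succ_ne_zero
  have hN : 3 ^ (n + 2) = 3 * 3 ^ (n + 1) := pow_succ' ..
  set m := unitOfCoprime _ (hN ▸ coprime_half_succ_three_mul ha h3 :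
    ((3 ^ (n + 1) + 1) / 2).Coprime (3 ^ (n + 2)))
  have hlog (u : (ZMod (3 ^ (n + 2)))ˣ) :=
    log_norm_tetrahedralTorsion_stdAddChar ha h3 hN (coe_unitOfCoprime _ _ : m.val = _) u
  have hrel (u : (ZMod (3 ^ (n + 2)))ˣ) : ∑ i, (e i : ℝ) *
      (logNormOneSub (3 • (u * ρ i * m).val) - logNormOneSub (u * ρ i).val) = 0 := by
    have hconj := congrArg (Real.log ‖·‖) (prod_tetrahedralTorsion_zpow_conj h u)
    simp only [norm_prod, norm_zpow, norm_neg, norm_stdAddChar, one_zpow, Real.log_one,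
      ← Units.val_mul] at hconj
    rw [Real.log_prod fun i _ ↦ zpow_ne_zero _ (norm_ne_zero_iff.mpr
      (tetrahedralTorsion_stdAddChar_ne_zero ha h3 hN _))] at hconj
    simpa only [Real.log_zpow, hlog] using hconj
  have hindep := linearIndependent_translates (fun χ he ↦ sum_mul_logNormOneSub_sub_ne_zero he m) hρ
  have hzero := Fintype.linearIndependent_iff.mp hindep (fun i ↦ (e i : ℂ))
    (funext fun u ↦ by simpa [-nsmul_eq_mul] using mod_cast hrel u) i
  exact_mod_cast hzero

lemma stdAddChar_one_zpow (r : ℤ) :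
    (stdAddChar (1 : ZMod N) : ℂ) ^ r = stdAddChar (r : ZMod N) := by
  rw [← AddChar.map_zsmul_eq_zpow, zsmul_one]

end TorsionAtRootsOfUnity

/-- the Reidemeister torsions `τ_ℓ` of the `3`-dimensional tetrahedral space
forms satisfy `τ_ℓ = τ_{−ℓ}` in `ℂ*/Γ`, and the `τ_ℓ`, for `ℓ` ranging over representatives of
distinct classes of `(ℤ/3^sℤ)*/{±1}`, are multiplicatively independent in `ℂ*/Γ`. -/
theorem stmt13 (s : ℕ) (hs : 2 ≤ s) (a : ℕ) (ha : a = 3 ^ (s - 1))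
    (ζ : ℂ) (hζ : ζ = Complex.exp (2 * Real.pi * Complex.I / (3 ^ s : ℕ)))
    (Γ : Set ℂ) (hΓ : Γ = {w : ℂ | ∃ k : ℤ, w = (-ζ) ^ k})
    (ζl : ℤ → ℂ)
    (hζl : ∀ ℓ r : ℤ, Int.ModEq (3 ^ s) (r * ℓ) 1 →
      ζl ℓ = ζ ^ (r * (3 ^ (s - 1) + 1)))
    (τ : ℤ → ℂ)
    (hτ : ∀ ℓ : ℤ, τ ℓ =
      (ζl ℓ - 1) * (ζl ℓ ^ (2 * a - 1) - 1) / (ζl ℓ ^ (a + (a + 1) / 2 + 1) + 1)) :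
    (∀ ℓ : ℤ, IsCoprime ℓ 3 → τ ℓ * (τ (-ℓ))⁻¹ ∈ Γ) ∧
    (∀ (k : ℕ) (ℓ : Fin k → ℤ) (e : Fin k → ℤ),
      (∀ i, IsCoprime (ℓ i) 3) →
      (∀ i j, i ≠ j →
        ¬ ((ℓ i : ZMod (3 ^ s)) = (ℓ j : ZMod (3 ^ s)) ∨
           (ℓ i : ZMod (3 ^ s)) = -(ℓ j : ZMod (3 ^ s)))) →
      (∏ i, τ (ℓ i) ^ (e i)) ∈ Γ → ∀ i, e i = 0) := by
  obtain ⟨n, rfl⟩ := Nat.exists_eq_add_of_le' hs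
  subst ha
  have ha : Odd (3 ^ (n + 1)) := Odd.pow (by decide)
  have h3 : 3 ∣ 3 ^ (n + 1) := dvd_pow_self 3 n.succ_ne_zero
  have hζ_char : ζ = ZMod.stdAddChar (1 : ZMod (3 ^ (n + 2))) := by
    simpa [hζ] using (ZMod.stdAddChar_coe (N := 3 ^ (n + 2)) 1).symm
  have hτ_char {ℓ : ℤ} {v : (ZMod (3 ^ (n + 2)))ˣ} (hv : v.val = ℓ) :
      τ ℓ = tetrahedralTorsion (3 ^ (n + 1)) (ZMod.stdAddChar v⁻¹.val ^ (3 ^ (n + 1) + 1)) := by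
    obtain ⟨r, hr⟩ := ZMod.intCast_surjective v⁻¹.val
    rw [hτ, hζl ℓ r (mod_cast mul_modEq_one_of_intCast_eq_inv hr hv), zpow_mul, hζ_char,
      stdAddChar_one_zpow, hr]
    rfl
  subst hΓ hζ_char
  refine ⟨fun ℓ hℓ ↦ ?_, fun k ℓ e hℓ hdist ⟨M, hM⟩ ↦ ?_⟩
  · obtain ⟨v, hv⟩ := exists_units_val_eq_intCast (k := n + 2) (b := 3) hℓ
    have hneg : (-v).val = (-ℓ : ℤ) := by rw [Units.val_neg, hv, Int.cast_neg]
    rw [hτ_char hv, hτ_char hneg, inv_neg, Units.val_neg]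
    exact exists_tetrahedralTorsion_mul_inv_eq_neg_zpow ha h3 (pow_succ' ..) v⁻¹
  · choose v hv using fun i ↦ exists_units_val_eq_intCast (k := n + 2) (b := 3) (hℓ i)
    simp only [fun i ↦ hτ_char (hv i)] at hM
    refine eq_zero_of_prod_tetrahedralTorsion_zpow (fun i j hij ↦ ?_) hM
    simpa only [← inv_neg, ne_eq, inv_inj, ← Units.val_inj, Units.val_neg, hv, not_or]
      using hdist i j hij
end

section
/- Let s ≥ 2 and let G = P'_{8·3^s} be the generalized binary tetrahedral group. The group homology of G with coefficients in the trivial G-module ℤ is: H₀(G; ℤ) ≅ ℤ; H_n(G; ℤ) = 0 for n > 0 with n ≡ 0 (mod 4); H_n(G; ℤ) ≅ ℤ/3^sℤ for n ≡ 1 (mod 4); H_n(G; ℤ) = 0 for n ≡ 2 (mod 4); and H_n(G; ℤ) ≅ ℤ/(8·3^s)ℤ for n ≡ 3 (mod 4). In particular the abelianization of G is cyclic of order 3^s. -/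
/-- Generators of the generalized binary tetrahedral group. -/
inductive Gen : Type
  | p : Gen
  | q : Gen
  | z : Gen

/-- The relations of the presentation
`⟨p, q, z | p² = (pq)² = q², z p z⁻¹ = q, z q z⁻¹ = pq, z^{3^s} = 1⟩`. -/
def rels (s : ℕ) : Set (FreeGroup Gen) :=
  {FreeGroup.of Gen.p ^ 2 * (FreeGroup.of Gen.q ^ 2)⁻¹,
   (FreeGroup.of Gen.p * FreeGroup.of Gen.q) ^ 2 * (FreeGroup.of Gen.q ^ 2)⁻¹,
   FreeGroup.of Gen.z * FreeGroup.of Gen.p * (FreeGroup.of Gen.z)⁻¹ *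
     (FreeGroup.of Gen.q)⁻¹,
   FreeGroup.of Gen.z * FreeGroup.of Gen.q * (FreeGroup.of Gen.z)⁻¹ *
     (FreeGroup.of Gen.p * FreeGroup.of Gen.q)⁻¹,
   FreeGroup.of Gen.z ^ (3 ^ s)}

/-- The differential of the standard (inhomogeneous) chain complex computing the group
homology of `G` with trivial coefficients in `M`:
`d(g₁,…,g_{n+1}) = (g₂,…,g_{n+1}) + ∑ᵢ (−1)ⁱ (g₁,…,gᵢgᵢ₊₁,…,g_{n+1}) + (−1)^{n+1}(g₁,…,gₙ)`. -/
noncomputable def trivialChainsD (G : Type) [Group G] (M : Type) [AddCommGroup M] (n : ℕ) :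
    ((Fin (n + 1) → G) →₀ M) →+ ((Fin n → G) →₀ M) :=
  Finsupp.mapDomain.addMonoidHom (fun x => x ∘ Fin.succ) +
    ∑ j : Fin (n + 1),
      (-1 : ℤ) ^ ((j : ℕ) + 1) • Finsupp.mapDomain.addMonoidHom (Fin.contractNth j (· * ·))

/-- The differential leaving degree `n` (the zero map in degree `0`). -/
noncomputable def trivialChainsDFrom (G : Type) [Group G] (M : Type) [AddCommGroup M] :
    (n : ℕ) → (((Fin n → G) →₀ M) →+ ((Fin (n - 1) → G) →₀ M))
  | 0 => 0
  | (k + 1) => trivialChainsD G M k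

/-- The group homology `Hₙ(G; M)` with trivial coefficients, as the `n`-th homology of the
standard inhomogeneous chain complex: cycles in degree `n` modulo boundaries. -/
noncomputable abbrev groupHomologyTriv (G : Type) [Group G] (M : Type) [AddCommGroup M]
    (n : ℕ) : Type :=
  (trivialChainsDFrom G M n).ker ⧸
    ((trivialChainsD G M n).range.addSubgroupOf (trivialChainsDFrom G M n).ker)

/-
For `N = 9K` odd, write `3K = 2j + 1` and put `y = z p²` and `e = p y^{-3j}`. These two elements
generate the group, and in terms of them its presentation becomes balanced:
`⟨y, e | y³ = e² = (y e^K)³⟩`. Both relators say that some element has its cube equal to `e²`, hence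
commutes with `e²`; this gives one identity among the relators. The column of generators, the Fox
Jacobian of the relators, this identity and the norm element of the group ring are then the boundary
maps of a 4-periodic complex of free modules of ranks `1, 2, 2, 1`. Exactness at the generators is
the fundamental formula of Fox calculus, obtained by letting the group act on modules by affine
maps; exactness at the modules of rank `1` is a computation of invariants in the group ring. The
Euler characteristic of a period is `0`, so the remaining spot is exact up to torsion, and the
cokernel of the identity is torsion-free.

Taking coinvariants leaves the integer matrices `0`, the relator matrix of determinant `9K`, `0` and
the group order. The order is `8N`: the normal form `z^a p^b q^c` bounds it from above, and the
binary tetrahedral group `SL₂(ℤ/3)`, together with the cyclic quotient generated by `z`, bounds it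
from below.
-/

open CategoryTheory MonoidAlgebra

section ChainComplexHomology

variable {k : Type} [CommRing k]

theorem subsingleton_homology_succ_of_injective_d (K : ChainComplex (ModuleCat.{0} k) ℕ) (n : ℕ)
    (hd : Function.Injective (K.d (n + 1) n).hom) : Subsingleton (K.homology (n + 1)) := by
  refine ModuleCat.subsingleton_of_isZero (HomologicalComplex.ExactAt.isZero_homology ?_)
  rw [K.exactAt_iff' (n + 2) (n + 1) n (by simp) (by simp), ShortComplex.moduleCat_exact_iff]
  intro x hx
  exact ⟨0, (map_zero _).trans (hd (hx.trans (map_zero _).symm)).symm⟩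

theorem nonempty_homology_linearEquiv_of_d_eq_zero (K : ChainComplex (ModuleCat.{0} k) ℕ) (n : ℕ)
    (hd : K.d n (n - 1) = 0) {Z : Type} [AddCommGroup Z] [Module k Z] (π : K.X n →ₗ[k] Z)
    (hπ : Function.Surjective π) (hker : LinearMap.ker π = LinearMap.range (K.d (n + 1) n).hom) :
    Nonempty (K.homology n ≃ₗ[k] Z) := by
  let S := K.sc' (n + 1) n (n - 1)
  have hS : LinearMap.ker S.g.hom = ⊤ := by
    rw [show S.g = 0 from hd, ModuleCat.hom_zero, LinearMap.ker_zero]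
  let ρ : LinearMap.ker S.g.hom →ₗ[k] Z := π ∘ₗ Submodule.subtype _
  have hρ : Function.Surjective ρ := fun y ↦
    let ⟨x, hx⟩ := hπ y
    ⟨⟨x, hS ▸ Submodule.mem_top⟩, hx⟩
  have hρker : LinearMap.range S.moduleCatToCycles = LinearMap.ker ρ := by
    have hπ_eq_zero (x : K.X n) : π x = 0 ↔ ∃ y, (K.d (n + 1) n).hom y = x := by
      rw [← LinearMap.mem_ker, hker, LinearMap.mem_range]
    ext x
    exact ⟨fun ⟨y, hy⟩ ↦ (hπ_eq_zero _).2 ⟨y, congrArg Subtype.val hy⟩,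
      fun h ↦ let ⟨y, hy⟩ := (hπ_eq_zero _).1 h; ⟨y, Subtype.ext hy⟩⟩
  exact ⟨(K.homologyIsoSc' (n + 1) n (n - 1) (by simp) (by cases n <;> simp)).toLinearEquiv ≪≫ₗ
    S.moduleCatHomologyIso.toLinearEquiv ≪≫ₗ Submodule.quotEquivOfEq _ _ hρker ≪≫ₗ
    ρ.quotKerEquivOfSurjective hρ⟩

end ChainComplexHomology

section BarComplex

variable (k G : Type) [CommRing k] [Group G]

theorem inhomogeneousChains_trivial_d (n : ℕ) :
    ((groupHomology.inhomogeneousChains (Rep.trivial k G k)).d (n + 1) n).hom.toAddMonoidHom =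
      trivialChainsD G k n := by
  rw [groupHomology.inhomogeneousChains.d_def]
  refine Finsupp.addHom_ext fun x a ↦
    (groupHomology.inhomogeneousChains.d_single (A := Rep.trivial k G k) n x a).trans ?_
  simp only [trivialChainsD, Finsupp.mapDomain.addMonoidHom, AddMonoidHom.add_apply,
    AddMonoidHom.finsetSum_apply, Representation.isTrivial_def, LinearMap.id_coe, id_eq,
    Finsupp.smul_single, smul_eq_mul, Finsupp.single_mul, AddMonoidHom.coe_mk, ZeroHom.coe_mk,
    Finsupp.mapDomain_single, Int.reduceNeg, AddMonoidHom.smul_apply, zsmul_eq_mul, Int.cast_pow,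
    Int.cast_neg, Int.cast_one]
  rfl

theorem inhomogeneousChains_trivial_dFrom (n : ℕ) :
    ((groupHomology.inhomogeneousChains (Rep.trivial k G k)).d n (n - 1)).hom.toAddMonoidHom =
      trivialChainsDFrom G k n := by
  cases n with
  | zero => rw [HomologicalComplex.shape _ _ _ (by simp)]; rfl
  | succ n => exact inhomogeneousChains_trivial_d k G n

theorem nonempty_groupHomologyTriv_addEquiv_groupHomology (n : ℕ) :
    Nonempty (groupHomologyTriv G k n ≃+ groupHomology (Rep.trivial k G k) n) := by
  let K := groupHomology.inhomogeneousChains (Rep.trivial k G k)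
  let S := K.sc' (n + 1) n (n - 1)
  let cycles : LinearMap.ker S.g.hom ≃+ (trivialChainsDFrom G k n).ker :=
    AddEquiv.addSubgroupCongr (congrArg AddMonoidHom.ker (inhomogeneousChains_trivial_dFrom k G n))
  have hboundaries : (LinearMap.range S.moduleCatToCycles).toAddSubgroup.map cycles =
      (trivialChainsD G k n).range.addSubgroupOf (trivialChainsDFrom G k n).ker := by
    rw [← inhomogeneousChains_trivial_d]
    ext x
    constructor
    · rintro ⟨_, ⟨y, rfl⟩, rfl⟩
      exact ⟨y, rfl⟩
    · rintro ⟨y, hy⟩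
      exact ⟨_, ⟨y, rfl⟩, Subtype.ext hy⟩
  exact ⟨(QuotientAddGroup.congr _ _ cycles hboundaries).symm.trans
    (S.moduleCatHomologyIso.symm.toLinearEquiv ≪≫ₗ
    (K.homologyIsoSc' (n + 1) n (n - 1) (by simp)
      (by cases n <;> simp)).symm.toLinearEquiv).toAddEquiv⟩

end BarComplex

section FreeResolutions

open scoped Matrix

/-- The augmentation `∑ g, a_g g ↦ ∑ g, a_g` of the group ring. -/
noncomputable def augmentation (k G : Type) [CommRing k] [Group G] : k[G] →ₐ[k] k :=
  MonoidAlgebra.lift k k G 1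

variable {k G : Type} [CommRing k] [Group G]

@[simp]
theorem augmentation_single (g : G) (a : k) : augmentation k G (single g a) = a := by
  simp [augmentation]

@[simp]
theorem augmentation_of (g : G) : augmentation k G (of k G g) = 1 :=
  augmentation_single g 1

theorem representation_free_apply {n : Type} (g : G) (v : n →₀ k[G]) :
    Representation.free k G n g v = of k G g • v := by
  induction v using Finsupp.induction_linear with
  | zero => simp
  | add v w hv hw => rw [map_add, smul_add, hv, hw]
  | single i a =>
    induction a using MonoidAlgebra.induction_linear with
    | zero => simp
    | add a b ha hb => rw [Finsupp.single_add, map_add, smul_add, ha, hb]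
    | single h r => simp [single_mul_single]

section Matrix

variable {m n : Type} [Fintype m] [Fintype n]

/-- Right multiplication of row vectors by a matrix, on finitely supported functions because these
underlie `Rep.free`. -/
noncomputable def finsuppVecMulLinear {R : Type} [Semiring R] (A : Matrix m n R) :
    (m →₀ R) →ₗ[R] (n →₀ R) :=
  (Finsupp.linearEquivFunOnFinite R R n).symm.toLinearMap ∘ₗ A.vecMulLinear ∘ₗ
    (Finsupp.linearEquivFunOnFinite R R m).toLinearMap

/-- The map of free representations given by right multiplication of row vectors by a matrix. -/
noncomputable def freeHom (A : Matrix m n k[G]) : Rep.free k G m ⟶ Rep.free k G n :=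
  Rep.ofHom <| ((finsuppVecMulLinear A).restrictScalars k).intertwiningMap_of_isIntertwiningMap
    _ _ fun g v ↦ by
      rw [representation_free_apply, representation_free_apply]
      exact map_smul (finsuppVecMulLinear A) (of k G g) v

theorem freeHom_apply_eq_iff {A : Matrix m n k[G]} {v : m →₀ k[G]} {w : n →₀ k[G]} :
    (freeHom A).hom v = w ↔ ⇑v ᵥ* A = ⇑w :=
  Finsupp.equivFunOnFinite.symm_apply_eq

/-- The map from a free representation to the trivial one sending each basis vector to `1`. -/
noncomputable def freeAugmentation (k G n : Type) [CommRing k] [Group G] [Fintype n] :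
    Rep.free k G n ⟶ Rep.trivial k G k :=
  Rep.ofHom <| LinearMap.intertwiningMap_of_isIntertwiningMap
    (f := ∑ j, (augmentation k G).toLinearMap ∘ₗ (Finsupp.lapply j : (n →₀ k[G]) →ₗ[k] k[G])) _ _
    fun g v ↦ by
      rw [representation_free_apply]
      simp

theorem freeAugmentation_apply (v : n →₀ k[G]) :
    (freeAugmentation k G n).hom v = ∑ j, augmentation k G (v j) :=
  LinearMap.sum_apply _ _ _

theorem freeAugmentation_surjective [Nonempty n] :
    Function.Surjective (freeAugmentation k G n).hom := by
  classical
  intro a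
  obtain ⟨i⟩ := ‹Nonempty n›
  refine ⟨Finsupp.single i (single 1 a), (freeAugmentation_apply _).trans ?_⟩
  rw [Finset.sum_eq_single i (fun j _ hj ↦ by simp [hj.symm]) (by simp)]
  simp

/-- The coinvariants of `k ⊗ k[G]ⁿ` are `kⁿ`. -/
noncomputable def freeCoinvariantsEquiv (k G n : Type) [CommRing k] [Group G] [Fintype n]
    [DecidableEq n] :
    ((Rep.coinvariantsTensor k G).obj (Rep.trivial k G k)).obj (Rep.free k G n) ≃ₗ[k] (n → k) :=
  Rep.coinvariantsTensorFreeLEquiv (Rep.trivial k G k) n ≪≫ₗ Finsupp.linearEquivFunOnFinite k k n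

theorem freeCoinvariantsEquiv_mk [DecidableEq n] (a : k) (v : n →₀ k[G]) :
    freeCoinvariantsEquiv k G n (Rep.coinvariantsTensorMk (Rep.trivial k G k) (Rep.free k G n) a v)
      = fun j ↦ augmentation k G (v j) * a := by
  induction v using Finsupp.induction_linear with
  | zero => ext; simp
  | add v w hv hw =>
    rw [map_add, map_add, hv, hw]
    ext j
    simp [add_mul]
  | single i b =>
    induction b using MonoidAlgebra.induction_linear with
    | zero => ext; simp
    | add b c hb hc =>
      rw [Finsupp.single_add, map_add, map_add, hb, hc]
      ext j
      simp [add_mul]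
    | single g r =>
      refine (congrArg (Finsupp.linearEquivFunOnFinite k k n)
        (Rep.coinvariantsTensorFreeToFinsupp_mk_tmul_single (Rep.trivial k G k) a i g r)).trans ?_
      ext j
      by_cases h : i = j <;> simp [h]

theorem coinvariantsTensor_map_freeHom [DecidableEq m] [DecidableEq n] (A : Matrix m n k[G]) :
    ((Rep.coinvariantsTensor k G).obj (Rep.trivial k G k)).map (freeHom A) ≫
        (freeCoinvariantsEquiv k G n).toModuleIso.hom =
      (freeCoinvariantsEquiv k G m).toModuleIso.hom ≫
        ModuleCat.ofHom (A.map (augmentation k G)).vecMulLinear := by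
  refine Rep.coinvariantsTensor_hom_ext (LinearMap.ext₂ fun a v ↦ ?_)
  calc freeCoinvariantsEquiv k G n (Rep.coinvariantsTensorMk _ _ a ((freeHom A).hom v))
      = fun j ↦ augmentation k G ((⇑v ᵥ* A) j) * a := freeCoinvariantsEquiv_mk _ _
    _ = (fun i ↦ augmentation k G (v i) * a) ᵥ* A.map (augmentation k G) := by
        ext j
        simp [Matrix.vecMul, dotProduct, Finset.sum_mul, mul_right_comm]
    _ = freeCoinvariantsEquiv k G m (Rep.coinvariantsTensorMk _ _ a v) ᵥ*
          A.map (augmentation k G) := congrArg (· ᵥ* _) (freeCoinvariantsEquiv_mk _ _).symm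

theorem freeHom_zero : freeHom (0 : Matrix m n k[G]) = 0 :=
  Rep.hom_ext <| Representation.IntertwiningMap.ext <| LinearMap.ext fun v ↦
    freeHom_apply_eq_iff.2 (Matrix.vecMul_zero (⇑v))

theorem freeHom_comp {l : Type} [Fintype l] (A : Matrix m n k[G]) (B : Matrix n l k[G]) :
    freeHom A ≫ freeHom B = freeHom (A * B) :=
  Rep.hom_ext <| Representation.IntertwiningMap.ext <| LinearMap.ext fun v ↦
    congrArg Finsupp.equivFunOnFinite.symm (Matrix.vecMul_vecMul (⇑v) A B)

theorem freeHom_comp_freeAugmentation (A : Matrix m n k[G])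
    (hA : ∀ i, ∑ j, augmentation k G (A i j) = 0) : freeHom A ≫ freeAugmentation k G n = 0 := by
  refine Rep.hom_ext <| Representation.IntertwiningMap.ext <| LinearMap.ext fun v ↦ ?_
  refine (freeAugmentation_apply _).trans ?_
  calc ∑ j, augmentation k G ((⇑v ᵥ* A) j)
      = ∑ i, augmentation k G (v i) * ∑ j, augmentation k G (A i j) := by
        simp only [Matrix.vecMul, dotProduct, map_sum, map_mul, Finset.mul_sum]
        exact Finset.sum_comm
    _ = 0 := by simp only [hA, mul_zero, Finset.sum_const_zero]

theorem rep_shortComplex_exact (S : ShortComplex (Rep.{0} k G))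
    (h : ∀ v : S.X₂, S.g.hom v = 0 → ∃ w : S.X₁, S.f.hom w = v) : S.Exact := by
  apply (forget₂ (Rep.{0} k G) (ModuleCat k)).reflects_exact_of_faithful
  rw [ShortComplex.moduleCat_exact_iff]
  exact h

end Matrix

section Resolution

variable {ι : ℕ → Type} [∀ n, Fintype (ι n)]

/-- The matrices `d n`, acting on row vectors, are the boundary maps of a resolution
`⋯ → k[G]^(ι 1) → k[G]^(ι 0) → k → 0` of the trivial module, where the last map sends each basis
vector to `1`. -/
structure IsFreeResolution (d : ∀ n, Matrix (ι (n + 1)) (ι n) k[G]) : Prop where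
  nonempty : Nonempty (ι 0)
  mul_eq_zero : ∀ n, d (n + 1) * d n = 0
  exact : ∀ n v, v ᵥ* d n = 0 → ∃ w, w ᵥ* d (n + 1) = v
  augmentation_row : ∀ i, ∑ j, augmentation k G (d 0 i j) = 0
  exact_augmentation : ∀ v, ∑ j, augmentation k G (v j) = 0 → ∃ w, w ᵥ* d 0 = v

namespace IsFreeResolution

variable {d : ∀ n, Matrix (ι (n + 1)) (ι n) k[G]} (hd : IsFreeResolution d)

include hd in
theorem map_mul_map_eq_zero (n : ℕ) :
    (d (n + 1)).map (augmentation k G) * (d n).map (augmentation k G) = 0 := by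
  rw [← Matrix.map_mul, hd.mul_eq_zero, Matrix.map_zero _ (map_zero _)]

/-- The free resolution of the trivial representation given by the matrices `d n`. -/
noncomputable def complex : ChainComplex (Rep k G) ℕ :=
  ChainComplex.of (fun n ↦ Rep.free k G (ι n)) (fun n ↦ freeHom (d n)) fun n ↦ by
    rw [freeHom_comp, hd.mul_eq_zero, freeHom_zero]

theorem complex_d (n : ℕ) : hd.complex.d (n + 1) n = freeHom (d n) := by
  simp only [complex, ChainComplex.of, ChainComplex.of_d]

/-- The augmentation of the free resolution given by the matrices `d n`. -/
noncomputable def complexAugmentation :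
    hd.complex ⟶ (ChainComplex.single₀ (Rep k G)).obj (Rep.trivial k G k) :=
  (hd.complex.toSingle₀Equiv _).symm ⟨freeAugmentation k G (ι 0), by
    rw [complex_d]
    exact freeHom_comp_freeAugmentation _ hd.augmentation_row⟩

theorem complexAugmentation_f_zero : hd.complexAugmentation.f 0 = freeAugmentation k G (ι 0) :=
  ChainComplex.toSingle₀Equiv_symm_apply_f_zero _ _

theorem quasiIso_complexAugmentation : QuasiIso hd.complexAugmentation where
  quasiIsoAt m := by
    have := hd.nonempty
    induction m with
    | zero =>
      rw [ChainComplex.quasiIsoAt₀_iff, ShortComplex.quasiIso_iff_of_zeros' _ rfl rfl rfl]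
      change ShortComplex.Exact _ ∧ Epi (hd.complexAugmentation.f 0)
      constructor
      · refine rep_shortComplex_exact _ fun v hv ↦ ?_
        replace hv : (hd.complexAugmentation.f 0).hom v = 0 := hv
        rw [complexAugmentation_f_zero] at hv
        obtain ⟨w, hw⟩ := hd.exact_augmentation _ ((freeAugmentation_apply v).symm.trans hv)
        refine ⟨Finsupp.equivFunOnFinite.symm w, ?_⟩
        change (hd.complex.d 1 0).hom _ = _
        rw [hd.complex_d 0]
        exact freeHom_apply_eq_iff.2 hw
      · rw [Rep.epi_iff_surjective, complexAugmentation_f_zero]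
        exact freeAugmentation_surjective
    | succ m _ =>
      rw [quasiIsoAt_iff_exactAt' (hL := ChainComplex.exactAt_succ_single_obj ..),
          HomologicalComplex.exactAt_iff' _ (m + 2) (m + 1) m (by simp) (by simp)]
      refine rep_shortComplex_exact _ fun v hv ↦ ?_
      replace hv : (hd.complex.d (m + 1) m).hom v = 0 := hv
      rw [complex_d] at hv
      obtain ⟨w, hw⟩ := hd.exact m _ (freeHom_apply_eq_iff.1 hv)
      refine ⟨Finsupp.equivFunOnFinite.symm w, ?_⟩
      change (hd.complex.d (m + 2) (m + 1)).hom _ = _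
      rw [complex_d]
      exact freeHom_apply_eq_iff.2 hw

/-- The projective resolution of the trivial representation given by the matrices `d n`. -/
noncomputable def projectiveResolution [∀ n, DecidableEq (ι n)] :
    ProjectiveResolution (Rep.trivial k G k) where
  complex := hd.complex
  projective n := inferInstanceAs (Projective (Rep.free k G (ι n)))
  π := hd.complexAugmentation
  quasiIso := hd.quasiIso_complexAugmentation

/-- The complex obtained from the free resolution by applying the augmentation to all matrix
entries; its homology is the homology of the group. -/
noncomputable def coinvariantsComplex : ChainComplex (ModuleCat k) ℕ :=
  ChainComplex.of (fun n ↦ ModuleCat.of k (ι n → k))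
    (fun n ↦ ModuleCat.ofHom ((d n).map (augmentation k G)).vecMulLinear)
    fun n ↦ ModuleCat.hom_ext <| LinearMap.ext fun v ↦ by
      simp [Matrix.vecMul_vecMul, hd.map_mul_map_eq_zero n]

theorem coinvariantsComplex_d (n : ℕ) : hd.coinvariantsComplex.d (n + 1) n =
    ModuleCat.ofHom ((d n).map (augmentation k G)).vecMulLinear := by
  simp only [coinvariantsComplex, ChainComplex.of, ChainComplex.of_d]

/-- The coinvariants of the terms of the free resolution. -/
noncomputable def coinvariantsTensorIso [∀ n, DecidableEq (ι n)] :
    hd.complex.coinvariantsTensorObj (Rep.trivial k G k) ≅ hd.coinvariantsComplex :=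
  HomologicalComplex.Hom.isoOfComponents
    (fun n ↦ (freeCoinvariantsEquiv k G (ι n)).toModuleIso) fun i j h ↦ by
      subst h
      rw [coinvariantsComplex_d, Functor.mapHomologicalComplex_obj_d, complex_d]
      exact (coinvariantsTensor_map_freeHom (d j)).symm

theorem nonempty_groupHomologyTriv_addEquiv (n : ℕ) :
    Nonempty (groupHomologyTriv G k n ≃+ hd.coinvariantsComplex.homology n) := by
  classical
  obtain ⟨e⟩ := nonempty_groupHomologyTriv_addEquiv_groupHomology k G n
  exact ⟨e.trans (groupHomologyIso _ n hd.projectiveResolution ≪≫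
    HomologicalComplex.homologyMapIso hd.coinvariantsTensorIso n).toLinearEquiv.toAddEquiv⟩

include hd

theorem subsingleton_groupHomologyTriv_succ (n : ℕ)
    (h : Function.Injective ((d n).map (augmentation k G)).vecMulLinear) :
    Subsingleton (groupHomologyTriv G k (n + 1)) := by
  obtain ⟨e⟩ := hd.nonempty_groupHomologyTriv_addEquiv (n + 1)
  have := subsingleton_homology_succ_of_injective_d hd.coinvariantsComplex n
    (by rw [coinvariantsComplex_d]; exact h)
  exact e.toEquiv.subsingleton

variable {Z : Type} [AddCommGroup Z] [Module k Z]

theorem nonempty_groupHomologyTriv_zero_addEquiv (π : (ι 0 → k) →ₗ[k] Z)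
    (hπ : Function.Surjective π)
    (hker : LinearMap.ker π = LinearMap.range ((d 0).map (augmentation k G)).vecMulLinear) :
    Nonempty (groupHomologyTriv G k 0 ≃+ Z) := by
  obtain ⟨e⟩ := hd.nonempty_groupHomologyTriv_addEquiv 0
  obtain ⟨f⟩ := nonempty_homology_linearEquiv_of_d_eq_zero hd.coinvariantsComplex 0
    (HomologicalComplex.shape _ _ _ (by simp)) π hπ
    (by rw [coinvariantsComplex_d]; exact hker)
  exact ⟨e.trans f.toAddEquiv⟩

theorem nonempty_groupHomologyTriv_succ_addEquiv (n : ℕ)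
    (h₀ : (d n).map (augmentation k G) = 0) (π : (ι (n + 1) → k) →ₗ[k] Z)
    (hπ : Function.Surjective π)
    (hker : LinearMap.ker π =
      LinearMap.range ((d (n + 1)).map (augmentation k G)).vecMulLinear) :
    Nonempty (groupHomologyTriv G k (n + 1) ≃+ Z) := by
  obtain ⟨e⟩ := hd.nonempty_groupHomologyTriv_addEquiv (n + 1)
  have hd₀ : hd.coinvariantsComplex.d (n + 1) n = 0 := by
    rw [coinvariantsComplex_d, h₀]
    exact ModuleCat.hom_ext (LinearMap.ext Matrix.vecMul_zero)
  obtain ⟨f⟩ := nonempty_homology_linearEquiv_of_d_eq_zero hd.coinvariantsComplex (n + 1) hd₀ π hπ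
    (by rw [coinvariantsComplex_d]; exact hker)
  exact ⟨e.trans f.toAddEquiv⟩

end IsFreeResolution

end Resolution

end FreeResolutions

section GroupRing

variable {k G : Type} [CommRing k] [Group G]

theorem of_smul_of_inv_smul {M : Type} [AddCommGroup M] [Module k[G] M] (g : G) (m : M) :
    of k G g • of k G g⁻¹ • m = m := by
  rw [← mul_smul, ← map_mul, mul_inv_cancel, map_one, one_smul]

theorem of_inv_smul_of_smul {M : Type} [AddCommGroup M] [Module k[G] M] (g : G) (m : M) :
    of k G g⁻¹ • of k G g • m = m := by
  rw [← mul_smul, ← map_mul, inv_mul_cancel, map_one, one_smul]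

theorem coeff_mul_of (v : k[G]) (g h : G) : (v * of k G g).coeff h = v.coeff (h * g⁻¹) := by
  rw [of_apply, coeff_mul_single_eq_coeff_mul (h * g⁻¹) fun _ _ ↦ eq_mul_inv_iff_mul_eq.symm,
    mul_one]

section Augmentation

variable {ι : Type} {x : ι → G}

theorem of_sub_one_mem_span (hx : Subgroup.closure (Set.range x) = ⊤) (g : G) :
    of k G g - 1 ∈ Submodule.span k[G] (Set.range fun i ↦ of k G (x i) - 1) := by
  induction (hx ▸ Subgroup.mem_top g : g ∈ Subgroup.closure (Set.range x))
    using Subgroup.closure_induction with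
  | mem _ hi =>
    obtain ⟨i, rfl⟩ := hi
    exact Submodule.subset_span ⟨i, rfl⟩
  | one => rw [map_one, sub_self]; exact Submodule.zero_mem _
  | mul g h _ _ hg hh =>
    rw [show of k G (g * h) - 1 = of k G g • (of k G h - 1) + (of k G g - 1) by
      rw [map_mul, smul_eq_mul]; noncomm_ring]
    exact Submodule.add_mem _ (Submodule.smul_mem _ _ hh) hg
  | inv g _ hg =>
    rw [show of k G g⁻¹ - 1 = -(of k G g⁻¹ • (of k G g - 1)) by
      rw [smul_sub, ← mul_one (of k G g), ← smul_eq_mul (of k G g), of_inv_smul_of_smul,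
        smul_eq_mul, mul_one, neg_sub]]
    exact Submodule.neg_mem _ (Submodule.smul_mem _ _ hg)

theorem exists_sum_mul_of_sub_one_eq [Fintype ι] (hx : Subgroup.closure (Set.range x) = ⊤)
    {v : k[G]} (hv : augmentation k G v = 0) :
    ∃ c : ι → k[G], ∑ i, c i * (of k G (x i) - 1) = v := by
  suffices ∀ v : k[G], v - augmentation k G v • 1 ∈
      Submodule.span k[G] (Set.range fun i ↦ of k G (x i) - 1) by
    have hmem := this v
    rwa [hv, zero_smul, sub_zero, Submodule.mem_span_range_iff_exists_fun] at hmem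
  intro v
  induction v using MonoidAlgebra.induction_linear with
  | zero => simp
  | add v w hv hw =>
    rw [map_add, add_smul, add_sub_add_comm]
    exact Submodule.add_mem _ hv hw
  | single g r =>
    rw [augmentation_single, ← smul_of, ← smul_sub]
    exact Submodule.smul_of_tower_mem _ _ (of_sub_one_mem_span hx g)

end Augmentation

section NormElement

variable [Fintype G]

variable (k G) in
/-- The norm element `∑ g, g` of the group ring of a finite group, which spans its invariants. -/
noncomputable def normElement : k[G] := ∑ g, of k G g

theorem mul_normElement (v : k[G]) :
    v * normElement k G = augmentation k G v • normElement k G := by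
  induction v using MonoidAlgebra.induction_linear with
  | zero => simp
  | add v w hv hw => rw [add_mul, hv, hw, map_add, add_smul]
  | single g r =>
    rw [augmentation_single, ← smul_of, smul_mul_assoc, normElement, Finset.mul_sum]
    simp_rw [← map_mul]
    exact congrArg (r • ·) (Fintype.sum_equiv (Equiv.mulLeft g) _ (of k G) fun _ ↦ rfl)

theorem normElement_mul_of (g : G) : normElement k G * of k G g = normElement k G := by
  simp_rw [normElement, Finset.sum_mul, ← map_mul]
  exact Fintype.sum_equiv (Equiv.mulRight g) _ (of k G) fun _ ↦ rfl

theorem coeff_normElement (g : G) : (normElement k G).coeff g = 1 := by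
  classical
  simp [normElement, coeff_sum, Finsupp.single_apply]

theorem augmentation_normElement : augmentation k G (normElement k G) = Nat.card G := by
  simp [normElement, -of_apply]

/- The case `a = 0` characterises multiples of the norm element; for `a ≠ 0` it is the same
statement modulo `a`. -/
theorem exists_eq_smul_normElement_add_smul {S : Set G} (hS : Subgroup.closure S = ⊤) (a : k)
    {v : k[G]} (hv : ∀ g ∈ S, ∃ w, v * (of k G g - 1) = a • w) :
    ∃ w, v = v.coeff 1 • normElement k G + a • w := by
  have hdvd (g : G) : ∀ h, a ∣ v.coeff (h * g) - v.coeff h := by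
    induction (hS ▸ Subgroup.mem_top g : g ∈ Subgroup.closure S)
      using Subgroup.closure_induction with
    | mem g hg =>
      intro h
      obtain ⟨w, hw⟩ := hv g hg
      refine ⟨-w.coeff (h * g), ?_⟩
      have := congrArg (fun u : k[G] ↦ u.coeff (h * g)) hw
      simp only [mul_sub, mul_one, coeff_sub, Finsupp.sub_apply, coeff_mul_of, coeff_smul,
        mul_inv_cancel_right, Finsupp.smul_apply, smul_eq_mul] at this
      rw [mul_neg, ← this, neg_sub]
    | one => simp
    | mul g₁ g₂ _ _ h₁ h₂ =>
      intro h
      simpa [← mul_assoc] using dvd_add (h₂ (h * g₁)) (h₁ h)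
    | inv g _ hg =>
      intro h
      simpa [dvd_sub_comm] using hg (h * g⁻¹)
  choose w hw using fun g ↦ hdvd g 1
  simp only [one_mul] at hw
  refine ⟨∑ g, single g (w g), MonoidAlgebra.ext (Finsupp.ext fun g ↦ ?_)⟩
  classical
  simp [coeff_sum, coeff_normElement, Finsupp.single_apply, ← hw]

end NormElement

end GroupRing

section AffineActions

open scoped Matrix

variable (k : Type) {G M : Type} [CommRing k] [Group G] [AddCommGroup M] [Module k[G] M]

/-- The affine permutation `m ↦ g • m + a` of a module over the group ring. A relator of a
group evaluated at such permutations is a translation, by the corresponding row of the Fox Jacobian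
applied to their translation parts. -/
noncomputable def affinePerm (g : G) (a : M) : Equiv.Perm M where
  toFun m := of k G g • m + a
  invFun m := of k G g⁻¹ • (m - a)
  left_inv m := by simp only [add_sub_cancel_right, of_inv_smul_of_smul]
  right_inv m := by simp only [of_smul_of_inv_smul, sub_add_cancel]

theorem affinePerm_apply (g : G) (a m : M) : affinePerm k g a m = of k G g • m + a := rfl

theorem affinePerm_apply_zero (g : G) (a : M) : affinePerm k g a 0 = a := by
  rw [affinePerm_apply, smul_zero, zero_add]

theorem affinePerm_one_zero : affinePerm k (1 : G) (0 : M) = 1 := by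
  ext m
  rw [affinePerm_apply, map_one, one_smul, add_zero, Equiv.Perm.one_apply]

theorem affinePerm_mul (g h : G) (a b : M) :
    affinePerm k g a * affinePerm k h b = affinePerm k (g * h) (a + of k G g • b) := by
  ext m
  rw [Equiv.Perm.mul_apply, affinePerm_apply, affinePerm_apply, affinePerm_apply, map_mul,
    mul_smul, smul_add, add_assoc, add_comm a]

theorem affinePerm_inv (g : G) (a : M) :
    (affinePerm k g a)⁻¹ = affinePerm k g⁻¹ (-(of k G g⁻¹ • a)) := by
  rw [inv_eq_iff_mul_eq_one, affinePerm_mul, mul_inv_cancel, smul_neg, of_smul_of_inv_smul,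
    add_neg_cancel, affinePerm_one_zero]

theorem affinePerm_pow (g : G) (a : M) (n : ℕ) :
    affinePerm k g a ^ n = affinePerm k (g ^ n) ((∑ i ∈ Finset.range n, of k G g ^ i) • a) := by
  induction n with
  | zero => rw [Finset.sum_range_zero, zero_smul, pow_zero, pow_zero, affinePerm_one_zero]
  | succ n ih =>
    rw [pow_succ, ih, affinePerm_mul, ← pow_succ, map_pow, ← add_smul, ← Finset.sum_range_succ]

variable {k} {ι : Type} {x : ι → G} {a : ι → M} {φ : G →* Equiv.Perm M}

theorem eq_affinePerm_of_closure_eq_top (hx : Subgroup.closure (Set.range x) = ⊤)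
    (hφ : ∀ i, φ (x i) = affinePerm k (x i) (a i)) (g : G) : φ g = affinePerm k g (φ g 0) := by
  suffices ∃ b, φ g = affinePerm k g b by
    obtain ⟨b, hb⟩ := this
    rw [hb, affinePerm_apply_zero]
  induction (hx ▸ Subgroup.mem_top g : g ∈ Subgroup.closure (Set.range x))
    using Subgroup.closure_induction with
  | mem _ hi =>
    obtain ⟨i, rfl⟩ := hi
    exact ⟨a i, hφ i⟩
  | one => exact ⟨0, by rw [map_one, affinePerm_one_zero]⟩
  | mul g h _ _ hg hh =>
    obtain ⟨⟨b, hb⟩, c, hc⟩ := And.intro hg hh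
    exact ⟨_, by rw [map_mul, hb, hc, affinePerm_mul]⟩
  | inv g _ hg =>
    obtain ⟨b, hb⟩ := hg
    exact ⟨_, by rw [map_inv, hb, affinePerm_inv]⟩

/- The translation parts of the affine maps `φ g` form a crossed homomorphism `δ`. Its linear
extension to the group ring sends `v * (g - 1)` to `v • δ g`. -/
theorem sum_smul_eq_zero_of_affine [Fintype ι] [Module k M] [IsScalarTower k k[G] M]
    (hx : Subgroup.closure (Set.range x) = ⊤) (hφ : ∀ i, φ (x i) = affinePerm k (x i) (a i))
    {v : ι → k[G]} (hv : ∑ i, v i * (of k G (x i) - 1) = 0) : ∑ i, v i • a i = 0 := by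
  let δ (g : G) : M := φ g 0
  have hδ_mul (g h : G) : δ (g * h) = δ g + of k G g • δ h := by
    have hφg := eq_affinePerm_of_closure_eq_top hx hφ g
    change φ (g * h) 0 = _
    rw [map_mul, Equiv.Perm.mul_apply, hφg, affinePerm_apply, add_comm]
  let D : k[G] →ₗ[k] M := (MonoidAlgebra.basis G k).constr k δ
  have hD_of (g : G) : D (of k G g) = δ g := by
    simpa using (MonoidAlgebra.basis G k).constr_basis k δ g
  have hD (v : k[G]) (g : G) : D (v * (of k G g - 1)) = v • δ g := by
    induction v using MonoidAlgebra.induction_linear with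
    | zero => rw [zero_mul, map_zero, zero_smul]
    | add v w hv hw => rw [add_mul, map_add, hv, hw, add_smul]
    | single h r =>
      rw [← smul_of, smul_mul_assoc, map_smul, mul_sub, mul_one, ← map_mul, map_sub, hD_of, hD_of,
        hδ_mul, add_sub_cancel_left, smul_assoc]
  have hδ (i : ι) : δ (x i) = a i := by
    change φ (x i) 0 = _
    rw [hφ, affinePerm_apply_zero]
  simp_rw [← hδ, ← hD, ← map_sum, hv, map_zero]

theorem exists_vecMul_eq_of_affine {ρ : Type} [Fintype ι] [Fintype ρ] {A : Matrix ρ ι k[G]}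
    (hx : Subgroup.closure (Set.range x) = ⊤)
    (hA : ∀ {M : Type} [AddCommGroup M] [Module k[G] M] (a : ι → M),
      (∀ i, ∑ j, A i j • a j = 0) →
        ∃ φ : G →* Equiv.Perm M, ∀ i, φ (x i) = affinePerm k (x i) (a i))
    {v : ι → k[G]} (hv : ∑ i, v i * (of k G (x i) - 1) = 0) : ∃ w, w ᵥ* A = v := by
  classical
  let S := LinearMap.range A.vecMulLinear
  let a (i : ι) : (ι → k[G]) ⧸ S := S.mkQ (Pi.single i 1)
  have hmk (v : ι → k[G]) : ∑ i, v i • a i = S.mkQ v := by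
    simp_rw [a, ← map_smul, ← map_sum]
    exact congrArg S.mkQ (pi_eq_sum_univ' v).symm
  obtain ⟨φ, hφ⟩ := hA a fun i ↦ by
    rw [hmk, Submodule.mkQ_apply, Submodule.Quotient.mk_eq_zero]
    exact ⟨Pi.single i 1, Matrix.single_one_vecMul i A⟩
  refine (LinearMap.mem_range (f := A.vecMulLinear)).1 ((Submodule.Quotient.mk_eq_zero S).1 ?_)
  rw [← Submodule.mkQ_apply, ← hmk]
  exact sum_smul_eq_zero_of_affine hx hφ hv

end AffineActions

section MatrixKernels

open scoped Matrix

theorem ker_vecMulLinear_eq_range (k : Type) {R l m n : Type} [CommSemiring k] [Semiring R]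
    [Algebra k R] [Fintype l] [Fintype m] {A : Matrix m n R} {B : Matrix l m R} (hBA : B * A = 0)
    (hexact : ∀ v, v ᵥ* A = 0 → ∃ w, w ᵥ* B = v) :
    LinearMap.ker (A.vecMulLinear.restrictScalars k) =
      LinearMap.range (B.vecMulLinear.restrictScalars k) := by
  ext v
  refine ⟨hexact v, fun ⟨w, hw⟩ ↦ ?_⟩
  rw [← hw]
  exact (Matrix.vecMul_vecMul w B A).trans (by rw [hBA, Matrix.vecMul_zero])

end MatrixKernels

section LinearAlgebra

open LinearMap Module

variable {k : Type} [CommRing k] [IsDomain k]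

theorem finrank_range_add_finrank_ker_of_isDomain {M N : Type} [AddCommGroup M] [AddCommGroup N]
    [Module k M] [Module k N] [Module.Finite k M] (f : M →ₗ[k] N) :
    finrank k (range f) + finrank k (ker f) = finrank k M := by
  rw [← f.quotKerEquivRange.finrank_eq, Submodule.finrank_quotient_add_finrank]

theorem ker_le_range_of_finrank_le {M₁ M₂ M₃ : Type} [AddCommGroup M₁] [AddCommGroup M₂]
    [AddCommGroup M₃] [Module k M₁] [Module k M₂] [Module k M₃] [Module.Finite k M₂]
    {f : M₂ →ₗ[k] M₁} {g : M₃ →ₗ[k] M₂} (hfg : f ∘ₗ g = 0)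
    (hsat : ∀ (a : k) (v : M₂), a ≠ 0 → a • v ∈ range g → v ∈ range g)
    (hrank : finrank k M₂ ≤ finrank k (range f) + finrank k (range g)) : ker f ≤ range g := by
  have : IsTorsionFree k (M₂ ⧸ range g) := .of_smul_eq_zero fun a v ↦ by
    obtain ⟨v, rfl⟩ := (range g).mkQ_surjective v
    rw [← map_smul, Submodule.mkQ_apply, Submodule.mkQ_apply, Submodule.Quotient.mk_eq_zero,
      Submodule.Quotient.mk_eq_zero, or_iff_not_imp_left]
    exact fun h ha ↦ hsat a v ha h
  let f' : (M₂ ⧸ range g) →ₗ[k] M₁ := (range g).liftQ f (range_le_ker_iff.2 hfg)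
  have hf' : finrank k (⊤ : Submodule k (M₂ ⧸ range g)) ≤ finrank k (Submodule.map f' ⊤) := by
    rw [finrank_top, Submodule.map_top, Submodule.range_liftQ]
    have := Submodule.finrank_quotient_add_finrank (range g)
    lia
  have hker : ker f' = ⊥ := top_disjoint.1 (Submodule.disjoint_ker_of_finrank_le f' hf')
  exact fun v hv ↦ (Submodule.Quotient.mk_eq_zero _).1 (ker_eq_bot'.1 hker _ hv)

/- In a 4-periodic complex of vanishing Euler characteristic, exactness at three spots forces
exactness at the fourth up to torsion, which `hsat` excludes. -/
theorem ker_le_range_of_finrank_add_eq {M₀ M₁ M₂ M₃ : Type} [AddCommGroup M₀] [AddCommGroup M₁]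
    [AddCommGroup M₂] [AddCommGroup M₃] [Module k M₀] [Module k M₁] [Module k M₂] [Module k M₃]
    [Module.Finite k M₀] [Module.Finite k M₁] [Module.Finite k M₂] [Module.Finite k M₃]
    {f₀ : M₁ →ₗ[k] M₀} {f₁ : M₂ →ₗ[k] M₁} {f₂ : M₃ →ₗ[k] M₂} {f₃ : M₀ →ₗ[k] M₃}
    (hrank : finrank k M₀ + finrank k M₂ = finrank k M₁ + finrank k M₃)
    (h₀ : ker f₀ = range f₁) (h₂ : ker f₂ = range f₃) (h₃ : ker f₃ = range f₀)
    (h₁₂ : f₁ ∘ₗ f₂ = 0) (hsat : ∀ (a : k) (v : M₂), a ≠ 0 → a • v ∈ range f₂ → v ∈ range f₂) :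
    ker f₁ ≤ range f₂ := by
  have hf₀ := finrank_range_add_finrank_ker_of_isDomain f₀
  have hf₂ := finrank_range_add_finrank_ker_of_isDomain f₂
  have hf₃ := finrank_range_add_finrank_ker_of_isDomain f₃
  rw [h₀] at hf₀
  rw [h₂] at hf₂
  rw [h₃] at hf₃
  exact ker_le_range_of_finrank_le h₁₂ hsat (by lia)

end LinearAlgebra

section BoundaryMatrices

variable {R : Type} [Ring R] (K : ℕ) (y e : R)

/-- The column of the elements `y - 1` and `e - 1`, for generators `y` and `e` of a group inside
its group ring: the first boundary matrix of the resolution. -/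
def generatorMatrix : Matrix (Fin 2) (Fin 1) R :=
  !![y - 1; e - 1]

/-- The Fox Jacobian of the relators `y³ e⁻²` and `(y e^K)³ e⁻²`. -/
def relatorMatrix : Matrix (Fin 2) (Fin 2) R :=
  !![∑ i ∈ Finset.range 3, y ^ i, -(1 + e);
    ∑ i ∈ Finset.range 3, (y * e ^ K) ^ i,
      (∑ i ∈ Finset.range 3, (y * e ^ K) ^ i) * y * (∑ i ∈ Finset.range K, e ^ i) - (1 + e)]

/-- The identity among the relators `y³ e⁻²` and `(y e^K)³ e⁻²`: it comes from the fact that `y` and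
`y e^K` both commute with `e²`. -/
def syzygyMatrix : Matrix (Fin 1) (Fin 2) R :=
  !![1 - y, y * e ^ K - 1]

variable {K y e}

section Map

variable {S : Type} [Ring S] (f : R →+* S)

theorem generatorMatrix_map : (generatorMatrix y e).map f = generatorMatrix (f y) (f e) := by
  ext i j
  fin_cases i <;> simp [generatorMatrix]

theorem relatorMatrix_map : (relatorMatrix K y e).map f = relatorMatrix K (f y) (f e) := by
  ext i j
  fin_cases i <;> fin_cases j <;> simp [relatorMatrix]

theorem syzygyMatrix_map : (syzygyMatrix K y e).map f = syzygyMatrix K (f y) (f e) := by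
  ext i j
  fin_cases j <;> simp [syzygyMatrix]

end Map

theorem generatorMatrix_one_one : generatorMatrix (1 : R) 1 = 0 := by
  ext i j
  fin_cases i <;> simp [generatorMatrix]

theorem relatorMatrix_one_one : relatorMatrix K (1 : R) 1 = !![3, -2; 3, 3 * (K : R) - 2] := by
  ext i j
  fin_cases i <;> fin_cases j <;> norm_num [relatorMatrix]

theorem syzygyMatrix_one_one : syzygyMatrix K (1 : R) 1 = 0 := by
  ext i j
  fin_cases j <;> simp [syzygyMatrix]

variable (hy : y ^ 3 = e ^ 2) (hu : (y * e ^ K) ^ 3 = e ^ 2)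
include hy hu

theorem relatorMatrix_mul_generatorMatrix : relatorMatrix K y e * generatorMatrix y e = 0 := by
  have hY : (∑ i ∈ Finset.range 3, y ^ i) * (y - 1) = e ^ 2 - 1 := by rw [geom_sum_mul, hy]
  have hU : (∑ i ∈ Finset.range 3, (y * e ^ K) ^ i) * (y * e ^ K - 1) = e ^ 2 - 1 := by
    rw [geom_sum_mul, hu]
  have hE : (∑ i ∈ Finset.range K, e ^ i) * (e - 1) = e ^ K - 1 := geom_sum_mul e K
  rw [relatorMatrix, generatorMatrix]
  generalize ∑ i ∈ Finset.range 3, y ^ i = Y at *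
  generalize ∑ i ∈ Finset.range 3, (y * e ^ K) ^ i = U at *
  generalize ∑ i ∈ Finset.range K, e ^ i = E at *
  have h₁ : Y * (y - 1) + -(1 + e) * (e - 1) = 0 := by
    rw [hY]
    noncomm_ring
  have h₂ : U * (y - 1) + (U * y * E - (1 + e)) * (e - 1) = 0 := calc
    _ = U * (y - 1) + U * (y * (E * (e - 1))) - (e ^ 2 - 1) := by noncomm_ring
    _ = 0 := by
      rw [hE, ← hU]
      noncomm_ring
  ext i j
  fin_cases i
  · simpa [Matrix.mul_apply] using h₁
  · simpa [Matrix.mul_apply] using h₂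

theorem syzygyMatrix_mul_relatorMatrix : syzygyMatrix K y e * relatorMatrix K y e = 0 := by
  have hY : (y - 1) * ∑ i ∈ Finset.range 3, y ^ i = e ^ 2 - 1 := by rw [mul_geom_sum, hy]
  have hU : (y * e ^ K - 1) * ∑ i ∈ Finset.range 3, (y * e ^ K) ^ i = e ^ 2 - 1 := by
    rw [mul_geom_sum, hu]
  have hE : (e - 1) * ∑ i ∈ Finset.range K, e ^ i = e ^ K - 1 := mul_geom_sum e K
  have hcomm : e ^ 2 * y = y * e ^ 2 := by rw [← hy, pow_mul_comm']
  have hcommK : (1 + e) * (e ^ K - 1) = (e ^ K - 1) * (1 + e) :=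
    (Commute.one_left _).add_left (((Commute.refl e).pow_right K).sub_right (.one_right e))
  rw [relatorMatrix, syzygyMatrix]
  generalize ∑ i ∈ Finset.range 3, y ^ i = Y at *
  generalize ∑ i ∈ Finset.range 3, (y * e ^ K) ^ i = U at *
  generalize ∑ i ∈ Finset.range K, e ^ i = E at *
  have h₁ : (1 - y) * Y + (y * e ^ K - 1) * U = 0 := by
    rw [← neg_sub, neg_mul, hY, hU, neg_add_cancel]
  have h₂ : (1 - y) * -(1 + e) + (y * e ^ K - 1) * (U * y * E - (1 + e)) = 0 := by
    have hUyE : (y * e ^ K - 1) * (U * y * E) = y * (e ^ K - 1) * (1 + e) := calc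
      _ = (e ^ 2 - 1) * y * E := by rw [← mul_assoc, ← mul_assoc, hU]
      _ = y * (1 + e) * ((e - 1) * E) := by
        rw [sub_mul, hcomm]
        noncomm_ring
      _ = y * (e ^ K - 1) * (1 + e) := by rw [hE, mul_assoc, hcommK, mul_assoc]
    rw [mul_sub, hUyE]
    noncomm_ring
  ext i j
  rw [Subsingleton.elim i 0]
  fin_cases j
  · simpa [Matrix.mul_apply] using h₁
  · simpa [Matrix.mul_apply] using h₂

end BoundaryMatrices

section BalancedPresentation

open scoped Matrix

/-- The group `G` has the presentation `⟨y, e | y³ = e² = (y e^K)³⟩`, expressed through the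
universal property of the presentation. -/
structure IsBalancedPresentation {G : Type} [Group G] (K : ℕ) (y e : G) : Prop where
  pow_three : y ^ 3 = e ^ 2
  mul_pow_three : (y * e ^ K) ^ 3 = e ^ 2
  closure_eq_top : Subgroup.closure {y, e} = ⊤
  exists_lift : ∀ {H : Type} [Group H] (y' e' : H), y' ^ 3 = e' ^ 2 → (y' * e' ^ K) ^ 3 = e' ^ 2 →
    ∃ φ : G →* H, φ y = y' ∧ φ e = e'

variable {k G : Type} [CommRing k] [Group G] {K : ℕ} {y e : G}

theorem exists_vecMul_generatorMatrix_eq (hc : Subgroup.closure {y, e} = ⊤) {v : Fin 1 → k[G]}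
    (hv : augmentation k G (v 0) = 0) :
    ∃ w, w ᵥ* generatorMatrix (of k G y) (of k G e) = v := by
  have hx : Subgroup.closure (Set.range ![y, e]) = ⊤ := by rw [Matrix.range_cons_cons_empty, hc]
  obtain ⟨c, hc⟩ := exists_sum_mul_of_sub_one_eq hx hv
  refine ⟨c, funext fun j ↦ ?_⟩
  rw [Subsingleton.elim j 0, ← hc]
  simp [generatorMatrix, Matrix.vecMul, dotProduct]

namespace IsBalancedPresentation

section

variable (h : IsBalancedPresentation K y e)
include h

theorem of_pow_three : of k G y ^ 3 = of k G e ^ 2 := by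
  rw [← map_pow, h.pow_three, map_pow]

theorem of_mul_pow_three : (of k G y * of k G e ^ K) ^ 3 = of k G e ^ 2 := by
  rw [← map_pow, ← map_mul, ← map_pow, h.mul_pow_three, map_pow]

theorem relatorMatrix_mul_generatorMatrix :
    relatorMatrix K (of k G y) (of k G e) * generatorMatrix (of k G y) (of k G e) = 0 :=
  _root_.relatorMatrix_mul_generatorMatrix h.of_pow_three h.of_mul_pow_three

theorem syzygyMatrix_mul_relatorMatrix :
    syzygyMatrix K (of k G y) (of k G e) * relatorMatrix K (of k G y) (of k G e) = 0 :=
  _root_.syzygyMatrix_mul_relatorMatrix h.of_pow_three h.of_mul_pow_three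

theorem exists_vecMul_relatorMatrix_eq {v : Fin 2 → k[G]}
    (hv : v ᵥ* generatorMatrix (of k G y) (of k G e) = 0) :
    ∃ w, w ᵥ* relatorMatrix K (of k G y) (of k G e) = v := by
  refine exists_vecMul_eq_of_affine (x := ![y, e]) ?_ ?_ ?_
  · rw [Matrix.range_cons_cons_empty, h.closure_eq_top]
  · intro M _ _ a ha
    have ha₀ : (∑ i ∈ Finset.range 3, of k G y ^ i) • a 0 + -(1 + of k G e) • a 1 = 0 := by
      simpa [relatorMatrix, -of_apply] using ha 0
    have ha₁ : (∑ i ∈ Finset.range 3, of k G (y * e ^ K) ^ i) • a 0 +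
        ((∑ i ∈ Finset.range 3, of k G (y * e ^ K) ^ i) * of k G y *
          (∑ i ∈ Finset.range K, of k G e ^ i) - (1 + of k G e)) • a 1 = 0 := by
      simpa [relatorMatrix, -of_apply] using ha 1
    have he : ∑ i ∈ Finset.range 2, of k G e ^ i = 1 + of k G e := by
      rw [Finset.sum_range_succ, Finset.sum_range_one, pow_zero, pow_one]
    have h₁ : affinePerm k y (a 0) ^ 3 = affinePerm k e (a 1) ^ 2 := by
      rw [neg_smul, ← sub_eq_add_neg, sub_eq_zero] at ha₀
      rw [affinePerm_pow, affinePerm_pow, h.pow_three, ha₀, he]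
    have h₂ : (affinePerm k y (a 0) * affinePerm k e (a 1) ^ K) ^ 3 = affinePerm k e (a 1) ^ 2 := by
      rw [sub_smul, ← add_sub_assoc, sub_eq_zero] at ha₁
      rw [affinePerm_pow, affinePerm_mul, affinePerm_pow, affinePerm_pow, h.mul_pow_three, he,
        smul_add, ← mul_smul, ← mul_smul, ha₁]
    obtain ⟨φ, hφy, hφe⟩ := h.exists_lift _ _ h₁ h₂
    exact ⟨φ, Fin.forall_fin_two.2 ⟨hφy, hφe⟩⟩
  · have := congrFun hv 0
    simpa [generatorMatrix, Matrix.vecMul, dotProduct] using this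

theorem closure_mul_pow_eq_top (hK : Odd K) : Subgroup.closure {y, y * e ^ K} = ⊤ := by
  have hy : y ∈ Subgroup.closure {y, y * e ^ K} := Subgroup.subset_closure (by simp)
  have hu : y * e ^ K ∈ Subgroup.closure {y, y * e ^ K} := Subgroup.subset_closure (by simp)
  have he2 : e ^ 2 ∈ Subgroup.closure {y, y * e ^ K} := h.pow_three ▸ pow_mem hy 3
  have he : e ∈ Subgroup.closure {y, y * e ^ K} := by
    obtain ⟨m, rfl⟩ := hK
    rw [← mul_mem_cancel_left (pow_mem he2 m), ← pow_mul, ← pow_succ]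
    exact (mul_mem_cancel_left hy).1 hu
  rw [← top_le_iff, ← h.closure_eq_top, Subgroup.closure_le]
  exact Set.pair_subset hy he

end

end IsBalancedPresentation

section NormMatrix

variable [Fintype G]

theorem augmentation_eq_zero_of_mul_normElement_eq_zero {v : k[G]} (hv : v * normElement k G = 0) :
    augmentation k G v = 0 := by
  rw [mul_normElement] at hv
  simpa [coeff_normElement] using congrArg (fun u : k[G] ↦ u.coeff 1) hv

theorem normMatrix_mul_syzygyMatrix :
    !![normElement k G] * syzygyMatrix K (of k G y) (of k G e) = 0 := by
  rw [syzygyMatrix, ← map_pow, ← map_mul]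
  ext1 i j
  rw [Subsingleton.elim i 0]
  fin_cases j <;>
    simp [Matrix.mul_apply, mul_sub, normElement_mul_of, -of_apply, -map_mul, -map_pow]

theorem generatorMatrix_mul_normMatrix :
    generatorMatrix (of k G y) (of k G e) * !![normElement k G] = 0 := by
  ext1 i j
  fin_cases i <;> simp [generatorMatrix, Matrix.mul_apply, mul_normElement, -of_apply]

theorem exists_vecMul_generatorMatrix_eq_of_vecMul_normMatrix_eq_zero
    (hc : Subgroup.closure {y, e} = ⊤) {v : Fin 1 → k[G]} (hv : v ᵥ* !![normElement k G] = 0) :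
    ∃ w, w ᵥ* generatorMatrix (of k G y) (of k G e) = v :=
  exists_vecMul_generatorMatrix_eq hc <| augmentation_eq_zero_of_mul_normElement_eq_zero <| by
    simpa [Matrix.vecMul, dotProduct] using congrFun hv 0

namespace IsBalancedPresentation

variable (h : IsBalancedPresentation K y e) (hK : Odd K)
include h hK

/- With `a = 0` this is exactness at the norm matrix; for `a ≠ 0` it shows that the row space of the
syzygy matrix is saturated. -/
theorem exists_eq_smul_normElement_add_smul {a : k} {v : Fin 1 → k[G]} {w : Fin 2 → k[G]}
    (hv : v ᵥ* syzygyMatrix K (of k G y) (of k G e) = a • w) :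
    ∃ u, v 0 = (v 0).coeff 1 • normElement k G + a • u := by
  refine _root_.exists_eq_smul_normElement_add_smul (h.closure_mul_pow_eq_top hK) a ?_
  have h₀ : v 0 * (1 - of k G y) = a • w 0 := by
    simpa [syzygyMatrix, Matrix.vecMul, dotProduct, -of_apply] using congrFun hv 0
  have h₁ : v 0 * (of k G (y * e ^ K) - 1) = a • w 1 := by
    simpa [syzygyMatrix, Matrix.vecMul, dotProduct, -of_apply] using congrFun hv 1
  rintro _ (rfl | rfl)
  · exact ⟨-w 0, by rw [smul_neg, ← h₀, ← mul_neg, neg_sub]⟩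
  · exact ⟨w 1, h₁⟩

theorem exists_vecMul_normMatrix_eq {v : Fin 1 → k[G]}
    (hv : v ᵥ* syzygyMatrix K (of k G y) (of k G e) = 0) :
    ∃ w, w ᵥ* !![normElement k G] = v := by
  obtain ⟨u, hu⟩ := h.exists_eq_smul_normElement_add_smul hK (hv.trans (zero_smul k 0).symm)
  refine ⟨fun _ ↦ (v 0).coeff 1 • 1, funext fun j ↦ ?_⟩
  rw [zero_smul, add_zero] at hu
  rw [Subsingleton.elim j 0]
  simp [Matrix.vecMul, dotProduct, hu.symm]

end IsBalancedPresentation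

end NormMatrix

namespace IsBalancedPresentation

variable [Finite G] (h : IsBalancedPresentation K y e) (hK : Odd K)
include h hK

theorem exists_vecMul_syzygyMatrix_eq_of_smul [IsDomain k] {a : k} (ha : a ≠ 0)
    {v : Fin 1 → k[G]} {w : Fin 2 → k[G]}
    (hv : v ᵥ* syzygyMatrix K (of k G y) (of k G e) = a • w) :
    ∃ u, u ᵥ* syzygyMatrix K (of k G y) (of k G e) = w := by
  have := Fintype.ofFinite G
  obtain ⟨u, hu⟩ := h.exists_eq_smul_normElement_add_smul hK hv
  have hv' : v = (fun _ ↦ (v 0).coeff 1 • 1) ᵥ* !![normElement k G] + a • fun _ ↦ u := by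
    ext1 j
    rw [Subsingleton.elim j 0]
    simpa [Matrix.vecMul, dotProduct] using hu
  refine ⟨fun _ ↦ u, smul_right_injective _ ha ?_⟩
  change a • _ = a • _
  rw [← hv, ← Matrix.smul_vecMul]
  conv_rhs => rw [hv', Matrix.add_vecMul, Matrix.vecMul_vecMul, normMatrix_mul_syzygyMatrix,
    Matrix.vecMul_zero, zero_add]

theorem exists_vecMul_syzygyMatrix_eq [IsDomain k] {v : Fin 2 → k[G]}
    (hv : v ᵥ* relatorMatrix K (of k G y) (of k G e) = 0) :
    ∃ w, w ᵥ* syzygyMatrix K (of k G y) (of k G e) = v := by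
  have := Fintype.ofFinite G
  let A₀ := generatorMatrix (of k G y) (of k G e)
  let A₁ := relatorMatrix K (of k G y) (of k G e)
  let A₂ := syzygyMatrix K (of k G y) (of k G e)
  let A₃ : Matrix (Fin 1) (Fin 1) k[G] := !![normElement k G]
  refine ker_le_range_of_finrank_add_eq (k := k) (f₀ := A₀.vecMulLinear.restrictScalars k)
    (f₁ := A₁.vecMulLinear.restrictScalars k) (f₂ := A₂.vecMulLinear.restrictScalars k)
    (f₃ := A₃.vecMulLinear.restrictScalars k) ?_ ?_ ?_ ?_ ?_ ?_ hv
  · exact add_comm _ _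
  · exact ker_vecMulLinear_eq_range k h.relatorMatrix_mul_generatorMatrix
      fun v ↦ h.exists_vecMul_relatorMatrix_eq
  · exact ker_vecMulLinear_eq_range k normMatrix_mul_syzygyMatrix
      fun v ↦ h.exists_vecMul_normMatrix_eq hK
  · exact ker_vecMulLinear_eq_range k generatorMatrix_mul_normMatrix
      fun v ↦ exists_vecMul_generatorMatrix_eq_of_vecMul_normMatrix_eq_zero h.closure_eq_top
  · refine LinearMap.ext fun v ↦ (Matrix.vecMul_vecMul v A₂ A₁).trans ?_
    rw [h.syzygyMatrix_mul_relatorMatrix, Matrix.vecMul_zero, LinearMap.zero_apply]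
  · rintro a v ha ⟨w, hw⟩
    exact h.exists_vecMul_syzygyMatrix_eq_of_smul hK ha hw

end IsBalancedPresentation

end BalancedPresentation

section PeriodicBoundary

/-- The ranks `1, 2, 2, 1` of the free modules of the resolution, repeated with period `4`. -/
def boundaryRank : ℕ → ℕ
  | 0 => 1
  | 1 => 2
  | 2 => 2
  | 3 => 1
  | n + 4 => boundaryRank n

/-- The boundary matrices of the `4`-periodic resolution attached to the presentation
`⟨y, e | y³ = e² = (y e^K)³⟩`; the element `N` is the norm of the group ring. -/
def boundaryMatrix {R : Type} [Ring R] (K : ℕ) (y e N : R) :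
    ∀ n, Matrix (Fin (boundaryRank (n + 1))) (Fin (boundaryRank n)) R
  | 0 => generatorMatrix y e
  | 1 => relatorMatrix K y e
  | 2 => syzygyMatrix K y e
  | 3 => !![N]
  | n + 4 => boundaryMatrix K y e N n

theorem boundaryMatrix_map {R S : Type} [Ring R] [Ring S] (f : R →+* S) (K : ℕ) (y e N : R) :
    ∀ n, (boundaryMatrix K y e N n).map f = boundaryMatrix K (f y) (f e) (f N) n
  | 0 => generatorMatrix_map f
  | 1 => relatorMatrix_map f
  | 2 => syzygyMatrix_map f
  | 3 => by
    ext i j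
    fin_cases i
    fin_cases j
    rfl
  | n + 4 => boundaryMatrix_map f K y e N n

theorem generatorMatrix_map_augmentation {k G : Type} [CommRing k] [Group G] (y e : G) :
    (generatorMatrix (of k G y) (of k G e)).map (augmentation k G) = 0 :=
  (generatorMatrix_map (augmentation k G).toRingHom).trans <| by
    simp [generatorMatrix_one_one, -of_apply]

theorem IsBalancedPresentation.isFreeResolution {k G : Type} [CommRing k] [IsDomain k] [Group G]
    [Fintype G] {K : ℕ} {y e : G} (h : IsBalancedPresentation K y e) (hK : Odd K) :
    IsFreeResolution (ι := fun n ↦ Fin (boundaryRank n))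
      (boundaryMatrix K (of k G y) (of k G e) (normElement k G)) where
  nonempty := inferInstanceAs (Nonempty (Fin 1))
  mul_eq_zero := by
    intro n
    induction n using boundaryRank.induct with
    | case1 => exact h.relatorMatrix_mul_generatorMatrix
    | case2 => exact h.syzygyMatrix_mul_relatorMatrix
    | case3 => exact normMatrix_mul_syzygyMatrix
    | case4 => exact generatorMatrix_mul_normMatrix
    | case5 _ ih => exact ih
  exact := by
    intro n
    induction n using boundaryRank.induct with
    | case1 => exact fun _ ↦ h.exists_vecMul_relatorMatrix_eq
    | case2 => exact fun _ ↦ h.exists_vecMul_syzygyMatrix_eq hK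
    | case3 => exact fun _ ↦ h.exists_vecMul_normMatrix_eq hK
    | case4 =>
      exact fun _ ↦ exists_vecMul_generatorMatrix_eq_of_vecMul_normMatrix_eq_zero h.closure_eq_top
    | case5 _ ih => exact ih
  augmentation_row i := Finset.sum_eq_zero fun j _ ↦
    congrFun (congrFun (generatorMatrix_map_augmentation y e) i) j
  exact_augmentation _ hv :=
    exists_vecMul_generatorMatrix_eq h.closure_eq_top ((Fin.sum_univ_one _).symm.trans hv)

end PeriodicBoundary

section AugmentedBoundary

open scoped Matrix

theorem boundaryMatrix_one_one_eq_zero {R : Type} [Ring R] (K : ℕ) (N : R) :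
    ∀ n, Even n → boundaryMatrix K 1 1 N n = 0
  | 0, _ => generatorMatrix_one_one
  | 2, _ => syzygyMatrix_one_one
  | 1, h | 3, h => absurd h (by decide)
  | n + 4, h => boundaryMatrix_one_one_eq_zero K N n (by grind)

theorem det_relatorMatrix_one_one {R : Type} [CommRing R] (K : ℕ) :
    (relatorMatrix K (1 : R) 1).det = 9 * K := by
  rw [relatorMatrix_one_one, Matrix.det_fin_two_of]
  ring

theorem vecMul_boundaryMatrix_one_one_injective {R : Type} [CommRing R] [IsDomain R] {K : ℕ} {N : R}
    (hK : (9 * K : R) ≠ 0) (hN : N ≠ 0) :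
    ∀ n, Odd n → Function.Injective (boundaryMatrix K 1 1 N n).vecMulLinear
  | 1, _ => (injective_iff_map_eq_zero _).2 fun _ hv ↦
    Matrix.eq_zero_of_vecMul_eq_zero ((det_relatorMatrix_one_one K).trans_ne hK) hv
  | 3, _ => (injective_iff_map_eq_zero _).2 fun _ hv ↦
    Matrix.eq_zero_of_vecMul_eq_zero ((Matrix.det_fin_one_of N).trans_ne hN) hv
  | 0, h | 2, h => absurd h (by decide)
  | n + 4, h => vecMul_boundaryMatrix_one_one_injective hK hN n (by grind)

theorem vecMul_relatorMatrix_one_one {R : Type} [CommRing R] (K : ℕ) (w : Fin 2 → R) :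
    w ᵥ* relatorMatrix K (1 : R) 1 =
      ![3 * (w 0 + w 1), 3 * K * w 1 - 2 * (w 0 + w 1)] := by
  rw [relatorMatrix_one_one]
  refine funext <| Fin.forall_fin_two.2 ⟨?_, ?_⟩ <;>
    simp only [Matrix.vecMul, dotProduct, Fin.sum_univ_two, Matrix.of_apply, Matrix.cons_val] <;>
    ring

theorem exists_ker_eq_range_relatorMatrix_one_one (K : ℕ) :
    ∃ π : (Fin 2 → ℤ) →ₗ[ℤ] ZMod (9 * K), Function.Surjective π ∧
      LinearMap.ker π = LinearMap.range (relatorMatrix K (1 : ℤ) 1).vecMulLinear := by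
  let f : (Fin 2 → ℤ) →ₗ[ℤ] ℤ := 2 • LinearMap.proj 0 + 3 • LinearMap.proj 1
  have hf (v : Fin 2 → ℤ) : f v = 2 * v 0 + 3 * v 1 := by simp [f]
  refine ⟨(Int.castAddHom (ZMod (9 * K))).toIntLinearMap ∘ₗ f,
    ZMod.intCast_surjective.comp fun a ↦ ⟨![-a, a], ?_⟩, ?_⟩
  · simp only [hf, Matrix.cons_val]
    ring
  ext v
  change ((f v : ℤ) : ZMod (9 * K)) = 0 ↔ ∃ w, w ᵥ* relatorMatrix K (1 : ℤ) 1 = v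
  rw [ZMod.intCast_zmod_eq_zero_iff_dvd]
  simp only [vecMul_relatorMatrix_one_one, hf]
  constructor
  · rintro ⟨t, ht⟩
    push_cast at ht
    refine ⟨![v 0 + v 1 - (3 * K + 1) * t, t], funext <| Fin.forall_fin_two.2 ⟨?_, ?_⟩⟩ <;>
      simp only [Matrix.cons_val] <;> linarith
  · rintro ⟨w, rfl⟩
    refine ⟨w 1, ?_⟩
    simp only [Matrix.cons_val]
    push_cast
    ring

theorem exists_ker_eq_range_normMatrix (N : ℕ) :
    ∃ π : (Fin 1 → ℤ) →ₗ[ℤ] ZMod N, Function.Surjective π ∧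
      LinearMap.ker π = LinearMap.range (!![(N : ℤ)] : Matrix (Fin 1) (Fin 1) ℤ).vecMulLinear := by
  refine ⟨(Int.castAddHom (ZMod N)).toIntLinearMap ∘ₗ LinearMap.proj 0,
    ZMod.intCast_surjective.comp (Function.surjective_eval 0), ?_⟩
  ext v
  change ((v 0 : ℤ) : ZMod N) = 0 ↔ ∃ w, w ᵥ* !![(N : ℤ)] = v
  rw [ZMod.intCast_zmod_eq_zero_iff_dvd]
  constructor
  · rintro ⟨t, ht⟩
    refine ⟨fun _ ↦ t, funext fun j ↦ ?_⟩
    rw [Subsingleton.elim j 0, ht]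
    simp [Matrix.vecMul, dotProduct, mul_comm]
  · rintro ⟨w, rfl⟩
    exact ⟨w 0, by simp [Matrix.vecMul, dotProduct, mul_comm]⟩

theorem exists_ker_eq_range_boundaryMatrix_of_mod_four_eq_one (K N : ℕ) :
    ∀ n, n % 4 = 1 → ∃ π : (Fin (boundaryRank n) → ℤ) →ₗ[ℤ] ZMod (9 * K), Function.Surjective π ∧
      LinearMap.ker π = LinearMap.range (boundaryMatrix K 1 1 (N : ℤ) n).vecMulLinear
  | 1, _ => exists_ker_eq_range_relatorMatrix_one_one K
  | 0, h | 2, h | 3, h => absurd h (by decide)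
  | n + 4, h => exists_ker_eq_range_boundaryMatrix_of_mod_four_eq_one K N n (by omega)

theorem exists_ker_eq_range_boundaryMatrix_of_mod_four_eq_three (K N : ℕ) :
    ∀ n, n % 4 = 3 → ∃ π : (Fin (boundaryRank n) → ℤ) →ₗ[ℤ] ZMod N, Function.Surjective π ∧
      LinearMap.ker π = LinearMap.range (boundaryMatrix K 1 1 (N : ℤ) n).vecMulLinear
  | 3, _ => exists_ker_eq_range_normMatrix N
  | 0, h | 1, h | 2, h => absurd h (by decide)
  | n + 4, h => exists_ker_eq_range_boundaryMatrix_of_mod_four_eq_three K N n (by omega)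

section Homology

variable {G : Type} [Group G] {K : ℕ} {y e : G}

theorem boundaryMatrix_map_augmentation [Fintype G] (k : Type) [CommRing k] (K : ℕ) (y e : G)
    (n : ℕ) :
    (boundaryMatrix K (of k G y) (of k G e) (normElement k G) n).map (augmentation k G) =
      boundaryMatrix K 1 1 (Nat.card G : k) n :=
  (boundaryMatrix_map (augmentation k G).toRingHom K _ _ _ n).trans <| by
    simp [augmentation_normElement, -of_apply]

namespace IsBalancedPresentation

variable [Finite G] (h : IsBalancedPresentation K y e) (hK : Odd K)
include h hK

theorem nonempty_groupHomologyTriv_zero_addEquiv :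
    Nonempty (groupHomologyTriv G ℤ 0 ≃+ ℤ) := by
  have := Fintype.ofFinite G
  refine (h.isFreeResolution hK).nonempty_groupHomologyTriv_zero_addEquiv
    (LinearMap.proj (0 : Fin 1)) (Function.surjective_eval (0 : Fin 1)) ?_
  rw [boundaryMatrix_map_augmentation, boundaryMatrix_one_one_eq_zero _ _ _ Even.zero]
  ext (v : Fin 1 → ℤ)
  change v 0 = 0 ↔ ∃ w, w ᵥ* (0 : Matrix (Fin 2) (Fin 1) ℤ) = v
  simp only [Matrix.vecMul_zero, exists_const]
  exact ⟨fun hv ↦ (funext <| Fin.forall_fin_one.2 hv).symm, fun hv ↦ (congrFun hv 0).symm⟩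

theorem subsingleton_groupHomologyTriv {n : ℕ} (hn : 0 < n) (hn' : Even n) :
    Subsingleton (groupHomologyTriv G ℤ n) := by
  obtain ⟨n, rfl⟩ := Nat.exists_eq_succ_of_ne_zero hn.ne'
  have := Fintype.ofFinite G
  refine (h.isFreeResolution hK).subsingleton_groupHomologyTriv_succ n ?_
  rw [boundaryMatrix_map_augmentation]
  refine vecMul_boundaryMatrix_one_one_injective ?_ (Nat.cast_ne_zero.2 Nat.card_pos.ne') n ?_
  · exact mul_ne_zero (by decide) (Nat.cast_ne_zero.2 hK.pos.ne')
  · grind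

theorem nonempty_groupHomologyTriv_addEquiv_zmod_nine_mul {n : ℕ} (hn : n % 4 = 1) :
    Nonempty (groupHomologyTriv G ℤ n ≃+ ZMod (9 * K)) := by
  obtain ⟨n, rfl⟩ : ∃ m, n = m + 1 := ⟨n - 1, by omega⟩
  obtain ⟨π, hπ, hker⟩ :=
    exists_ker_eq_range_boundaryMatrix_of_mod_four_eq_one K (Nat.card G) _ hn
  have := Fintype.ofFinite G
  refine (h.isFreeResolution hK).nonempty_groupHomologyTriv_succ_addEquiv n ?_ π hπ ?_
  · rw [boundaryMatrix_map_augmentation, boundaryMatrix_one_one_eq_zero _ _ n (by grind)]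
  · rw [boundaryMatrix_map_augmentation, hker]

theorem nonempty_groupHomologyTriv_addEquiv_zmod_card {n : ℕ} (hn : n % 4 = 3) :
    Nonempty (groupHomologyTriv G ℤ n ≃+ ZMod (Nat.card G)) := by
  obtain ⟨n, rfl⟩ : ∃ m, n = m + 1 := ⟨n - 1, by omega⟩
  obtain ⟨π, hπ, hker⟩ :=
    exists_ker_eq_range_boundaryMatrix_of_mod_four_eq_three K (Nat.card G) _ hn
  have := Fintype.ofFinite G
  refine (h.isFreeResolution hK).nonempty_groupHomologyTriv_succ_addEquiv n ?_ π hπ ?_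
  · rw [boundaryMatrix_map_augmentation, boundaryMatrix_one_one_eq_zero _ _ n (by grind)]
  · rw [boundaryMatrix_map_augmentation, hker]

end IsBalancedPresentation

end Homology

end AugmentedBoundary

section TetrahedralRelations

/-- The relations `p² = (pq)² = q²`, `z p z⁻¹ = q`, `z q z⁻¹ = pq` of the presentation of a
generalized binary tetrahedral group, without the relation that makes `z` a torsion element. They
are kept apart because they also hold for `z p²` in place of `z`. -/
structure TetrahedralRel {H : Type} [Group H] (p q z : H) : Prop where
  sq_eq_sq : p ^ 2 = q ^ 2
  mul_sq : (p * q) ^ 2 = q ^ 2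
  conj_left : z * p * z⁻¹ = q
  conj_right : z * q * z⁻¹ = p * q

variable {H : Type} [Group H] {p q y z e : H} {K N j : ℕ}

theorem mul_pow_three_eq_conj_mul_conj_mul (y p : H) :
    (y * p) ^ 3 = (y * p * y⁻¹) * (y * (y * p * y⁻¹) * y⁻¹) * y ^ 3 * p := by
  rw [pow_three, pow_three]
  group

theorem mul_pow_three_mul_pow_three_iff (h : y ^ 3 = e ^ 2) :
    (y * e ^ (3 * K)) ^ 3 = y ^ 3 * (e ^ (3 * K)) ^ 2 ↔ (y * e ^ K) ^ 3 = e ^ 2 := by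
  have hcomm : Commute (y * e ^ K) ((e ^ 2) ^ K) :=
    ((h ▸ Commute.self_pow y 3).mul_left
      ((Commute.pow_self e K).pow_right 2)).pow_right K
  have hpow : (y * e ^ (3 * K)) ^ 3 = (y * e ^ K) ^ 3 * (e ^ (3 * K)) ^ 2 := by
    rw [show y * e ^ (3 * K) = y * e ^ K * (e ^ 2) ^ K by
        rw [mul_assoc, ← pow_mul, ← pow_add]; congr 2; ring,
      hcomm.mul_pow, ← pow_mul, ← pow_mul, ← pow_mul]
    congr 2
    ring
  rw [hpow, mul_left_inj, h]

theorem conj_conj_conj (y p : H) :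
    y * (y * (y * p * y⁻¹) * y⁻¹) * y⁻¹ = y ^ 3 * p * (y ^ 3)⁻¹ := by
  rw [pow_three]
  group

namespace TetrahedralRel

section

variable (h : TetrahedralRel p q z)
include h

theorem left_mul_right_mul_left : p * q * p = q := by
  have := h.mul_sq
  rw [sq, sq, ← mul_assoc] at this
  exact mul_right_cancel this

theorem right_mul_left_mul_right : q * p * q = p := by
  have := h.mul_sq.trans h.sq_eq_sq.symm
  rw [sq, sq, mul_assoc] at this
  exact (mul_assoc q p q).trans (mul_left_cancel this)

theorem conj_right_left : q * p * q⁻¹ = p⁻¹ := by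
  rw [mul_inv_eq_iff_eq_mul, eq_inv_mul_iff_mul_eq, ← mul_assoc, h.left_mul_right_mul_left]

theorem pow_four : p ^ 4 = 1 := by
  have hinv : q * p ^ 2 * q⁻¹ = (p ^ 2)⁻¹ := by
    rw [← conj_pow, h.conj_right_left, inv_pow]
  rw [h.sq_eq_sq, ← pow_succ', mul_inv_eq_of_eq_mul (pow_succ q 2), ← h.sq_eq_sq,
    eq_inv_iff_mul_eq_one, ← pow_add] at hinv
  exact hinv

theorem commute_sq : Commute (p ^ 2) z := by
  refine (mul_inv_eq_iff_eq_mul.1 ?_).symm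
  rw [← conj_pow, h.conj_left, h.sq_eq_sq]

theorem conj_conj_left : z * (z * p * z⁻¹) * z⁻¹ = p * q := by
  rw [h.conj_left, h.conj_right]

theorem commute_pow_three : Commute (z ^ 3) p := by
  refine mul_inv_eq_iff_eq_mul.1 ?_
  rw [← conj_conj_conj, h.conj_conj_left, ← conj_mul, h.conj_left, h.conj_right, ← mul_assoc,
    h.right_mul_left_mul_right]

theorem mul_pow_three : (z * p) ^ 3 = z ^ 3 * p ^ 2 := by
  rw [mul_pow_three_eq_conj_mul_conj_mul, h.conj_conj_left, h.conj_left, ← mul_assoc,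
    h.right_mul_left_mul_right, ← h.commute_pow_three.eq, mul_assoc, sq]

theorem mul_sq_right : TetrahedralRel p q (z * p ^ 2) := by
  have hconj {x : H} (hx : Commute (p ^ 2) x) : z * p ^ 2 * x * (z * p ^ 2)⁻¹ = z * x * z⁻¹ := by
    rw [mul_assoc z, hx.eq]
    group
  refine ⟨h.sq_eq_sq, h.mul_sq, ?_, ?_⟩
  · rw [hconj (Commute.pow_self p 2), h.conj_left]
  · rw [hconj (h.sq_eq_sq ▸ Commute.pow_self q 2), h.conj_right]

theorem sq_pow_of_odd (hN : Odd N) : (p ^ 2) ^ N = p ^ 2 := by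
  obtain ⟨j, rfl⟩ := hN
  rw [← pow_mul, show 2 * (2 * j + 1) = 4 * j + 2 by ring, pow_add, pow_mul, h.pow_four, one_pow,
    one_mul]

theorem mul_sq_pow_of_odd (hN : Odd N) : (z * p ^ 2) ^ N = z ^ N * p ^ 2 := by
  rw [h.commute_sq.symm.mul_pow, h.sq_pow_of_odd hN]

theorem mul_sq_mul_sq : z * p ^ 2 * p ^ 2 = z := by
  rw [mul_assoc, ← pow_add, h.pow_four, mul_one]

theorem subset_of_mem {S : Subgroup H} (hp : p ∈ S) (hz : z * p ^ 2 ∈ S) :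
    {p, q, z} ⊆ (S : Set H) := by
  have hzS : z ∈ S := h.mul_sq_mul_sq ▸ mul_mem hz (pow_mem hp 2)
  have hqS : q ∈ S := h.conj_left ▸ mul_mem (mul_mem hzS hp) (inv_mem hzS)
  simp [Set.insert_subset_iff, hp, hqS, hzS]

end

theorem of_mul_pow_three (hsq : Commute (p ^ 2) y) (hy : Commute (y ^ 3) p)
    (h : (y * p) ^ 3 = y ^ 3 * p ^ 2) : TetrahedralRel p (y * p * y⁻¹) y := by
  have hconj {a b c : H} (habc : a * b = c) : y * a * y⁻¹ * (y * b * y⁻¹) = y * c * y⁻¹ := by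
    rw [← habc, conj_mul]
  have hqr : (y * p * y⁻¹) * (y * (y * p * y⁻¹) * y⁻¹) = p := by
    rw [mul_pow_three_eq_conj_mul_conj_mul, mul_assoc _ (y ^ 3), hy.eq, ← mul_assoc,
      (hsq.symm.pow_left 3).eq] at h
    exact mul_right_cancel ((mul_right_cancel h).trans (sq p))
  have hp : y * (y * (y * p * y⁻¹) * y⁻¹) * y⁻¹ = p := by
    rw [conj_conj_conj, hy.eq, mul_inv_cancel_right]
  have hpq : p * (y * p * y⁻¹) = y * (y * p * y⁻¹) * y⁻¹ := by
    have := hconj (hconj hqr)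
    rwa [hp] at this
  have hsq' : p ^ 2 = (y * p * y⁻¹) ^ 2 := by
    rw [conj_pow, ← hsq.eq, mul_inv_cancel_right]
  refine ⟨hsq', ?_, rfl, hpq.symm⟩
  rw [hpq, conj_pow, ← hsq', ← hsq.eq, mul_inv_cancel_right]

theorem of_pow_three_eq_sq (h₁ : y ^ 3 = e ^ 2) (h₂ : (y * e ^ K) ^ 3 = e ^ 2) :
    TetrahedralRel (e ^ (3 * K)) (y * e ^ (3 * K) * y⁻¹) y := by
  have hy : Commute (e ^ 2) y := h₁ ▸ Commute.pow_self y 3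
  have he : Commute (y ^ 3) e := h₁ ▸ Commute.pow_self e 2
  refine of_mul_pow_three ?_ (he.pow_right _) ((mul_pow_three_mul_pow_three_iff h₁).2 h₂)
  rw [pow_right_comm]
  exact hy.pow_left _

section

variable (h : TetrahedralRel p q y) (hp : y ^ (9 * K) = p ^ 2) (hj : 3 * K = 2 * j + 1)
include h hp hj

theorem mul_inv_pow_sq : (p * (y ^ (3 * j))⁻¹) ^ 2 = y ^ 3 := by
  have hcomm : Commute p (y ^ (3 * j))⁻¹ := by
    rw [pow_mul]
    exact (h.commute_pow_three.symm.pow_right j).inv_right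
  rw [hcomm.mul_pow, ← hp, inv_pow, ← pow_mul, mul_inv_eq_iff_eq_mul, ← pow_add]
  congr 1
  omega

theorem mul_inv_pow_pow_three_mul : (p * (y ^ (3 * j))⁻¹) ^ (3 * K) = p := by
  rw [hj, pow_succ, pow_mul, h.mul_inv_pow_sq hp hj, ← mul_assoc, ← pow_mul,
    (pow_mul y 3 j ▸ h.commute_pow_three.pow_left j : Commute (y ^ (3 * j)) p).eq,
    mul_inv_cancel_right]

theorem mul_mul_inv_pow_pow_three :
    (y * (p * (y ^ (3 * j))⁻¹) ^ K) ^ 3 = (p * (y ^ (3 * j))⁻¹) ^ 2 := by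
  rw [← mul_pow_three_mul_pow_three_iff (h.mul_inv_pow_sq hp hj).symm,
    h.mul_inv_pow_pow_three_mul hp hj, h.mul_pow_three]

end

end TetrahedralRel

end TetrahedralRelations

section TetrahedralPresentation

/-- `G` is presented by generators `p`, `q`, `z` subject to `TetrahedralRel p q z` and `z ^ N = 1`,
expressed through the universal property of the presentation. For `N = 3 ^ s` these are the
generalized binary tetrahedral groups. -/
structure IsTetrahedralPresentation {G : Type} [Group G] (N : ℕ) (p q z : G) : Prop extends
    TetrahedralRel p q z where
  pow_eq_one : z ^ N = 1
  closure_eq_top : Subgroup.closure {p, q, z} = ⊤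
  exists_lift : ∀ {H : Type} [Group H] (p' q' z' : H), TetrahedralRel p' q' z' → z' ^ N = 1 →
    ∃ φ : G →* H, φ p = p' ∧ φ q = q' ∧ φ z = z'

namespace IsTetrahedralPresentation

variable {G : Type} [Group G] {K N j : ℕ} {p q z : G}

theorem isBalancedPresentation (h : IsTetrahedralPresentation (9 * K) p q z)
    (hj : 3 * K = 2 * j + 1) :
    IsBalancedPresentation K (z * p ^ 2) (p * ((z * p ^ 2) ^ (3 * j))⁻¹) := by
  have hodd : Odd (9 * K) := ⟨3 * j + 1, by omega⟩
  have hy : TetrahedralRel p q (z * p ^ 2) := h.mul_sq_right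
  have hp : (z * p ^ 2) ^ (9 * K) = p ^ 2 := by
    rw [h.mul_sq_pow_of_odd hodd, h.pow_eq_one, one_mul]
  refine ⟨(hy.mul_inv_pow_sq hp hj).symm, hy.mul_mul_inv_pow_pow_three hp hj, ?_, ?_⟩
  · rw [eq_top_iff, ← h.closure_eq_top, Subgroup.closure_le]
    have hpow := pow_mem (Subgroup.mem_closure_of_mem (Set.mem_insert_of_mem (z * p ^ 2)
      (Set.mem_singleton (p * ((z * p ^ 2) ^ (3 * j))⁻¹)))) (3 * K)
    rw [hy.mul_inv_pow_pow_three_mul hp hj] at hpow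
    exact h.subset_of_mem hpow (Subgroup.mem_closure_of_mem (Set.mem_insert _ _))
  · intro H _ y' e' h₁ h₂
    have h' := TetrahedralRel.of_pow_three_eq_sq h₁ h₂
    have hp' : y' ^ (9 * K) = (e' ^ (3 * K)) ^ 2 := by
      rw [← pow_right_comm, ← h₁, ← pow_mul]
      congr 1
      ring
    obtain ⟨φ, hφp, -, hφz⟩ := h.exists_lift _ _ _ h'.mul_sq_right <| by
      rw [h'.mul_sq_pow_of_odd hodd, hp', ← pow_add, h'.pow_four]
    have hφy : φ (z * p ^ 2) = y' := by rw [map_mul, map_pow, hφp, hφz, h'.mul_sq_mul_sq]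
    refine ⟨φ, hφy, ?_⟩
    rw [map_mul, map_inv, map_pow, hφy, hφp, pow_mul y', h₁, ← pow_mul, hj, pow_succ',
      mul_inv_cancel_right]

end IsTetrahedralPresentation

end TetrahedralPresentation

section Order

open scoped Pointwise

theorem exists_fin_pow_eq_zpow {G : Type*} [Group G] {x : G} {N : ℕ} (hN : 0 < N) (hx : x ^ N = 1)
    (k : ℤ) : ∃ i : Fin N, x ^ (i : ℕ) = x ^ k := by
  have hN' : (0 : ℤ) < N := by exact_mod_cast hN
  refine ⟨⟨(k % N).toNat, (Int.toNat_lt (k.emod_nonneg hN'.ne')).2 (k.emod_lt_of_pos hN')⟩, ?_⟩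
  rw [← zpow_natCast, Int.toNat_of_nonneg (k.emod_nonneg hN'.ne'), ← zpow_eq_zpow_emod' k hx]

theorem TetrahedralRel.exists_zpow_mul_zpow_mul_zpow_eq {G : Type} [Group G] {p q z : G}
    (h : TetrahedralRel p q z) (hc : Subgroup.closure {p, q, z} = ⊤) (g : G) :
    ∃ k i j : ℤ, z ^ k * (p ^ i * q ^ j) = g := by
  open Subgroup in
  have hq : zpowers q ≤ normalizer (zpowers p) := by
    rw [zpowers_le, mem_normalizer_iff_map_conj_eq, MonoidHom.map_zpowers]
    change zpowers (q * p * q⁻¹) = _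
    rw [h.conj_right_left, zpowers_inv]
  have hz : zpowers z ≤ normalizer (zpowers p ⊔ zpowers q : Subgroup G) := by
    have hp : p ∈ zpowers q ⊔ zpowers (p * q) := by
      simpa using mul_mem (mem_sup_right (mem_zpowers (p * q)))
        (mem_sup_left (inv_mem (mem_zpowers q)))
    rw [zpowers_le, mem_normalizer_iff_map_conj_eq, Subgroup.map_sup, MonoidHom.map_zpowers,
      MonoidHom.map_zpowers]
    change zpowers (z * p * z⁻¹) ⊔ zpowers (z * q * z⁻¹) = _
    rw [h.conj_left, h.conj_right]
    refine le_antisymm (sup_le le_sup_right ?_) (sup_le ?_ le_sup_left)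
    · exact zpowers_le.2
        (mul_mem (mem_sup_left (mem_zpowers p)) (mem_sup_right (mem_zpowers q)))
    · exact zpowers_le.2 hp
  have htop : zpowers z ⊔ (zpowers p ⊔ zpowers q) = ⊤ := by
    rw [eq_top_iff, ← hc, closure_le, Set.insert_subset_iff, Set.pair_subset_iff]
    exact ⟨mem_sup_right (mem_sup_left (mem_zpowers p)),
      mem_sup_right (mem_sup_right (mem_zpowers q)), mem_sup_left (mem_zpowers z)⟩
  have hg : g ∈ (zpowers z : Set G) * (zpowers p * zpowers q) := by
    rw [← coe_mul_of_right_le_normalizer_left _ _ hq, ← coe_mul_of_left_le_normalizer_right _ _ hz,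
      htop]
    exact mem_top g
  obtain ⟨_, ⟨k, rfl⟩, _, ⟨_, ⟨i, rfl⟩, _, ⟨j, rfl⟩, rfl⟩, rfl⟩ := hg
  exact ⟨k, i, j, rfl⟩

theorem exists_specialLinearGroup_tetrahedralRel :
    ∃ p q z : Matrix.SpecialLinearGroup (Fin 2) (ZMod 3), TetrahedralRel p q z ∧ z ^ 3 = 1 ∧
      Function.Injective fun i : Fin 4 × Fin 2 ↦ p ^ (i.1 : ℕ) * q ^ (i.2 : ℕ) :=
  ⟨⟨!![0, -1; 1, 0], by decide⟩, ⟨!![1, 1; 1, -1], by decide⟩, ⟨!![1, 1; 0, 1], by decide⟩,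
    ⟨by decide, by decide, Subtype.ext (by decide), Subtype.ext (by decide)⟩, by decide, by decide⟩

namespace IsTetrahedralPresentation

variable {G : Type} [Group G] {N : ℕ} {p q z : G}

theorem surjective_pow_mul_pow_mul_pow (h : IsTetrahedralPresentation N p q z) (hN : 0 < N) :
    Function.Surjective fun t : Fin N × Fin 4 × Fin 2 ↦
      z ^ (t.1 : ℕ) * (p ^ (t.2.1 : ℕ) * q ^ (t.2.2 : ℕ)) := by
  intro g
  obtain ⟨k, i, j, rfl⟩ := h.exists_zpow_mul_zpow_mul_zpow_eq h.closure_eq_top g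
  have hq : q ^ j = p ^ (2 * (j / 2)) * q ^ (j % 2) := by
    rw [zpow_mul, zpow_ofNat, h.sq_eq_sq, ← zpow_natCast, ← zpow_mul, ← zpow_add, Nat.cast_ofNat,
      Int.mul_ediv_add_emod]
  obtain ⟨k', hk⟩ := exists_fin_pow_eq_zpow hN h.pow_eq_one k
  obtain ⟨i', hi⟩ := exists_fin_pow_eq_zpow (by decide) h.pow_four (i + 2 * (j / 2))
  obtain ⟨j', hj⟩ : ∃ j' : Fin 2, q ^ (j' : ℕ) = q ^ (j % 2) := by
    obtain hj | hj := Int.emod_two_eq_zero_or_one j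
    · exact ⟨0, by simp [hj]⟩
    · exact ⟨1, by simp [hj]⟩
  exact ⟨⟨k', i', j'⟩, by simp only [hk, hi, hj, hq, zpow_add, mul_assoc]⟩

theorem injective_pow_mul_pow_mul_pow (h : IsTetrahedralPresentation N p q z) (hN : 3 ∣ N) :
    Function.Injective fun t : Fin N × Fin 4 × Fin 2 ↦
      z ^ (t.1 : ℕ) * (p ^ (t.2.1 : ℕ) * q ^ (t.2.2 : ℕ)) := by
  rintro ⟨k, ij⟩ ⟨k', ij'⟩ heq
  obtain ⟨χ, hχp, hχq, hχz⟩ := h.exists_lift (1 : Multiplicative (ZMod N)) 1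
    (Multiplicative.ofAdd 1) ⟨by simp, by simp, by simp, by simp⟩ (by simp [← ofAdd_nsmul])
  have hχ := congrArg χ heq
  simp only [map_mul, map_pow, hχp, hχq, hχz, one_pow, mul_one, ← ofAdd_nsmul, nsmul_eq_mul,
    EmbeddingLike.apply_eq_iff_eq, ZMod.natCast_eq_natCast_iff', Nat.mod_eq_of_lt k.isLt,
    Nat.mod_eq_of_lt k'.isLt, Fin.val_inj] at hχ
  subst hχ
  obtain ⟨p', q', z', hrel, hz', hinj⟩ := exists_specialLinearGroup_tetrahedralRel
  obtain ⟨ψ, hψp, hψq, -⟩ := h.exists_lift p' q' z' hrel <| by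
    obtain ⟨M, rfl⟩ := hN
    rw [pow_mul, hz', one_pow]
  have hψ := congrArg ψ (mul_left_cancel heq)
  simp only [map_mul, map_pow, hψp, hψq] at hψ
  rw [hinj hψ]

theorem finite (h : IsTetrahedralPresentation N p q z) (hN : 0 < N) : Finite G :=
  .of_surjective _ (h.surjective_pow_mul_pow_mul_pow hN)

theorem card_eq (h : IsTetrahedralPresentation N p q z) (hN : 0 < N) (hN' : 3 ∣ N) :
    Nat.card G = 8 * N := by
  rw [← Nat.card_eq_of_bijective _
    ⟨h.injective_pow_mul_pow_mul_pow hN', h.surjective_pow_mul_pow_mul_pow hN⟩]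
  simp [mul_comm]

end IsTetrahedralPresentation

end Order

section Presentation

variable {N : ℕ}

/-- The relations of the presentation
`⟨p, q, z | p² = (pq)² = q², z p z⁻¹ = q, z q z⁻¹ = pq, z^N = 1⟩`, so that `rels s` is
`tetrahedralRels (3 ^ s)`. -/
def tetrahedralRels (N : ℕ) : Set (FreeGroup Gen) :=
  {FreeGroup.of Gen.p ^ 2 * (FreeGroup.of Gen.q ^ 2)⁻¹,
   (FreeGroup.of Gen.p * FreeGroup.of Gen.q) ^ 2 * (FreeGroup.of Gen.q ^ 2)⁻¹,
   FreeGroup.of Gen.z * FreeGroup.of Gen.p * (FreeGroup.of Gen.z)⁻¹ * (FreeGroup.of Gen.q)⁻¹,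
   FreeGroup.of Gen.z * FreeGroup.of Gen.q * (FreeGroup.of Gen.z)⁻¹ *
     (FreeGroup.of Gen.p * FreeGroup.of Gen.q)⁻¹,
   FreeGroup.of Gen.z ^ N}

theorem forall_lift_tetrahedralRels_eq_one_iff {H : Type} [Group H] (f : Gen → H) :
    (∀ r ∈ tetrahedralRels N, FreeGroup.lift f r = 1) ↔
      TetrahedralRel (f .p) (f .q) (f .z) ∧ f .z ^ N = 1 := by
  have hrel : (∀ r ∈ tetrahedralRels N, FreeGroup.lift f r = 1) ↔
      f .p ^ 2 = f .q ^ 2 ∧ (f .p * f .q) ^ 2 = f .q ^ 2 ∧ f .z * f .p * (f .z)⁻¹ = f .q ∧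
        f .z * f .q * (f .z)⁻¹ = f .p * f .q ∧ f .z ^ N = 1 := by
    simp only [tetrahedralRels, Set.forall_mem_insert, Set.mem_singleton_iff, forall_eq, map_mul,
      map_pow, map_inv, FreeGroup.lift_apply_of, mul_inv_eq_one]
  rw [hrel]
  exact ⟨fun ⟨h₁, h₂, h₃, h₄, h₅⟩ ↦ ⟨⟨h₁, h₂, h₃, h₄⟩, h₅⟩,
    fun ⟨⟨h₁, h₂, h₃, h₄⟩, h₅⟩ ↦ ⟨h₁, h₂, h₃, h₄, h₅⟩⟩

theorem isTetrahedralPresentation_presentedGroup (N : ℕ) :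
    IsTetrahedralPresentation N (PresentedGroup.of .p : PresentedGroup (tetrahedralRels N))
      (.of .q) (.of .z) := by
  have hmk : FreeGroup.lift PresentedGroup.of = PresentedGroup.mk (tetrahedralRels N) :=
    FreeGroup.ext_hom _ _ fun _ ↦ FreeGroup.lift_apply_of
  obtain ⟨hrel, hpow⟩ := (forall_lift_tetrahedralRels_eq_one_iff PresentedGroup.of).1
    fun r hr ↦ (DFunLike.congr_fun hmk r).trans (PresentedGroup.one_of_mem hr)
  refine ⟨hrel, hpow, ?_, fun p' q' z' hrel' hpow' ↦ ?_⟩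
  · rw [eq_top_iff, ← PresentedGroup.closure_range_of, Subgroup.closure_le]
    rintro _ ⟨x, rfl⟩
    exact Subgroup.subset_closure (by cases x <;> simp)
  · have h := (forall_lift_tetrahedralRels_eq_one_iff (Gen.rec p' q' z' : Gen → _)).2
      ⟨hrel', hpow'⟩
    exact ⟨PresentedGroup.toGroup h, PresentedGroup.toGroup.of h, PresentedGroup.toGroup.of h,
      PresentedGroup.toGroup.of h⟩

end Presentation

section Abelianization

variable (G : Type) [Group G]

theorem nonempty_groupHomologyTriv_one_addEquiv_abelianization :
    Nonempty (groupHomologyTriv G ℤ 1 ≃+ Additive (Abelianization G)) := by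
  obtain ⟨e⟩ := nonempty_groupHomologyTriv_addEquiv_groupHomology ℤ G 1
  exact ⟨(e.trans (groupHomology.H1AddEquivOfIsTrivial (Rep.trivial ℤ G ℤ))).trans
    (TensorProduct.rid ℤ (Additive (Abelianization G))).toAddEquiv⟩

variable {G}

theorem isCyclic_abelianization_of_groupHomologyTriv_one {N : ℕ}
    (h : Nonempty (groupHomologyTriv G ℤ 1 ≃+ ZMod N)) :
    IsCyclic (Abelianization G) ∧ Nat.card (Abelianization G) = N := by
  obtain ⟨e⟩ := h
  obtain ⟨f⟩ := nonempty_groupHomologyTriv_one_addEquiv_abelianization G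
  let E : Abelianization G ≃* Multiplicative (ZMod N) :=
    (f.symm.trans e).toMultiplicativeRight
  exact ⟨isCyclic_of_surjective E.symm E.symm.surjective,
    (Nat.card_congr E.toEquiv).trans (Nat.card_zmod N)⟩

end Abelianization

theorem stmt15_general {N : ℕ} (hN : Odd N) (hN' : 9 ∣ N) :
    Nonempty (groupHomologyTriv (PresentedGroup (tetrahedralRels N)) ℤ 0 ≃+ ℤ) ∧
    (∀ n : ℕ, 0 < n → n % 4 = 0 →
      Subsingleton (groupHomologyTriv (PresentedGroup (tetrahedralRels N)) ℤ n)) ∧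
    (∀ n : ℕ, n % 4 = 1 →
      Nonempty (groupHomologyTriv (PresentedGroup (tetrahedralRels N)) ℤ n ≃+ ZMod N)) ∧
    (∀ n : ℕ, n % 4 = 2 →
      Subsingleton (groupHomologyTriv (PresentedGroup (tetrahedralRels N)) ℤ n)) ∧
    (∀ n : ℕ, n % 4 = 3 →
      Nonempty (groupHomologyTriv (PresentedGroup (tetrahedralRels N)) ℤ n ≃+ ZMod (8 * N))) ∧
    IsCyclic (Abelianization (PresentedGroup (tetrahedralRels N))) ∧
    Nat.card (Abelianization (PresentedGroup (tetrahedralRels N))) = N := by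
  have hpres := isTetrahedralPresentation_presentedGroup N
  have := hpres.finite hN.pos
  have hcard := hpres.card_eq hN.pos ((by decide : 3 ∣ 9).trans hN')
  obtain ⟨K, rfl⟩ := hN'
  have hK : Odd K := (Nat.odd_mul.1 hN).2
  obtain ⟨j, hj⟩ : Odd (3 * K) := Odd.mul (by decide) hK
  have hbal := hpres.isBalancedPresentation hj
  have hone {n : ℕ} (hn : n % 4 = 1) := hbal.nonempty_groupHomologyTriv_addEquiv_zmod_nine_mul hK hn
  refine ⟨hbal.nonempty_groupHomologyTriv_zero_addEquiv hK,
    fun n hn hn' ↦ hbal.subsingleton_groupHomologyTriv hK hn (by grind), fun n ↦ hone,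
    fun n hn ↦ hbal.subsingleton_groupHomologyTriv hK (by omega) (by grind), fun n hn ↦ ?_,
    isCyclic_abelianization_of_groupHomologyTriv_one (hone rfl)⟩
  rw [← hcard]
  exact hbal.nonempty_groupHomologyTriv_addEquiv_zmod_card hK hn

/-- the integral homology of the generalized binary tetrahedral group
`G = P'_{8·3^s}` is `ℤ` in degree `0`, `ℤ/3^s` in degrees `≡ 1 (mod 4)`, `ℤ/8·3^s` in degrees
`≡ 3 (mod 4)` and `0` in positive even degrees; in particular the abelianization of `G` is
cyclic of order `3^s`. -/
theorem stmt15 (s : ℕ) (hs : 2 ≤ s) :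
    Nonempty (groupHomologyTriv (PresentedGroup (rels s)) ℤ 0 ≃+ ℤ) ∧
    (∀ n : ℕ, 0 < n → n % 4 = 0 →
      Subsingleton (groupHomologyTriv (PresentedGroup (rels s)) ℤ n)) ∧
    (∀ n : ℕ, n % 4 = 1 →
      Nonempty (groupHomologyTriv (PresentedGroup (rels s)) ℤ n ≃+ ZMod (3 ^ s))) ∧
    (∀ n : ℕ, n % 4 = 2 →
      Subsingleton (groupHomologyTriv (PresentedGroup (rels s)) ℤ n)) ∧
    (∀ n : ℕ, n % 4 = 3 →
      Nonempty (groupHomologyTriv (PresentedGroup (rels s)) ℤ n ≃+ ZMod (8 * 3 ^ s))) ∧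
    IsCyclic (Abelianization (PresentedGroup (rels s))) ∧
    Nat.card (Abelianization (PresentedGroup (rels s))) = 3 ^ s :=
  stmt15_general (Odd.pow (by decide)) (pow_dvd_pow 3 hs)
end

section
/- Let s ≥ 2 and let G = P'_{8·3^s} be the generalized binary tetrahedral group. For every n ≥ 0, the group homology of G with coefficients in the trivial G-module ℤ/3ℤ satisfies H_n(G; ℤ/3ℤ) ≅ ℤ/3ℤ. -/
/-!
The subgroup `N = ⟨p, q⟩` of `G` is normal, it is a quotient of the quaternion group of order `8`,
and `G / N` is cyclic of order `3 ^ s`. Over a ring in which the order of `N` is invertible,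
averaging over `N` shows that coinduction along `G → G / N` preserves epimorphisms, so its left
adjoint, restriction, preserves projectives. Hence a projective resolution over `G / N` is also one
over `G`, with the same coinvariants, and `Hₙ(G; M) ≅ Hₙ(G / N; M)`. In the complex obtained from
the periodic resolution of a cyclic group, all differentials vanish when the coefficients are
trivial and killed by the order of the group.
-/

section Homology

open CategoryTheory Limits Rep Representation

universe u

lemma exists_mem_invariants_apply_eq {k G V W : Type*} [CommRing k] [Group G] [Finite G]
    [AddCommGroup V] [Module k V] [AddCommGroup W] [Module k W]
    {ρ : Representation k G V} {σ : Representation k G W} (hG : IsUnit (Nat.card G : k))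
    (f : ρ.IntertwiningMap σ) (hf : Function.Surjective f) {w : W} (hw : w ∈ σ.invariants) :
    ∃ v ∈ ρ.invariants, f v = w := by
  have := Fintype.ofFinite G
  rw [Nat.card_eq_fintype_card] at hG
  have := hG.invertible
  obtain ⟨v, rfl⟩ := hf w
  have hfv : f (ρ.averageMap v) = σ.averageMap (f v) := by
    simp [GroupAlgebra.average, f.isIntertwining]
  exact ⟨ρ.averageMap v, ρ.averageMap_invariant v, hfv.trans (σ.averageMap_id _ hw)⟩

lemma exists_mem_coindV_apply_eq {k G H V : Type*} [CommRing k] [Group G] [Group H]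
    [AddCommGroup V] [Module k V] {φ : G →* H} {ρ : Representation k G V}
    (hφ : Function.Surjective φ) {v : V} (hv : v ∈ invariants (ρ.comp φ.ker.subtype)) :
    ∃ f ∈ coindV φ ρ, ∀ g, f (φ g) = ρ g v := by
  let f (h : H) : V := ρ (Function.surjInv hφ h) v
  have hf (g : G) : f (φ g) = ρ g v := by
    have hmem : g⁻¹ * Function.surjInv hφ (φ g) ∈ φ.ker := by
      simp [MonoidHom.mem_ker, Function.surjInv_eq hφ]
    calc f (φ g) = ρ (g * (g⁻¹ * Function.surjInv hφ (φ g))) v := by rw [mul_inv_cancel_left]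
    _ = ρ g (ρ (g⁻¹ * Function.surjInv hφ (φ g)) v) := by rw [map_mul, Module.End.mul_apply]
    _ = ρ g v := congrArg (ρ g) (hv ⟨_, hmem⟩)
  refine ⟨f, fun g h => ?_, hf⟩
  obtain ⟨g', rfl⟩ := hφ h
  rw [← map_mul, hf, hf, map_mul, Module.End.mul_apply]

lemma coinvariantsKer_comp_of_surjective {k G H V : Type*} [CommRing k] [Group G] [Group H]
    [AddCommGroup V] [Module k V] {φ : G →* H} (ρ : Representation k H V)
    (hφ : Function.Surjective φ) :
    Coinvariants.ker (ρ.comp φ) = Coinvariants.ker ρ :=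
  congrArg (Submodule.span k) <|
    (hφ.prodMap Function.surjective_id).range_comp fun x : H × V => ρ x.1 x.2 - x.2

section Surjective

variable {k G H : Type u} [CommRing k] [Group G] [Group H] {φ : G →* H}

theorem coindFunctor_preservesEpimorphisms [Finite φ.ker] (hφ : Function.Surjective φ)
    (hker : IsUnit (Nat.card φ.ker : k)) :
    (coindFunctor.{u} k φ).PreservesEpimorphisms where
  preserves {X Y} f hf := (Rep.epi_iff_surjective _).2 fun y => by
    -- As `φ` is surjective, `y` is determined by its value at `1`, which the kernel fixes.
    have hy : y.1 1 ∈ (res φ.ker.subtype Y).ρ.invariants := fun n => by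
      simpa [show φ n = 1 from n.2] using (y.2 n 1).symm
    obtain ⟨x, hx, hxy⟩ := exists_mem_invariants_apply_eq hker
      (Rep.Hom.hom ((resFunctor φ.ker.subtype).map f)) ((Rep.epi_iff_surjective f).1 hf) hy
    obtain ⟨x', hx', hx'x⟩ := exists_mem_coindV_apply_eq hφ hx
    refine ⟨⟨x', hx'⟩, Subtype.ext <| funext fun h => ?_⟩
    obtain ⟨g, rfl⟩ := hφ h
    calc f.hom (x' (φ g)) = f.hom (X.ρ g x) := by rw [hx'x]
    _ = Y.ρ g (f.hom x) := hom_comm_apply f g x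
    _ = Y.ρ g (y.1 1) := congrArg _ hxy
    _ = y.1 (φ g) := by rw [← y.2 g 1, mul_one]

theorem resFunctor_preservesProjectiveObjects [Finite φ.ker] (hφ : Function.Surjective φ)
    (hker : IsUnit (Nat.card φ.ker : k)) :
    (resFunctor.{u} (k := k) φ).PreservesProjectiveObjects :=
  have := coindFunctor_preservesEpimorphisms hφ hker
  (resFunctor φ).preservesProjectiveObjects_of_adjunction_of_preservesEpimorphisms
    (resCoindAdjunction k φ)

/-- For surjective `φ : G →* H`, the coinvariants of `A ⊗ B` over `G` and over `H` agree, naturally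
in the representation `B` of `H`. -/
noncomputable def resCompCoinvariantsTensorIso (hφ : Function.Surjective φ) (A : Rep.{u} k H) :
    resFunctor φ ⋙ (coinvariantsTensor k G).obj (res φ A) ≅ (coinvariantsTensor k H).obj A :=
  NatIso.ofComponents
    (fun B => (Submodule.quotEquivOfEq _ _
      (coinvariantsKer_comp_of_surjective (A.ρ.tprod B.ρ) hφ)).toModuleIso)
    fun _ => coinvariantsTensor_hom_ext rfl

/-- Invariance of group homology under a surjection whose kernel has invertible order. -/
noncomputable def groupHomologyResIso [DecidableEq G] [DecidableEq H] [Finite φ.ker]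
    (hφ : Function.Surjective φ) (hker : IsUnit (Nat.card φ.ker : k)) (A : Rep.{u} k H) (n : ℕ) :
    groupHomology (res φ A) n ≅ groupHomology A n :=
  have := resFunctor_preservesProjectiveObjects hφ hker
  let P := barResolution k H
  groupHomologyIso (res φ A) n ((resFunctor φ).mapProjectiveResolution P) ≪≫
    HomologicalComplex.homologyMapIso
      ((NatIso.mapHomologicalComplex (resCompCoinvariantsTensorIso hφ A) _).app P.complex) n ≪≫
    (groupHomologyIso A n P).symm

end Surjective

/-- The homology of a complex with zero differentials is the complex itself. -/
noncomputable def homologyIsoXOfDEqZero {C ι : Type*} [Category* C] [HasZeroMorphisms C]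
    {c : ComplexShape ι} (K : HomologicalComplex C c)
    (h : ∀ i j, K.d i j = 0) (n : ι) [K.HasHomology n] : K.homology n ≅ K.X n :=
  (ShortComplex.LeftHomologyData.ofZeros (K.sc n) (h _ _) (h _ _)).homologyIso

theorem nonempty_groupHomology_trivial_iso_of_isCyclic {k C M : Type u} [CommRing k] [CommGroup C]
    [Finite C] [IsCyclic C] [AddCommGroup M] [Module k M]
    (hM : ∀ m : M, Nat.card C • m = 0) (n : ℕ) :
    Nonempty (groupHomology (Rep.trivial k C M) n ≅ ModuleCat.of k M) := by
  classical
  have := Fintype.ofFinite C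
  obtain ⟨g, hg⟩ := IsCyclic.exists_generator (α := C)
  have hnorm : ModuleCat.ofHom (Rep.trivial k C M).norm.hom.toLinearMap = 0 := by
    ext m
    simpa [Rep.norm, Representation.norm] using hM m
  have hsub : ModuleCat.ofHom
      (applyAsHom (Rep.trivial k C M) g - 𝟙 (Rep.trivial k C M)).hom.toLinearMap = 0 := by
    ext m
    simp [applyAsHom, sub_hom]
  have hd (i j) : (FiniteCyclicGroup.moduleCatChainComplex (Rep.trivial k C M) g).d i j = 0 := by
    rw [HomologicalComplex.alternatingConst_d, hnorm, hsub, ite_self]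
    exact ite_self _
  exact ⟨groupHomologyIso _ n _ ≪≫ HomologicalComplex.homologyMapIso
    (FiniteCyclicGroup.coinvariantsTensorResolutionIso (Rep.trivial k C M) g hg) n ≪≫
    homologyIsoXOfDEqZero _ hd n⟩

/-- The homology of a short complex of modules as cycles modulo boundaries, both computed in the
underlying additive groups. -/
noncomputable def homologyAddEquiv {k : Type*} [Ring k] (S : ShortComplex (ModuleCat k))
    {f : S.X₁ →+ S.X₂} {g : S.X₂ →+ S.X₃} (hf : f = S.f.hom.toAddMonoidHom)
    (hg : g = S.g.hom.toAddMonoidHom) : g.ker ⧸ f.range.addSubgroupOf g.ker ≃+ S.homology :=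
  have hker : g.ker = S.g.hom.ker.toAddSubgroup := hg ▸ rfl
  have hrange : (f.range.addSubgroupOf g.ker).map (AddEquiv.addSubgroupCongr hker) =
      S.moduleCatToCycles.range.toAddSubgroup := by
    subst hf hg
    refine (AddSubgroup.map_id _).trans (AddSubgroup.ext fun x => ?_)
    exact exists_congr fun y => Subtype.ext_iff (a1 := S.moduleCatToCycles y).symm
  (QuotientAddGroup.congr _ _ (AddEquiv.addSubgroupCongr hker) hrange).trans
    S.moduleCatHomologyIso.toLinearEquiv.symm.toAddEquiv

section Comparison

variable {k G M : Type} [CommRing k] [Group G] [AddCommGroup M] [Module k M]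

lemma trivialChainsD_eq_inhomogeneousChains_d (n : ℕ) :
    trivialChainsD G M n =
      ((groupHomology.inhomogeneousChains (Rep.trivial k G M)).d (n + 1) n).hom.toAddMonoidHom := by
  rw [groupHomology.inhomogeneousChains.d_def]
  ext g m : 2
  refine Eq.trans ?_
    (groupHomology.inhomogeneousChains.d_single (A := Rep.trivial k G M) n g m).symm
  simp [trivialChainsD, Finsupp.mapDomain_single, Function.comp_def, ← Int.cast_smul_eq_zsmul k]

lemma trivialChainsDFrom_eq_inhomogeneousChains_d (n : ℕ) :
    trivialChainsDFrom G M n =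
      ((groupHomology.inhomogeneousChains (Rep.trivial k G M)).d n (n - 1)).hom.toAddMonoidHom := by
  cases n with
  | zero =>
    rw [HomologicalComplex.shape _ _ _ (by simp)]
    rfl
  | succ n => exact trivialChainsD_eq_inhomogeneousChains_d n

variable (k G M) in
/-- The homology of the additive chain complex `trivialChainsD` is Mathlib's group homology, for
every ring `k` acting on the coefficients. -/
noncomputable def groupHomologyTrivAddEquiv (n : ℕ) :
    groupHomologyTriv G M n ≃+ groupHomology (Rep.trivial k G M) n :=
  let K := groupHomology.inhomogeneousChains (Rep.trivial k G M)
  have hnext : (ComplexShape.down ℕ).next n = n - 1 := by cases n <;> simp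
  (homologyAddEquiv (K.sc' (n + 1) n (n - 1)) (trivialChainsD_eq_inhomogeneousChains_d n)
    (trivialChainsDFrom_eq_inhomogeneousChains_d n)).trans
    (ShortComplex.homologyMapIso
      (K.isoSc' (n + 1) n (n - 1) (by simp) hnext)).symm.toLinearEquiv.toAddEquiv

variable (k) in
theorem nonempty_groupHomologyTriv_addEquiv {C : Type} [CommGroup C] [Finite C] [IsCyclic C]
    {φ : G →* C} [Finite φ.ker] (hφ : Function.Surjective φ) (hker : IsUnit (Nat.card φ.ker : k))
    (hM : ∀ m : M, Nat.card C • m = 0) (n : ℕ) : Nonempty (groupHomologyTriv G M n ≃+ M) := by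
  classical
  obtain ⟨e⟩ := nonempty_groupHomology_trivial_iso_of_isCyclic (k := k) hM n
  exact ⟨(groupHomologyTrivAddEquiv k G M n).trans
    (groupHomologyResIso hφ hker (Rep.trivial k C M) n ≪≫ e).toLinearEquiv.toAddEquiv⟩

end Comparison

end Homology

section Group

variable {G : Type*} [Group G]

/-- The homomorphism `i ↦ p ^ i` from `ℤ/m` to a group, for an element `p` with `p ^ m = 1`. -/
def zmodPowersHom {m : ℕ} {p : G} (hp : p ^ m = 1) : ZMod m →+ Additive G :=
  ZMod.lift m ⟨zmultiplesHom _ (.ofMul p), by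
    rw [zmultiplesHom_apply, natCast_zsmul, ← ofMul_pow, hp, ofMul_one]⟩

lemma toMul_zmodPowersHom_intCast {m : ℕ} {p : G} (hp : p ^ m = 1) (i : ℤ) :
    (zmodPowersHom hp i).toMul = p ^ i := by
  simp [zmodPowersHom, ZMod.lift_coe]

lemma toMul_zmodPowersHom_mul {m : ℕ} {p q : G} (hp : p ^ m = 1) (hqp : q * p * q⁻¹ = p⁻¹)
    (i : ZMod m) : (zmodPowersHom hp i).toMul * q = q * (zmodPowersHom hp (-i)).toMul := by
  obtain ⟨i, rfl⟩ := ZMod.intCast_surjective i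
  have h : SemiconjBy q p⁻¹ p := by
    simpa using SemiconjBy.inv_right_iff.2 (mul_inv_eq_iff_eq_mul.1 hqp : SemiconjBy q p p⁻¹)
  rw [← Int.cast_neg, toMul_zmodPowersHom_intCast, toMul_zmodPowersHom_intCast, zpow_neg,
    ← inv_zpow]
  exact (h.zpow_right i).symm

/-- The universal property of the generalized quaternion group
`⟨p, q | p ^ (2 * n) = 1, q ^ 2 = p ^ n, q * p * q⁻¹ = p⁻¹⟩`. -/
def quaternionGroupLift {n : ℕ} {p q : G} (hp : p ^ (2 * n) = 1) (hq : q ^ 2 = p ^ n)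
    (hqp : q * p * q⁻¹ = p⁻¹) : QuaternionGroup n →* G :=
  let pow := zmodPowersHom hp
  have pow_natCast : (pow n).toMul = q ^ 2 := by
    rw [← Int.cast_natCast, toMul_zmodPowersHom_intCast, zpow_natCast, hq]
  have pow_mul (i) : (pow i).toMul * q = q * (pow (-i)).toMul := toMul_zmodPowersHom_mul hp hqp i
  { toFun
      | .a i => (pow i).toMul
      | .xa i => q * (pow i).toMul
    map_one' := congrArg Additive.toMul (map_zero pow)
    map_mul' := by
      rintro (i | i) (j | j)
      · simp
      · simp [← mul_assoc, pow_mul, sub_eq_neg_add]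
      · simp [mul_assoc]
      · calc (pow (n + j - i)).toMul = (pow n).toMul * ((pow (-i)).toMul * (pow j).toMul) := by
              simp [sub_eq_add_neg, add_assoc, add_comm j]
          _ = q * (q * (pow (-i)).toMul) * (pow j).toMul := by
              rw [pow_natCast, sq]; group
          _ = q * (pow i).toMul * (q * (pow j).toMul) := by
              rw [← pow_mul]; group }

lemma quaternionGroupLift_a_one {n : ℕ} {p q : G} (hp : p ^ (2 * n) = 1) (hq : q ^ 2 = p ^ n)
    (hqp : q * p * q⁻¹ = p⁻¹) : quaternionGroupLift hp hq hqp (.a 1) = p :=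
  calc (zmodPowersHom hp 1).toMul = p := by simpa using toMul_zmodPowersHom_intCast hp 1

lemma quaternionGroupLift_xa_zero {n : ℕ} {p q : G} (hp : p ^ (2 * n) = 1) (hq : q ^ 2 = p ^ n)
    (hqp : q * p * q⁻¹ = p⁻¹) : quaternionGroupLift hp hq hqp (.xa 0) = q :=
  calc q * (zmodPowersHom hp 0).toMul = q := by rw [map_zero, toMul_zero, mul_one]

theorem card_closure_pair_dvd {n : ℕ} [NeZero n] {p q : G} (hp : p ^ (2 * n) = 1)
    (hq : q ^ 2 = p ^ n) (hqp : q * p * q⁻¹ = p⁻¹) :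
    Nat.card (Subgroup.closure {p, q}) ∣ 4 * n := by
  let f := quaternionGroupLift hp hq hqp
  have hle : Subgroup.closure {p, q} ≤ f.range := by
    rw [Subgroup.closure_le, Set.pair_subset_iff]
    exact ⟨⟨.a 1, quaternionGroupLift_a_one ..⟩, ⟨.xa 0, quaternionGroupLift_xa_zero ..⟩⟩
  calc Nat.card (Subgroup.closure {p, q}) ∣ Nat.card f.range := Subgroup.card_dvd_of_le hle
  _ ∣ Nat.card (QuaternionGroup n) := Subgroup.card_range_dvd f
  _ = 4 * n := by rw [Nat.card_eq_fintype_card, QuaternionGroup.card]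

lemma pow_four_eq_one_of_conj_eq_inv {p q : G} (hpq : p ^ 2 = q ^ 2) (h : q * p * q⁻¹ = p⁻¹) :
    p ^ 4 = 1 := by
  have hinv : p ^ 2 = (p ^ 2)⁻¹ := by
    calc p ^ 2 = q * p ^ 2 * q⁻¹ := by rw [hpq]; group
    _ = (q * p * q⁻¹) ^ 2 := by rw [conj_pow]
    _ = (p ^ 2)⁻¹ := by rw [h, inv_pow]
  calc p ^ 4 = p ^ 2 * p ^ 2 := by rw [← pow_add]
  _ = 1 := mul_eq_one_iff_eq_inv.2 hinv

lemma mem_normalizer_closure {S : Set G} [Finite (Subgroup.closure S)] {g : G}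
    (h : ∀ x ∈ S, g * x * g⁻¹ ∈ Subgroup.closure S) :
    g ∈ Subgroup.normalizer (Subgroup.closure S : Set G) := by
  have hmap : Subgroup.closure S ≤ (Subgroup.closure S).comap (MulAut.conj g).toMonoidHom :=
    (Subgroup.closure_le _).2 h
  exact Subgroup.mem_normalizer_fintype fun x hx => hmap hx

lemma ker_le_of_sup_zpowers_eq_top {C : Type*} [Group C] {N : Subgroup G} [N.Normal] {z : G}
    (hNz : N ⊔ Subgroup.zpowers z = ⊤) {φ : G →* C} (hN : N ≤ φ.ker)
    (hz : orderOf z ∣ orderOf (φ z)) : φ.ker ≤ N := by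
  intro g hg
  obtain ⟨n, hn, _, ⟨i, rfl⟩, rfl⟩ := Subgroup.mem_sup_of_normal_left.1 (hNz ▸ Subgroup.mem_top g)
  have hφi : φ z ^ i = 1 := by simpa [MonoidHom.mem_ker.1 (hN hn)] using hg
  have hi : (orderOf z : ℤ) ∣ i :=
    (Int.natCast_dvd_natCast.2 hz).trans (orderOf_dvd_iff_zpow_eq_one.2 hφi)
  simpa [orderOf_dvd_iff_zpow_eq_one.1 hi] using hn

end Group

/-- The generalized binary tetrahedral group `P'_{8·3^s}`. -/
abbrev GenBinaryTetrahedral (s : ℕ) : Type := PresentedGroup (rels s)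

namespace GenBinaryTetrahedral

variable (s : ℕ)

/-- The generator `p`. -/
def p : GenBinaryTetrahedral s := PresentedGroup.of Gen.p

/-- The generator `q`. -/
def q : GenBinaryTetrahedral s := PresentedGroup.of Gen.q

/-- The generator `z`. -/
def z : GenBinaryTetrahedral s := PresentedGroup.of Gen.z

lemma p_sq : p s ^ 2 = q s ^ 2 :=
  mul_inv_eq_one.1 <| PresentedGroup.one_of_mem (rels := rels s) (by simp [rels])

lemma p_mul_q_sq : (p s * q s) ^ 2 = q s ^ 2 :=
  mul_inv_eq_one.1 <| PresentedGroup.one_of_mem (rels := rels s) (by simp [rels])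

lemma z_conj_p : z s * p s * (z s)⁻¹ = q s :=
  mul_inv_eq_one.1 <| PresentedGroup.one_of_mem (rels := rels s) (by simp [rels])

lemma z_conj_q : z s * q s * (z s)⁻¹ = p s * q s :=
  mul_inv_eq_one.1 <| PresentedGroup.one_of_mem (rels := rels s) (by simp [rels])

lemma z_pow : z s ^ 3 ^ s = 1 :=
  PresentedGroup.one_of_mem (rels := rels s) (by simp [rels])

lemma q_conj_p : q s * p s * (q s)⁻¹ = (p s)⁻¹ := by
  have hpqp : p s * q s * p s = q s := by
    have h := p_mul_q_sq s
    rw [sq, sq, ← mul_assoc] at h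
    exact mul_right_cancel h
  rw [mul_inv_eq_iff_eq_mul, eq_inv_mul_iff_mul_eq, ← mul_assoc, hpqp]

lemma eq_top_of_mem {K : Subgroup (GenBinaryTetrahedral s)} (hp : p s ∈ K) (hq : q s ∈ K)
    (hz : z s ∈ K) : K = ⊤ := by
  rw [eq_top_iff, ← PresentedGroup.closure_range_of, Subgroup.closure_le]
  rintro _ ⟨_ | _ | _, rfl⟩ <;> assumption

/-- The normal subgroup `⟨p, q⟩`, a quotient of the quaternion group of order `8`. -/
abbrev quaternion : Subgroup (GenBinaryTetrahedral s) := Subgroup.closure {p s, q s}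

lemma p_mem_quaternion : p s ∈ quaternion s := Subgroup.subset_closure (.inl rfl)

lemma q_mem_quaternion : q s ∈ quaternion s := Subgroup.subset_closure (.inr rfl)

lemma card_quaternion_dvd : Nat.card (quaternion s) ∣ 8 :=
  card_closure_pair_dvd (n := 2) (pow_four_eq_one_of_conj_eq_inv (p_sq s) (q_conj_p s))
    (p_sq s).symm (q_conj_p s)

instance : Finite (quaternion s) :=
  Nat.finite_of_card_ne_zero (ne_zero_of_dvd_ne_zero (by simp) (card_quaternion_dvd s))

lemma z_mem_normalizer_quaternion :
    z s ∈ Subgroup.normalizer (quaternion s : Set (GenBinaryTetrahedral s)) := by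
  refine mem_normalizer_closure ?_
  rintro _ (rfl | rfl)
  · rw [z_conj_p]
    exact q_mem_quaternion s
  · rw [z_conj_q]
    exact mul_mem (p_mem_quaternion s) (q_mem_quaternion s)

instance : (quaternion s).Normal :=
  Subgroup.normalizer_eq_top_iff.1 <| eq_top_of_mem s
    (Subgroup.le_normalizer (p_mem_quaternion s)) (Subgroup.le_normalizer (q_mem_quaternion s))
    (z_mem_normalizer_quaternion s)

lemma quaternion_sup_zpowers : quaternion s ⊔ Subgroup.zpowers (z s) = ⊤ :=
  eq_top_of_mem s (Subgroup.mem_sup_left (p_mem_quaternion s))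
    (Subgroup.mem_sup_left (q_mem_quaternion s))
    (Subgroup.mem_sup_right (Subgroup.mem_zpowers _))

/-- The projection onto the cyclic group of order `3 ^ s` with kernel `⟨p, q⟩`. -/
def toCyclic : GenBinaryTetrahedral s →* Multiplicative (ZMod (3 ^ s)) :=
  PresentedGroup.toGroup (f := fun | .p => 1 | .q => 1 | .z => .ofAdd 1) <| by
    rintro r (rfl | rfl | rfl | rfl | rfl) <;> simp [← ofAdd_nsmul]

lemma toCyclic_p : toCyclic s (p s) = 1 := PresentedGroup.toGroup.of _

lemma toCyclic_q : toCyclic s (q s) = 1 := PresentedGroup.toGroup.of _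

lemma toCyclic_z : toCyclic s (z s) = .ofAdd 1 := PresentedGroup.toGroup.of _

lemma toCyclic_surjective : Function.Surjective (toCyclic s) := by
  intro c
  obtain ⟨i, hi⟩ := ZMod.intCast_surjective c.toAdd
  refine ⟨z s ^ i, ?_⟩
  rw [map_zpow, toCyclic_z, ← ofAdd_zsmul, zsmul_one, hi, ofAdd_toAdd]

lemma ker_toCyclic_le : (toCyclic s).ker ≤ quaternion s := by
  refine ker_le_of_sup_zpowers_eq_top (quaternion_sup_zpowers s) ?_ ?_
  · rw [Subgroup.closure_le, Set.pair_subset_iff]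
    exact ⟨toCyclic_p s, toCyclic_q s⟩
  · rw [toCyclic_z, orderOf_ofAdd_eq_addOrderOf, ZMod.addOrderOf_one]
    exact orderOf_dvd_of_pow_eq_one (z_pow s)

lemma card_ker_toCyclic_dvd : Nat.card (toCyclic s).ker ∣ 8 :=
  (Subgroup.card_dvd_of_le (ker_toCyclic_le s)).trans (card_quaternion_dvd s)

instance : Finite (toCyclic s).ker :=
  Nat.finite_of_card_ne_zero (ne_zero_of_dvd_ne_zero (by simp) (card_ker_toCyclic_dvd s))

lemma isUnit_card_ker_toCyclic : IsUnit (Nat.card (toCyclic s).ker : ZMod (3 ^ s)) := by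
  rw [ZMod.isUnit_iff_coprime]
  exact (Nat.Coprime.pow_right s (by norm_num)).coprime_dvd_left (card_ker_toCyclic_dvd s)

end GenBinaryTetrahedral

open GenBinaryTetrahedral in
theorem stmt16_general (s : ℕ) (M : Type) [AddCommGroup M] (hM : ∀ m : M, 3 ^ s • m = 0) (n : ℕ) :
    Nonempty (groupHomologyTriv (PresentedGroup (rels s)) M n ≃+ M) := by
  let := AddCommGroup.zmodModule hM
  have hcard : Nat.card (Multiplicative (ZMod (3 ^ s))) = 3 ^ s := Nat.card_zmod _
  exact nonempty_groupHomologyTriv_addEquiv (ZMod (3 ^ s)) (toCyclic_surjective s)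
    (isUnit_card_ker_toCyclic s) (hcard.symm ▸ hM) n

/-- the homology of the generalized binary tetrahedral group `G = P'_{8·3^s}`
with trivial coefficients `ℤ/3ℤ` is `ℤ/3ℤ` in every degree. -/
theorem stmt16 (s : ℕ) (hs : 2 ≤ s) :
    ∀ n : ℕ, Nonempty (groupHomologyTriv (PresentedGroup (rels s)) (ZMod 3) n ≃+ ZMod 3) :=
  stmt16_general s (ZMod 3) fun m => by
    simp [show (3 : ZMod 3) = 0 from rfl, show s ≠ 0 by lia]
end
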